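/- Let A be a C*-algebra. The following statements are equivalent: (i) the Lebesgue decomposition of positive functionals over A is unique; (ii) every irreducible representation of A is finite dimensional (i.e. its Hilbert space is finite dimensional). -/

import Mathlib

open scoped ComplexOrder

section CStarDefs

variable {A : Type} [NonUnitalCStarAlgebra A]

/-- A linear functional on a C⋆-algebra is positive if `0 ≤ f (a⋆ * a)` for every `a`. -/
def IsPosFnC (f : A →ₗ[ℂ] ℂ) : Prop := ∀ a : A, 0 ≤ f (star a * a)

/-- Order on positive functionals: `f ≤ g` iff `g - f` is positive. -/
def FnLEC (f g : A →ₗ[ℂ] ℂ) : Prop := IsPosFnC (g - f)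

/-- Absolute continuity `f ≪ g` for positive functionals on a C⋆-algebra: `f` is the
pointwise limit of an increasing sequence of positive functionals `fₙ` with `fₙ ≤ αₙ • g`
for some positive reals `αₙ`. -/
def AbsContC (f g : A →ₗ[ℂ] ℂ) : Prop :=
  ∃ (fn : ℕ → (A →ₗ[ℂ] ℂ)) (α : ℕ → ℝ),
    (∀ n, IsPosFnC (fn n)) ∧
    (∀ n, 0 < α n) ∧
    (∀ n, FnLEC (fn n) (fn (n + 1))) ∧
    (∀ n, FnLEC (fn n) (((α n : ℂ)) • g)) ∧
    (∀ a : A, Filter.Tendsto (fun n => fn n a) Filter.atTop (nhds (f a)))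

/-- Singularity `f ⊥ g`: the only positive functional dominated by both `f` and `g`
is `0`. -/
def SingularC (f g : A →ₗ[ℂ] ℂ) : Prop :=
  ∀ p : A →ₗ[ℂ] ℂ, IsPosFnC p → FnLEC p f → FnLEC p g → p = 0

/-- `f = fr + fs` is a Lebesgue decomposition of `f` with respect to `g`. -/
def IsLebDecompC (f g fr fs : A →ₗ[ℂ] ℂ) : Prop :=
  IsPosFnC fr ∧ IsPosFnC fs ∧ f = fr + fs ∧ AbsContC fr g ∧ SingularC fs g

/-- The Lebesgue decomposition of `f` with respect to `g` is unique. -/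
def LebDecompUniqueForC (f g : A →ₗ[ℂ] ℂ) : Prop :=
  ∀ fr fs fr' fs' : A →ₗ[ℂ] ℂ, IsLebDecompC f g fr fs → IsLebDecompC f g fr' fs' →
    fr = fr' ∧ fs = fs'

end CStarDefs

/-- The Lebesgue decomposition of positive functionals over the C⋆-algebra `A` is unique. -/
def LebDecompUniqueC (A : Type) [NonUnitalCStarAlgebra A] : Prop :=
  ∀ f g : A →ₗ[ℂ] ℂ, IsPosFnC f → IsPosFnC g → LebDecompUniqueForC f g

/-- An irreducible representation of a C⋆-algebra: a nonzero `⋆`-representation whose only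
closed invariant subspaces are `{0}` and `H`. -/
def IsIrredRepC {A : Type} [NonUnitalCStarAlgebra A]
    {H : Type} [NormedAddCommGroup H] [InnerProductSpace ℂ H] [CompleteSpace H]
    (π : A →⋆ₙₐ[ℂ] (H →L[ℂ] H)) : Prop :=
  π ≠ 0 ∧
    ∀ S : Submodule ℂ H, IsClosed (S : Set H) →
      (∀ a : A, ∀ x ∈ S, π a x ∈ S) → S = ⊥ ∨ S = ⊤

section Part1
open scoped ComplexOrder InnerProductSpace

section GNS
variable {A : Type} [NonUnitalCStarAlgebra A]

theorem IsPosFnC.exists_posLin [PartialOrder A] [StarOrderedRing A] {w : A →ₗ[ℂ] ℂ} (hw : IsPosFnC w) :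
    ∃ f : A →ₚ[ℂ] ℂ, ∀ a, f a = w a := by
  refine ⟨PositiveLinearMap.mk₀ w ?_, fun a => rfl⟩
  intro a ha
  obtain ⟨b, rfl⟩ := CStarAlgebra.nonneg_iff_eq_star_mul_self.mp ha
  exact hw b

theorem IsPosFnC.bounded {w : A →ₗ[ℂ] ℂ} (hw : IsPosFnC w) :
    ∃ C : ℝ, 0 ≤ C ∧ ∀ a, ‖w a‖ ≤ C * ‖a‖ := by
  letI := CStarAlgebra.spectralOrder A
  letI := CStarAlgebra.spectralOrderedRing A
  obtain ⟨f, hf⟩ := hw.exists_posLin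
  obtain ⟨C, hC⟩ := PositiveLinearMap.exists_norm_apply_le f
  exact ⟨C, C.2, fun a => by simpa [hf] using hC a⟩

/-- approximate unit as a filter -/
theorem exists_approx (A : Type) [NonUnitalCStarAlgebra A] : ∃ l : Filter A, l.NeBot ∧ (∀ᶠ u in l, ‖u‖ ≤ 1) ∧
    (∀ᶠ u in l, star u = u) ∧
    (∀ a, Filter.Tendsto (fun u => u * a) l (nhds a)) ∧
    (∀ a, Filter.Tendsto (fun u => a * u) l (nhds a)) := by
  letI := CStarAlgebra.spectralOrder A
  letI := CStarAlgebra.spectralOrderedRing A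
  have h := CStarAlgebra.increasingApproximateUnit A
  exact ⟨_, h.neBot, h.eventually_norm, h.eventually_star_eq, h.tendsto_mul_right, h.tendsto_mul_left⟩

theorem gns_exists {w : A →ₗ[ℂ] ℂ} (hw : IsPosFnC w) :
    ∃ (H : Type) (_ : NormedAddCommGroup H) (_ : InnerProductSpace ℂ H) (_ : CompleteSpace H)
      (π : A →⋆ₙₐ[ℂ] (H →L[ℂ] H)) (ξ : H),
      (∀ a, w a = ⟪ξ, π a ξ⟫_ℂ) ∧ DenseRange (fun a => π a ξ) ∧
      ∀ C, 0 ≤ C → (∀ a, ‖w a‖ ≤ C * ‖a‖) → ‖ξ‖ ^ 2 ≤ C := by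
  letI := CStarAlgebra.spectralOrder A
  letI := CStarAlgebra.spectralOrderedRing A
  obtain ⟨f, hf⟩ := hw.exists_posLin
  obtain ⟨C, hC0, hC⟩ := hw.bounded
  have hstar : ∀ a, w (star a) = star (w a) := fun a => by
    rw [← hf, ← hf]; exact map_star f a
  have key : ∀ C, 0 ≤ C → (∀ a, ‖w a‖ ≤ C * ‖a‖) → ∀ a, ‖w a‖ ≤ Real.sqrt C * ‖f.toPreGNS a‖ := by
    intro C hC0 hC a
    obtain ⟨l, hne, h1, h2, h3, h4⟩ := exists_approx A
    have hcont : Continuous w := 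
      (w.mkContinuous C hC).continuous
    have ht : Filter.Tendsto (fun u => ‖w (u * a)‖) l (nhds ‖w a‖) :=
      ((hcont.tendsto a).comp (h3 a)).norm
    refine le_of_tendsto ht ?_
    filter_upwards [h1, h2] with u hu1 hu2
    have : w (u * a) = ⟪f.toPreGNS u, f.toPreGNS a⟫_ℂ := by
      rw [PositiveLinearMap.preGNS_inner_def]; simp [hu2, hf]
    rw [this]
    refine (norm_inner_le_norm _ _).trans ?_
    gcongr
    rw [PositiveLinearMap.preGNS_norm_def]
    apply Real.sqrt_le_sqrt
    simp only [PositiveLinearMap.ofPreGNS_toPreGNS, hf, hu2]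
    calc (w (u*u)).re ≤ ‖w (u*u)‖ := Complex.re_le_norm _
      _ ≤ C * ‖u*u‖ := hC _
      _ ≤ C * (‖u‖*‖u‖) := by gcongr; exact norm_mul_le _ _
      _ ≤ C * (1*1) := by gcongr
      _ = C := by ring
  let φ : f.PreGNS →L[ℂ] ℂ := LinearMap.mkContinuous (w ∘ₗ f.ofPreGNS.toLinearMap) (Real.sqrt C)
    (fun x => by simpa using key C hC0 hC (f.ofPreGNS x))
  let Φ : f.GNS →L[ℂ] ℂ := φ.extend (UniformSpace.Completion.toComplL (𝕜 := ℂ))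
  let ξ : f.GNS := (InnerProductSpace.toDual ℂ f.GNS).symm Φ
  have hξ : ∀ a : A, ⟪ξ, (f.toPreGNS a : f.GNS)⟫_ℂ = w a := by
    intro a
    rw [InnerProductSpace.toDual_symm_apply]
    have := ContinuousLinearMap.extend_eq φ (e := (UniformSpace.Completion.toComplL (𝕜 := ℂ) (E := f.PreGNS))) 
      UniformSpace.Completion.denseRange_coe (UniformSpace.Completion.isUniformInducing_coe _) (f.toPreGNS a)
    exact this
  have hpi : ∀ a : A, f.gnsNonUnitalStarAlgHom a ξ = (f.toPreGNS a : f.GNS) := by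
    intro a
    refine UniformSpace.Completion.denseRange_coe.eq_of_inner_left ℂ ?_
    intro b
    rw [← ContinuousLinearMap.adjoint_inner_right, ← ContinuousLinearMap.star_eq_adjoint, ← map_star,
      PositiveLinearMap.gnsNonUnitalStarAlgHom_apply_coe]
    rw [UniformSpace.Completion.inner_coe, PositiveLinearMap.preGNS_inner_def]
    have := hξ (star a * f.ofPreGNS b)
    rw [PositiveLinearMap.ofPreGNS_toPreGNS, hf, ← this]
    rfl
  have hden : DenseRange (fun a => f.gnsNonUnitalStarAlgHom a ξ) := by
    have : (fun a => f.gnsNonUnitalStarAlgHom a ξ) = fun a => ((f.toPreGNS a : f.PreGNS) : f.GNS) := funext hpi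
    rw [this]
    exact UniformSpace.Completion.denseRange_coe.comp f.toPreGNS.surjective.denseRange (UniformSpace.Completion.continuous_coe _)
  refine ⟨f.GNS, inferInstance, inferInstance, inferInstance, f.gnsNonUnitalStarAlgHom, ξ, ?_, hden, ?_⟩
  · intro a
    rw [hpi, hξ]
  · intro C hC0 hC
    have h1 : ∀ v : f.GNS, ‖⟪ξ, v⟫_ℂ‖ ≤ Real.sqrt C * ‖v‖ := by
      intro v
      refine hden.induction_on v (isClosed_le (by fun_prop) (by fun_prop)) ?_
      intro a
      rw [hpi, hξ, UniformSpace.Completion.norm_coe]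
      exact key C hC0 hC a
    have h2 := h1 ξ
    rw [inner_self_eq_norm_sq_to_K] at h2
    simp only [norm_pow, RCLike.norm_ofReal, abs_norm, Complex.coe_algebraMap, Complex.norm_real, norm_norm] at h2
    have h3 := Real.sq_sqrt hC0
    have h4 := Real.sqrt_nonneg C
    rcases eq_or_lt_of_le (norm_nonneg ξ) with h | h
    · rw [← h]; simpa using hC0
    · have : ‖ξ‖ ≤ Real.sqrt C := by nlinarith
      calc ‖ξ‖^2 ≤ (Real.sqrt C)^2 := by gcongr
        _ = C := h3

theorem fn_ext {f g : A →ₗ[ℂ] ℂ} (h : ∀ a, f (star a * a) = g (star a * a)) : f = g := by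
  letI := CStarAlgebra.spectralOrder A
  letI := CStarAlgebra.spectralOrderedRing A
  ext a
  obtain ⟨x, hx, -, rfl⟩ := CStarAlgebra.exists_sum_four_nonneg a
  simp only [map_sum, map_smul]
  refine Finset.sum_congr rfl fun i _ => ?_
  obtain ⟨b, hb⟩ := CStarAlgebra.nonneg_iff_eq_star_mul_self.mp (hx i)
  rw [hb, h]

end GNS

section Rep
variable {A : Type} [NonUnitalCStarAlgebra A]
variable {H : Type} [NormedAddCommGroup H] [InnerProductSpace ℂ H] [CompleteSpace H]
variable {K : Type} [NormedAddCommGroup K] [InnerProductSpace ℂ K] [CompleteSpace K]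

theorem rep_inner (π : A →⋆ₙₐ[ℂ] (H →L[ℂ] H)) (a : A) (x y : H) :
    ⟪π a x, y⟫_ℂ = ⟪x, π (star a) y⟫_ℂ := by
  rw [map_star, ContinuousLinearMap.star_eq_adjoint, ContinuousLinearMap.adjoint_inner_right]

theorem rep_mul (π : A →⋆ₙₐ[ℂ] (H →L[ℂ] H)) (a b : A) (x : H) :
    π (a * b) x = π a (π b x) := by
  rw [map_mul]; rfl

theorem rep_inner_star (π : A →⋆ₙₐ[ℂ] (H →L[ℂ] H)) (a : A) (x : H) :
    ⟪x, π (star a * a) x⟫_ℂ = ((‖π a x‖ ^ 2 : ℝ) : ℂ) := by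
  rw [rep_mul, ← rep_inner, inner_self_eq_norm_sq_to_K]; simp

theorem rep_norm_le (π : A →⋆ₙₐ[ℂ] (H →L[ℂ] H)) (a : A) : ‖π a‖ ≤ ‖a‖ :=
  NonUnitalStarAlgHom.norm_apply_le π a

theorem rep_continuous (π : A →⋆ₙₐ[ℂ] (H →L[ℂ] H)) : Continuous π :=
  AddMonoidHomClass.continuous_of_bound π 1 (fun a => by simpa using rep_norm_le π a)

/-- nondegeneracy -/
theorem cyc_nondeg {π : A →⋆ₙₐ[ℂ] (H →L[ℂ] H)} {ξ : H} (h : DenseRange (fun a => π a ξ))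
    {v : H} (hv : ∀ b, π b v = 0) : v = 0 := by
  refine h.eq_of_inner_left ℂ ?_
  intro a
  rw [inner_zero_left, ← inner_conj_symm, rep_inner, hv]; simp

/-- the linear map a ↦ π a ξ -/
noncomputable def orbitMap (π : A →⋆ₙₐ[ℂ] (H →L[ℂ] H)) (ξ : H) : A →ₗ[ℂ] H where
  toFun a := π a ξ
  map_add' a b := by simp
  map_smul' c a := by simp

theorem intertwiner {π : A →⋆ₙₐ[ℂ] (H →L[ℂ] H)} {ξ : H} (h : DenseRange (fun a => π a ξ))
    (ρ : A →⋆ₙₐ[ℂ] (K →L[ℂ] K)) (η : K) (C : ℝ) (hC : ∀ a, ‖ρ a η‖ ≤ C * ‖π a ξ‖) :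
    ∃ V : H →L[ℂ] K, (∀ a, V (π a ξ) = ρ a η) ∧ (∀ a x, V (π a x) = ρ a (V x)) ∧
      ∀ x, ‖V x‖ ≤ C * ‖x‖ := by
  have hd : DenseRange (orbitMap π ξ) := h
  have hV : ∀ a, (orbitMap ρ η).extendOfNorm (orbitMap π ξ) (π a ξ) = ρ a η := fun a =>
    LinearMap.extendOfNorm_eq hd ⟨C, hC⟩ a
  refine ⟨(orbitMap ρ η).extendOfNorm (orbitMap π ξ), hV, ?_, ?_⟩
  · intro a x
    refine h.induction_on x (isClosed_eq (by fun_prop) (by fun_prop)) ?_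
    intro b
    rw [← rep_mul, hV, hV, rep_mul]
  · intro x
    exact LinearMap.norm_extendOfNorm_apply_le hd C hC x

theorem intertwiner_adj {π : A →⋆ₙₐ[ℂ] (H →L[ℂ] H)} {ρ : A →⋆ₙₐ[ℂ] (K →L[ℂ] K)} {V : H →L[ℂ] K}
    (h : ∀ a x, V (π a x) = ρ a (V x)) (a : A) (x : K) :
    V.adjoint (ρ a x) = π a (V.adjoint x) := by
  refine ext_inner_right ℂ fun y => ?_
  rw [ContinuousLinearMap.adjoint_inner_left, rep_inner, rep_inner, ContinuousLinearMap.adjoint_inner_left, h]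

theorem radon {π : A →⋆ₙₐ[ℂ] (H →L[ℂ] H)} {ξ : H} (h : DenseRange (fun a => π a ξ))
    {p : A →ₗ[ℂ] ℂ} (hp : IsPosFnC p) {c : ℝ} (hc : 0 ≤ c)
    (hle : ∀ a, (p (star a * a)).re ≤ c * ‖π a ξ‖ ^ 2) :
    ∃ T : H →L[ℂ] H, (∀ x, 0 ≤ ⟪x, T x⟫_ℂ) ∧ (∀ a x, T (π a x) = π a (T x)) ∧
      (∀ a, p a = ⟪ξ, T (π a ξ)⟫_ℂ) ∧ (∀ x, (⟪x, T x⟫_ℂ).re ≤ c * ‖x‖ ^ 2) := by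
  obtain ⟨K, _, _, _, ρ, η, hη, hcyc, -⟩ := gns_exists hp
  obtain ⟨V, hV1, hV2, hV3⟩ := intertwiner h ρ η (Real.sqrt c) (by
    intro a
    have := hle a
    rw [hη, rep_inner_star, Complex.ofReal_re] at this
    apply le_of_sq_le_sq _ (by positivity)
    rw [mul_pow, Real.sq_sqrt hc]; exact this)
  have hVξ : V ξ = η := by
    rw [← sub_eq_zero]
    refine cyc_nondeg hcyc fun b => ?_
    rw [map_sub, ← hV2, hV1, sub_self]
  have hT : ∀ x, ⟪x, (V.adjoint ∘L V) x⟫_ℂ = ((‖V x‖ ^ 2 : ℝ) : ℂ) := by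
    intro x
    rw [ContinuousLinearMap.comp_apply, ContinuousLinearMap.adjoint_inner_right, inner_self_eq_norm_sq_to_K]; simp
  refine ⟨V.adjoint ∘L V, ?_, ?_, ?_, ?_⟩
  · intro x; rw [hT]; exact Complex.zero_le_real.mpr (sq_nonneg _)
  · intro a x
    simp only [ContinuousLinearMap.comp_apply]
    rw [hV2, intertwiner_adj hV2]
  · intro a
    rw [hη, ContinuousLinearMap.comp_apply, ContinuousLinearMap.adjoint_inner_right, hV1, hVξ]
  · intro x
    rw [hT, Complex.ofReal_re]
    calc ‖V x‖^2 ≤ (Real.sqrt c * ‖x‖)^2 := by gcongr; exact hV3 x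
      _ = _ := by rw [mul_pow, Real.sq_sqrt hc]

theorem comm_adj {π : A →⋆ₙₐ[ℂ] (H →L[ℂ] H)} {T : H →L[ℂ] H} (h : ∀ a x, T (π a x) = π a (T x)) :
    ∀ a x, (star T) (π a x) = π a (star T x) := intertwiner_adj h

theorem schur_sa {π : A →⋆ₙₐ[ℂ] (H →L[ℂ] H)} (hπ : IsIrredRepC π) {T : H →L[ℂ] H}
    (hT : IsSelfAdjoint T) (h : ∀ a, Commute T (π a)) : ∃ r : ℝ, T = (r : ℂ) • 1 := by
  have hsp : ∃ r : ℝ, ∀ t ∈ spectrum ℝ T, t = r := by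
    by_contra hcon
    push Not at hcon
    obtain ⟨a, ha, -⟩ := hcon 0
    obtain ⟨b, hb, hab⟩ := hcon a
    let φ : ℝ → ℝ := fun t => max 0 ((t - (a+b)/2) * (a - b))
    let ψ : ℝ → ℝ := fun t => max 0 ((t - (a+b)/2) * (b - a))
    have hφ : Continuous φ := by fun_prop
    have hψ : Continuous ψ := by fun_prop
    have hz : cfc φ T * cfc ψ T = 0 := by
      rw [← cfc_mul φ ψ T]
      convert cfc_zero ℝ T using 2
      ext t
      simp only [φ, ψ, Pi.zero_apply, mul_eq_zero]
      rcases le_total ((t - (a+b)/2) * (a - b)) 0 with h0 | h0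
      · left; exact max_eq_left h0
      · right; apply max_eq_left; linarith
    have hab' : 0 < (a - b)^2 := by
      have : a - b ≠ 0 := sub_ne_zero.mpr (Ne.symm hab)
      positivity
    have hne : ∀ (f : ℝ → ℝ), Continuous f → ∀ s ∈ spectrum ℝ T, f s ≠ 0 → cfc f T ≠ 0 := by
      intro f hf s hs hfs h0
      have := cfc_map_spectrum f T
      rw [h0] at this
      have h2 : f s ∈ spectrum ℝ (0 : H →L[ℂ] H) := by rw [this]; exact ⟨s, hs, rfl⟩
      have hnt : Nontrivial (H →L[ℂ] H) := by
        by_contra hh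
        rw [not_nontrivial_iff_subsingleton] at hh
        exact hπ.1 (by ext a : 1; exact Subsingleton.elim _ _)
      rw [spectrum.zero_eq] at h2
      exact hfs h2
    have h1 := hne φ hφ a ha (by simp only [φ]; rw [max_eq_right] <;> nlinarith)
    have h2 := hne ψ hψ b hb (by simp only [ψ]; rw [max_eq_right] <;> nlinarith)
    have hcomm : ∀ c, Commute (cfc φ T) (π c) := fun c => by
      exact IsSelfAdjoint.commute_cfc hT (h c) φ
    rcases hπ.2 (LinearMap.ker (cfc φ T).toLinearMap) (ContinuousLinearMap.isClosed_ker _) (by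
      intro c x hx
      have hx' : cfc φ T x = 0 := hx
      show cfc φ T (π c x) = 0
      have := congrArg (fun S : H →L[ℂ] H => S x) (hcomm c).eq
      simp only [ContinuousLinearMap.mul_apply, hx', map_zero] at this
      exact this) with h0 | h0
    · apply h2
      ext x
      have : cfc ψ T x ∈ LinearMap.ker (cfc φ T).toLinearMap := by
        show cfc φ T (cfc ψ T x) = 0
        have := congrArg (fun S : H →L[ℂ] H => S x) hz
        simpa using this
      rw [h0] at this
      simpa using this
    · apply h1
      ext x
      have : x ∈ LinearMap.ker (cfc φ T).toLinearMap := by rw [h0]; trivial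
      exact this
  obtain ⟨r, hr⟩ := hsp
  refine ⟨r, ?_⟩
  have h1 : cfc (id : ℝ → ℝ) T = T := cfc_id ℝ T
  have h2 : cfc (fun _ : ℝ => r) T = algebraMap ℝ _ r := cfc_const r T
  rw [← h1, cfc_congr (f := id) (g := fun _ => r) (fun t ht => hr t ht), h2, Algebra.algebraMap_eq_smul_one]
  simp

theorem schur {π : A →⋆ₙₐ[ℂ] (H →L[ℂ] H)} (hπ : IsIrredRepC π) {T : H →L[ℂ] H}
    (h : ∀ a x, T (π a x) = π a (T x)) : ∃ r : ℂ, ∀ x, T x = r • x := by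
  have hc : ∀ a, Commute T (π a) := fun a => by ext x; exact h a x
  have hc' : ∀ a, Commute (star T) (π a) := fun a => by ext x; exact comm_adj h a x
  obtain ⟨r, hr⟩ := schur_sa hπ (realPart T).2 (fun a => by
    rw [realPart_apply_coe]
    exact ((hc a).add_left (hc' a)).smul_left _)
  obtain ⟨s, hs⟩ := schur_sa hπ (imaginaryPart T).2 (fun a => by
    rw [imaginaryPart_apply_coe]
    exact (((hc a).sub_left (hc' a)).smul_left _).smul_left _)
  refine ⟨r + Complex.I * s, fun x => ?_⟩
  conv_lhs => rw [← realPart_add_I_smul_imaginaryPart T, hr, hs]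
  simp [add_smul, mul_smul]

end Rep

end Part1

section Part2
open scoped ComplexOrder InnerProductSpace

section Dir1
variable {A : Type} [NonUnitalCStarAlgebra A]
variable {H : Type} [NormedAddCommGroup H] [InnerProductSpace ℂ H] [CompleteSpace H]

theorem irr_nondeg {π : A →⋆ₙₐ[ℂ] (H →L[ℂ] H)} (hπ : IsIrredRepC π) {v : H}
    (hv : ∀ b, π b v = 0) : v = 0 := by
  let S : Submodule ℂ H := ⨅ b, LinearMap.ker (π b).toLinearMap
  have hmem : ∀ x, x ∈ S ↔ ∀ b, π b x = 0 := fun x => by simp [S, Submodule.mem_iInf]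
  rcases hπ.2 S (by
    have : (S : Set H) = ⋂ b, {x | π b x = 0} := by ext x; simp [hmem]
    rw [this]
    exact isClosed_iInter fun b => isClosed_eq (by fun_prop) (by fun_prop)) (by
    intro a x hx
    rw [hmem] at hx ⊢
    intro b; rw [hx a, map_zero]) with h | h
  · have : v ∈ S := (hmem v).2 hv
    rw [h] at this; simpa using this
  · exfalso; apply hπ.1
    ext a x
    exact (hmem x).1 (by rw [h]; trivial) a

theorem irr_cyclic {π : A →⋆ₙₐ[ℂ] (H →L[ℂ] H)} (hπ : IsIrredRepC π) {v : H}
    (hv : v ≠ 0) : DenseRange (fun a => π a v) := by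
  have h := hπ.2 (LinearMap.range (orbitMap π v)).topologicalClosure
    (Submodule.isClosed_topologicalClosure _) (by
    intro a x hx
    rw [← SetLike.mem_coe, Submodule.topologicalClosure_coe] at hx ⊢
    refine map_mem_closure (π a).continuous hx ?_
    rintro _ ⟨b, rfl⟩
    exact ⟨a * b, rep_mul π a b v⟩)
  rcases h with h | h
  · exfalso; apply hv
    apply irr_nondeg hπ
    intro b
    have : π b v ∈ (LinearMap.range (orbitMap π v)).topologicalClosure :=
      Submodule.le_topologicalClosure _ ⟨b, rfl⟩
    rw [h] at this; simpa using this
  · have : Dense ((LinearMap.range (orbitMap π v) : Submodule ℂ H) : Set H) := by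
      rwa [Submodule.dense_iff_topologicalClosure_eq_top]
    exact this

/-- vector functional -/
noncomputable def vf (π : A →⋆ₙₐ[ℂ] (H →L[ℂ] H)) (x : H) : A →ₗ[ℂ] ℂ where
  toFun a := ⟪x, π a x⟫_ℂ
  map_add' a b := by simp [inner_add_right]
  map_smul' c a := by simp [inner_smul_right]

theorem vf_apply (π : A →⋆ₙₐ[ℂ] (H →L[ℂ] H)) (x : H) (a : A) : vf π x a = ⟪x, π a x⟫_ℂ := rfl

theorem vf_star (π : A →⋆ₙₐ[ℂ] (H →L[ℂ] H)) (x : H) (a : A) :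
    vf π x (star a * a) = ((‖π a x‖ ^ 2 : ℝ) : ℂ) := rep_inner_star π a x

theorem vf_norm_le (π : A →⋆ₙₐ[ℂ] (H →L[ℂ] H)) (x : H) (a : A) :
    ‖vf π x a‖ ≤ ‖a‖ * ‖x‖ ^ 2 := by
  rw [vf_apply]
  calc _ ≤ ‖x‖ * ‖π a x‖ := norm_inner_le_norm _ _
    _ ≤ ‖x‖ * (‖a‖ * ‖x‖) := by
      gcongr
      exact ((π a).le_opNorm x).trans (by gcongr; exact rep_norm_le π a)
    _ = _ := by ring

theorem sumFn_exists (π : A →⋆ₙₐ[ℂ] (H →L[ℂ] H)) (c : ℕ → ℝ) (z : ℕ → H) (hc : ∀ j, 0 ≤ c j)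
    (hs : Summable fun j => c j * ‖z j‖ ^ 2) :
    ∃ F : A →ₗ[ℂ] ℂ, ∀ a, HasSum (fun j => (c j : ℂ) * vf π (z j) a) (F a) := by
  have hsum : ∀ a, Summable (fun j => (c j : ℂ) * vf π (z j) a) := by
    intro a
    refine Summable.of_norm_bounded (g := fun j => ‖a‖ * (c j * ‖z j‖ ^ 2)) (hs.mul_left _) fun j => ?_
    rw [norm_mul, Complex.norm_real, Real.norm_of_nonneg (hc j)]
    calc _ ≤ c j * (‖a‖ * ‖z j‖ ^ 2) := by gcongr; exacts [hc j, vf_norm_le _ _ _]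
      _ = _ := by ring
  refine ⟨{ toFun := fun a => ∑' j, (c j : ℂ) * vf π (z j) a, map_add' := ?_, map_smul' := ?_ }, fun a => (hsum a).hasSum⟩
  · intro a b
    rw [← (hsum a).tsum_add (hsum b)]
    simp [mul_add]
  · intro r a
    rw [RingHom.id_apply, smul_eq_mul, ← tsum_mul_left]
    refine tsum_congr fun j => ?_
    rw [map_smul, smul_eq_mul]; ring

theorem sing_aux {π : A →⋆ₙₐ[ℂ] (H →L[ℂ] H)} (hπ : IsIrredRepC π) (e : ℕ → H)
    (he : Orthonormal ℂ e) (t : ℕ → ℝ) (ht0 : ∀ j, 0 < t j) (hts : Summable t)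
    (η : H) (hη : HasSum (fun j => (t j : ℂ) • e j) η)
    (g : A →ₗ[ℂ] ℂ) (hg : ∀ a, HasSum (fun j => ‖π a ((t j : ℂ) • e j)‖ ^ 2) ((g (star a * a)).re))
    (hgp : IsPosFnC g) (c : ℝ) (hc : 0 ≤ c) (hle : ∀ a, ‖π a η‖ ^ 2 ≤ c * (g (star a * a)).re) : False := by
  obtain ⟨K, _, _, _, ρ, ξ, hξ, hcyc, -⟩ := gns_exists hgp
  have hgn : ∀ a, (g (star a * a)).re = ‖ρ a ξ‖ ^ 2 := fun a => by
    rw [hξ, rep_inner_star, Complex.ofReal_re]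
  have hV : ∀ i, ∃ V : K →L[ℂ] H, (∀ a, V (ρ a ξ) = π a ((t i : ℂ) • e i)) ∧
      (∀ a x, V (ρ a x) = π a (V x)) ∧ ∀ x, ‖V x‖ ≤ 1 * ‖x‖ := by
    intro i
    apply intertwiner hcyc
    intro a
    rw [one_mul]
    apply le_of_sq_le_sq _ (by positivity)
    rw [← hgn]
    exact le_hasSum (hg a) i (fun j _ => by positivity)
  choose V hV1 hV2 hV3 using hV
  obtain ⟨W, hW1, hW2, hW3⟩ := intertwiner hcyc π η (Real.sqrt c) (by
    intro a
    apply le_of_sq_le_sq _ (by positivity)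
    rw [mul_pow, Real.sq_sqrt hc, ← hgn]; exact hle a)
  have hw : ∀ i, ∃ r : ℂ, ∀ x, (W ∘L (V i).adjoint) x = r • x := by
    intro i
    apply schur hπ
    intro a x
    simp only [ContinuousLinearMap.comp_apply]
    rw [intertwiner_adj (hV2 i), hW2]
  choose w hw using hw
  have hw' : ∀ i y, V i (W.adjoint y) = (starRingEnd ℂ (w i)) • y := by
    intro i y
    refine ext_inner_left ℂ fun x => ?_
    have := hw i x
    rw [← ContinuousLinearMap.adjoint_inner_left, ContinuousLinearMap.adjoint_inner_right,
      ← ContinuousLinearMap.comp_apply, this, inner_smul_left, inner_smul_right]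
  have hsq : ∀ n x, ∑ i ∈ Finset.range n, ‖V i x‖ ^ 2 ≤ ‖x‖ ^ 2 := by
    intro n x
    refine hcyc.induction_on x (isClosed_le (by fun_prop) (by fun_prop)) ?_
    intro a
    rw [← hgn]
    simp only [hV1]
    exact sum_le_hasSum _ (fun j _ => by positivity) (hg a)
  -- S_n â → â
  have hS : ∀ a, Filter.Tendsto (fun n => ∑ i ∈ Finset.range n, (V i).adjoint (V i (ρ a ξ)))
      Filter.atTop (nhds (ρ a ξ)) := by
    intro a
    have hin : ∀ n x y, ⟪y, ∑ i ∈ Finset.range n, (V i).adjoint (V i x)⟫_ℂ =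
        ∑ i ∈ Finset.range n, ⟪V i y, V i x⟫_ℂ := by
      intro n x y
      rw [inner_sum]
      simp only [ContinuousLinearMap.adjoint_inner_right]
    have h1 : ∀ n x, ‖∑ i ∈ Finset.range n, (V i).adjoint (V i x)‖ ^ 2 ≤
        ∑ i ∈ Finset.range n, ‖V i x‖ ^ 2 := by
      intro n x
      set S := ∑ i ∈ Finset.range n, (V i).adjoint (V i x) with hSdef
      have h2 : ‖S‖ ^ 2 ≤ ∑ i ∈ Finset.range n, ‖V i S‖ * ‖V i x‖ := by
        have : ((‖S‖ ^ 2 : ℝ) : ℂ) = ∑ i ∈ Finset.range n, ⟪V i S, V i x⟫_ℂ := by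
          rw [← hin, ← hSdef, inner_self_eq_norm_sq_to_K]; simp
        have h3 : ‖((‖S‖ ^ 2 : ℝ) : ℂ)‖ = ‖S‖ ^ 2 := by simp
        rw [← h3, this]
        refine (norm_sum_le _ _).trans (Finset.sum_le_sum fun i _ => norm_inner_le_norm _ _)
      have h3 := Finset.sum_mul_sq_le_sq_mul_sq (Finset.range n) (fun i => ‖V i S‖) (fun i => ‖V i x‖)
      have h4 := hsq n S
      have h5 : 0 ≤ ∑ i ∈ Finset.range n, ‖V i x‖ ^ 2 := by positivity
      rcases eq_or_lt_of_le (norm_nonneg S) with h | h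
      · rw [← h]; simpa using h5
      · have h6 : (‖S‖^2)^2 ≤ ‖S‖^2 * ∑ i ∈ Finset.range n, ‖V i x‖ ^ 2 := by
          calc (‖S‖^2)^2 ≤ (∑ i ∈ Finset.range n, ‖V i S‖ * ‖V i x‖)^2 := by gcongr
            _ ≤ _ := h3
            _ ≤ _ := by gcongr
        have h7 : 0 < ‖S‖^2 := by positivity
        nlinarith
    have h2 : ∀ n x, ‖(∑ i ∈ Finset.range n, (V i).adjoint (V i x)) - x‖ ^ 2 ≤
        ‖x‖ ^ 2 - ∑ i ∈ Finset.range n, ‖V i x‖ ^ 2 := by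
      intro n x
      rw [norm_sub_rev, @norm_sub_sq ℂ, hin]
      have : ∑ i ∈ Finset.range n, ⟪V i x, V i x⟫_ℂ = ((∑ i ∈ Finset.range n, ‖V i x‖ ^ 2 : ℝ) : ℂ) := by
        rw [Complex.ofReal_sum]
        refine Finset.sum_congr rfl fun i _ => ?_
        rw [inner_self_eq_norm_sq_to_K]; simp
      rw [this, RCLike.re_eq_complex_re, Complex.ofReal_re]
      have := h1 n x
      linarith
    rw [tendsto_iff_norm_sub_tendsto_zero]
    have h3 : Filter.Tendsto (fun n => ‖ρ a ξ‖ ^ 2 - ∑ i ∈ Finset.range n, ‖V i (ρ a ξ)‖ ^ 2) Filter.atTop (nhds 0) := by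
      have := (hg a).tendsto_sum_nat
      rw [hgn] at this
      simp only [hV1]
      have h := this.const_sub (‖ρ a ξ‖ ^ 2)
      rwa [sub_self] at h
    have h4 := squeeze_zero (fun n => by positivity) (fun n => h2 n (ρ a ξ)) h3
    have h5 := h4.sqrt
    simpa [Real.sqrt_sq] using h5
  -- bound on w
  have he0 : ‖e 0‖ = 1 := he.1 0
  have hwn : ∀ n, ∑ i ∈ Finset.range n, ‖w i‖ ^ 2 ≤ ‖W.adjoint (e 0)‖ ^ 2 := by
    intro n
    have := hsq n (W.adjoint (e 0))
    simpa [hw', norm_smul, he0] using this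
  have hwb : ∀ i, ‖w i‖ ≤ ‖W.adjoint (e 0)‖ := by
    intro i
    apply le_of_sq_le_sq _ (by positivity)
    refine le_trans ?_ (hwn (i+1))
    exact Finset.single_le_sum (f := fun i => ‖w i‖^2) (fun _ _ => by positivity) (by simp)
  have hsumm : Summable (fun i => w i • ((t i : ℂ) • e i)) := by
    refine Summable.of_norm_bounded (g := fun i => ‖W.adjoint (e 0)‖ * t i) (hts.mul_left _) fun i => ?_
    rw [norm_smul, norm_smul, he.1 i, Complex.norm_real, Real.norm_of_nonneg (ht0 i).le, mul_one]
    gcongr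
    exacts [(ht0 i).le, hwb i]
  obtain ⟨η', hη'⟩ := hsumm
  have heq : η = η' := by
    rw [← sub_eq_zero]
    apply irr_nondeg hπ
    intro a
    rw [map_sub, sub_eq_zero, ← hW1]
    have h1 := ((W.continuous.tendsto _).comp (hS a))
    have h2 := ((π a).continuous.tendsto _).comp hη'.tendsto_sum_nat
    refine tendsto_nhds_unique h1 (h2.congr fun n => ?_)
    simp only [Function.comp_apply, map_sum]
    refine Finset.sum_congr rfl fun i _ => ?_
    have := hw i (V i (ρ a ξ))
    rw [ContinuousLinearMap.comp_apply] at this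
    rw [this, hV1, map_smul]
  have hw1 : ∀ j, w j = 1 := by
    intro j
    have h1 : HasSum (fun i => ⟪e j, (t i : ℂ) • e i⟫_ℂ) ⟪e j, η⟫_ℂ := hη.mapL (innerSL ℂ (e j))
    have h2 : HasSum (fun i => ⟪e j, w i • (t i : ℂ) • e i⟫_ℂ) ⟪e j, η'⟫_ℂ := hη'.mapL (innerSL ℂ (e j))
    have h1' := h1.unique (hasSum_single j (fun i hi => by
      rw [inner_smul_right, he.2 hi.symm, mul_zero]))
    have h2' := h2.unique (hasSum_single j (fun i hi => by
      rw [inner_smul_right, inner_smul_right, he.2 hi.symm, mul_zero, mul_zero]))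
    rw [← heq, h1', inner_smul_right, inner_smul_right, inner_smul_right, inner_self_eq_norm_sq_to_K, he.1 j] at h2'
    have := (ht0 j).ne'
    simp at h2'
    rcases mul_eq_right₀ (M₀ := ℂ) (a := w j) (b := (t j : ℂ)) (by exact_mod_cast this) with h
    exact h.1 h2'.symm
  obtain ⟨n, hn⟩ := exists_nat_gt (‖W.adjoint (e 0)‖ ^ 2)
  have := hwn n
  simp [hw1] at this
  linarith

theorem pos_re {f : A →ₗ[ℂ] ℂ} (hf : IsPosFnC f) (a : A) : f (star a * a) = (((f (star a * a)).re : ℝ) : ℂ) ∧ 0 ≤ (f (star a * a)).re := by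
  have := hf a
  rw [Complex.le_def] at this
  refine ⟨?_, this.1⟩
  apply Complex.ext <;> simp
  exact this.2.symm

theorem fnle_re {f g : A →ₗ[ℂ] ℂ} (h : FnLEC f g) (a : A) : (f (star a * a)).re ≤ (g (star a * a)).re := by
  have := (pos_re h a).2
  simpa using this

theorem fnle_of_re {f g : A →ₗ[ℂ] ℂ} (hf : IsPosFnC f) (hg : IsPosFnC g) (h : ∀ a, (f (star a * a)).re ≤ (g (star a * a)).re) : FnLEC f g := by
  intro a
  rw [LinearMap.sub_apply, (pos_re hf a).1, (pos_re hg a).1, ← Complex.ofReal_sub]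
  exact Complex.zero_le_real.mpr (sub_nonneg.mpr (h a))

theorem pos_of_real {f : A →ₗ[ℂ] ℂ} {r : A → ℝ} (h : ∀ a, f (star a * a) = (r a : ℂ)) (hr : ∀ a, 0 ≤ r a) : IsPosFnC f := by
  intro a; rw [h]; exact Complex.zero_le_real.mpr (hr a)


theorem sedrak (p q : H) {s τ : ℝ} (hs : 0 < s) (hτ : 0 < τ) :
    ‖p + q‖ ^ 2 / (s + τ) ≤ ‖p‖ ^ 2 / s + ‖q‖ ^ 2 / τ := by
  have h1 : ‖p + q‖ ^ 2 ≤ (‖p‖ + ‖q‖) ^ 2 := by gcongr; exact norm_add_le _ _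
  refine (div_le_div_of_nonneg_right h1 (by positivity)).trans ?_
  rw [div_add_div _ _ hs.ne' hτ.ne', div_le_div_iff₀ (by positivity) (by positivity)]
  nlinarith [sq_nonneg (‖p‖ * τ - ‖q‖ * s)]

theorem exists_orthonormal_seq (hH : ¬ FiniteDimensional ℂ H) : ∃ e : ℕ → H, Orthonormal ℂ e := by
  obtain ⟨w, b, hb⟩ := exists_hilbertBasis ℂ H
  have hw : Infinite w := by
    by_contra h
    rw [not_infinite_iff_finite] at h
    have := Fintype.ofFinite w
    exact hH (b.toOrthonormalBasis).toBasis.finiteDimensional_of_finite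
  exact ⟨fun n => b (Infinite.natEmbedding w n), b.orthonormal.comp _ (Infinite.natEmbedding w).injective⟩

theorem direction_one (hA : LebDecompUniqueC A) {π : A →⋆ₙₐ[ℂ] (H →L[ℂ] H)} (hπ : IsIrredRepC π) :
    FiniteDimensional ℂ H := by
  by_contra hH
  obtain ⟨e, he⟩ := exists_orthonormal_seq hH
  let t : ℕ → ℝ := fun j => (1/4 : ℝ) ^ j
  have ht0 : ∀ j, 0 < t j := fun j => by positivity
  have hts : Summable t := summable_geometric_of_lt_one (by norm_num) (by norm_num)
  let z : ℕ → H := fun j => (t j : ℂ) • e j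
  have hz : ∀ j, ‖z j‖ = t j := fun j => by
    simp only [z]
    rw [norm_smul, he.1 j, Complex.norm_real, Real.norm_of_nonneg (ht0 j).le, mul_one]
  have hzs : Summable z := Summable.of_norm (by simpa only [hz] using hts)
  obtain ⟨η, hη⟩ := hzs
  obtain ⟨g, hg⟩ := sumFn_exists π (fun _ => 1) z (fun _ => zero_le_one) (by
    simp only [hz, one_mul]
    refine Summable.of_nonneg_of_le (fun j => by positivity) (fun j => ?_) hts
    have : t j ≤ 1 := pow_le_one₀ (by norm_num) (by norm_num)
    nlinarith [ht0 j])
  obtain ⟨f, hf⟩ := sumFn_exists π (fun j => 2 ^ j) z (fun _ => by positivity) (by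
    simp only [hz]
    refine Summable.of_nonneg_of_le (fun j => by positivity) (fun j => ?_) hts
    have h2 : (2:ℝ)^j * t j ≤ 1 := by
      simp only [t]; rw [← mul_pow]; exact pow_le_one₀ (by norm_num) (by norm_num)
    nlinarith [ht0 j])
  have hgs : ∀ a, HasSum (fun j => ‖π a (z j)‖ ^ 2) ((g (star a * a)).re) := by
    intro a
    have := (hg (star a * a)).mapL Complex.reCLM
    simpa only [vf_star, Complex.reCLM_apply, Complex.ofReal_one, one_mul, Complex.ofReal_re] using this
  have hfs : ∀ a, HasSum (fun j => 2 ^ j * ‖π a (z j)‖ ^ 2) ((f (star a * a)).re) := by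
    intro a
    have := (hf (star a * a)).mapL Complex.reCLM
    simpa only [vf_star, Complex.reCLM_apply, ← Complex.ofReal_mul, Complex.ofReal_re] using this
  have hgp : IsPosFnC g := by
    intro a
    refine (hg (star a * a)).nonneg fun j => ?_
    rw [vf_star, ← Complex.ofReal_mul]
    exact Complex.zero_le_real.mpr (by positivity)
  have hfp : IsPosFnC f := by
    intro a
    refine (hf (star a * a)).nonneg fun j => ?_
    rw [vf_star, ← Complex.ofReal_mul]
    exact Complex.zero_le_real.mpr (by positivity)
  -- truncations
  let F : ℕ → (A →ₗ[ℂ] ℂ) := fun k => ∑ j ∈ Finset.range (k + 1), ((2 ^ j : ℝ) : ℂ) • vf π (z j)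
  let s : ℕ → ℝ := fun k => ∑ j ∈ Finset.range (k + 1), (1/2 : ℝ) ^ j
  let U : ℕ → H := fun k => ∑ j ∈ Finset.range (k + 1), z j
  have hs0 : ∀ k, 0 < s k := fun k => Finset.sum_pos (fun j _ => by positivity) ⟨0, by simp⟩
  have hFs : ∀ k a, F k (star a * a) = ((∑ j ∈ Finset.range (k + 1), 2 ^ j * ‖π a (z j)‖ ^ 2 : ℝ) : ℂ) := by
    intro k a
    simp only [F, LinearMap.sum_apply, LinearMap.smul_apply, vf_star, smul_eq_mul]
    push_cast; rfl
  have hFp : ∀ k, IsPosFnC (F k) := fun k => pos_of_real (hFs k) (fun a => by positivity)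
  let G : ℕ → (A →ₗ[ℂ] ℂ) := fun k => F k - (((s k)⁻¹ : ℝ) : ℂ) • vf π (U k)
  have hGs : ∀ k a, G k (star a * a) =
      ((∑ j ∈ Finset.range (k + 1), 2 ^ j * ‖π a (z j)‖ ^ 2 - (s k)⁻¹ * ‖π a (U k)‖ ^ 2 : ℝ) : ℂ) := by
    intro k a
    simp only [G, LinearMap.sub_apply, LinearMap.smul_apply, vf_star, smul_eq_mul, hFs]
    push_cast; rfl
  have hGinc : ∀ k a, (G k (star a * a)).re ≤ (G (k+1) (star a * a)).re := by
    intro k a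
    rw [hGs, hGs, Complex.ofReal_re, Complex.ofReal_re, Finset.sum_range_succ _ (k+1)]
    have h1 : s (k+1) = s k + (1/2)^(k+1) := Finset.sum_range_succ _ _
    have h2 : U (k+1) = U k + z (k+1) := Finset.sum_range_succ _ _
    rw [h1, h2, map_add]
    have h3 := sedrak (π a (U k)) (π a (z (k+1))) (hs0 k) (τ := (1/2)^(k+1)) (by positivity)
    have h4 : ‖π a (z (k+1))‖^2 / (1/2 : ℝ)^(k+1) = 2^(k+1) * ‖π a (z (k+1))‖^2 := by
      rw [one_div, inv_pow, div_inv_eq_mul, mul_comm]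
    rw [h4] at h3
    simp only [div_eq_inv_mul] at h3
    rw [div_eq_inv_mul] at *
    linarith
  have hG0 : ∀ k a, 0 ≤ (G k (star a * a)).re := by
    intro k a
    induction k with
    | zero => rw [hGs, Complex.ofReal_re]; simp [s, U]
    | succ k ih => exact ih.trans (hGinc k a)
  have hGp : ∀ k, IsPosFnC (G k) := by
    intro k a
    have := hG0 k a
    rw [hGs] at this ⊢
    rw [Complex.ofReal_re] at this
    exact Complex.zero_le_real.mpr this
  have hFt : ∀ a, Filter.Tendsto (fun k => F k a) Filter.atTop (nhds (f a)) := by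
    intro a
    have := ((hf a).tendsto_sum_nat).comp (Filter.tendsto_add_atTop_nat 1)
    refine this.congr fun k => ?_
    simp only [Function.comp_apply, F, LinearMap.sum_apply, LinearMap.smul_apply, smul_eq_mul]
  have hGt : ∀ a, Filter.Tendsto (fun k => G k a) Filter.atTop (nhds ((f - (1/2 : ℂ) • vf π η) a)) := by
    intro a
    have h1 : Filter.Tendsto U Filter.atTop (nhds η) := (hη.tendsto_sum_nat).comp (Filter.tendsto_add_atTop_nat 1)
    have h2 : Filter.Tendsto s Filter.atTop (nhds 2) :=
      (hasSum_geometric_two.tendsto_sum_nat).comp (Filter.tendsto_add_atTop_nat 1)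
    have h3 : Filter.Tendsto (fun k => vf π (U k) a) Filter.atTop (nhds (vf π η a)) := by
      have hc : Continuous fun x : H => vf π x a := by simp only [vf_apply]; fun_prop
      exact (hc.tendsto η).comp h1
    have h4 : Filter.Tendsto (fun k => (((s k)⁻¹ : ℝ) : ℂ)) Filter.atTop (nhds (1/2)) := by
      have := (Complex.continuous_ofReal.tendsto _).comp (h2.inv₀ two_ne_zero)
      have h2 : ((2⁻¹ : ℝ) : ℂ) = 1 / 2 := by rw [Complex.ofReal_inv, one_div]; rfl
      rw [h2] at this
      exact this
    have h5 := (hFt a).sub (h4.mul h3)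
    exact h5
  have hFg : ∀ k a, (F k (star a * a)).re ≤ 2 ^ k * (g (star a * a)).re := by
    intro k a
    rw [hFs, Complex.ofReal_re]
    calc ∑ j ∈ Finset.range (k + 1), 2 ^ j * ‖π a (z j)‖ ^ 2
        ≤ ∑ j ∈ Finset.range (k + 1), 2 ^ k * ‖π a (z j)‖ ^ 2 := by
          refine Finset.sum_le_sum fun j hj => ?_
          gcongr
          · norm_num
          · simp at hj; omega
      _ = 2 ^ k * ∑ j ∈ Finset.range (k + 1), ‖π a (z j)‖ ^ 2 := by rw [Finset.mul_sum]
      _ ≤ _ := by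
        gcongr
        exact sum_le_hasSum _ (fun j _ => by positivity) (hgs a)
  have hgk : ∀ k : ℕ, IsPosFnC (((2 ^ k : ℝ) : ℂ) • g) := by
    intro k a
    rw [LinearMap.smul_apply, smul_eq_mul]
    exact mul_nonneg (Complex.zero_le_real.mpr (by positivity)) (hgp a)
  have hgkre : ∀ (k : ℕ) a, ((((2 ^ k : ℝ) : ℂ) • g) (star a * a)).re = 2 ^ k * (g (star a * a)).re := by
    intro k a
    rw [LinearMap.smul_apply, smul_eq_mul, Complex.re_ofReal_mul]
  have hfabs : AbsContC f g := by
    refine ⟨F, fun k => 2 ^ k, hFp, fun k => by positivity, ?_, ?_, hFt⟩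
    · intro k
      refine fnle_of_re (hFp k) (hFp (k+1)) fun a => ?_
      rw [hFs, hFs, Complex.ofReal_re, Complex.ofReal_re, Finset.sum_range_succ _ (k+1)]
      have : 0 ≤ 2 ^ (k+1) * ‖π a (z (k+1))‖ ^ 2 := by positivity
      linarith
    · intro k
      refine fnle_of_re (hFp k) (hgk k) fun a => ?_
      rw [hgkre]; exact hFg k a
  have hGabs : AbsContC (f - (1/2 : ℂ) • vf π η) g := by
    refine ⟨G, fun k => 2 ^ k, hGp, fun k => by positivity, ?_, ?_, hGt⟩
    · intro k
      exact fnle_of_re (hGp k) (hGp (k+1)) (hGinc k)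
    · intro k
      refine fnle_of_re (hGp k) (hgk k) fun a => ?_
      rw [hgkre]
      refine le_trans ?_ (hFg k a)
      rw [hGs, hFs, Complex.ofReal_re, Complex.ofReal_re]
      have : 0 ≤ (s k)⁻¹ * ‖π a (U k)‖ ^ 2 := by have := hs0 k; positivity
      linarith
  have hGp' : IsPosFnC (f - (1/2 : ℂ) • vf π η) := by
    intro a
    exact ge_of_tendsto (hGt (star a * a)) (Filter.Eventually.of_forall fun k => hGp k a)
  have hvs : ∀ a, ((1/2 : ℂ) • vf π η) (star a * a) = ((1/2 * ‖π a η‖ ^ 2 : ℝ) : ℂ) := by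
    intro a
    rw [LinearMap.smul_apply, vf_star]; push_cast; rfl
  have hvp : IsPosFnC ((1/2 : ℂ) • vf π η) := pos_of_real hvs (fun a => by positivity)
  have hη0 : η ≠ 0 := by
    intro h0
    have h1 : HasSum (fun i => ⟪e 0, (t i : ℂ) • e i⟫_ℂ) ⟪e 0, η⟫_ℂ := hη.mapL (innerSL ℂ (e 0))
    have h1' := h1.unique (hasSum_single 0 (fun i hi => by
      rw [inner_smul_right, he.2 hi.symm, mul_zero]))
    rw [h0, inner_zero_right, inner_smul_right, inner_self_eq_norm_sq_to_K, he.1 0] at h1'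
    simp [t] at h1'
  have hcyc := irr_cyclic hπ hη0
  have hsing : SingularC ((1/2 : ℂ) • vf π η) g := by
    intro p hp hp1 hp2
    obtain ⟨T, hT1, hT2, hT3, hT4⟩ := radon hcyc hp (c := 1/2) (by norm_num) (by
      intro a
      have := fnle_re hp1 a
      rwa [hvs, Complex.ofReal_re] at this)
    obtain ⟨r, hr⟩ := schur hπ hT2
    have hr0 : 0 ≤ r := by
      have := hT1 (e 0)
      rw [hr, inner_smul_right, inner_self_eq_norm_sq_to_K, he.1 0] at this
      simpa using this
    have hpa : ∀ a, p a = r * vf π η a := by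
      intro a
      rw [hT3, hr, inner_smul_right, vf_apply]
    by_cases h0 : r = 0
    · ext a; rw [hpa, h0, zero_mul]; rfl
    · exfalso
      have hrr : r = (r.re : ℂ) := by
        rw [Complex.le_def] at hr0
        apply Complex.ext <;> simp
        exact hr0.2.symm
      have hrp : 0 < r.re := by
        rcases lt_or_eq_of_le (Complex.le_def.mp hr0).1 with h | h
        · exact h
        · exfalso; apply h0; rw [hrr, ← h]; simp
      refine sing_aux hπ e he t ht0 hts η hη g hgs hgp (r.re⁻¹) (by positivity) fun a => ?_
      have := fnle_re hp2 a
      rw [hpa, vf_star, hrr, ← Complex.ofReal_mul, Complex.ofReal_re] at this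
      rw [inv_mul_eq_div, le_div_iff₀ hrp]
      linarith
  have hd1 : IsLebDecompC f g f 0 := by
    refine ⟨hfp, fun a => by simp, by simp, hfabs, ?_⟩
    intro p hp hp1 hp2
    apply fn_ext
    intro a
    have h1 := fnle_re hp1 a
    have h2 := pos_re hp a
    rw [LinearMap.zero_apply, Complex.zero_re] at h1
    rw [h2.1, le_antisymm h1 h2.2]; simp
  have hd2 : IsLebDecompC f g (f - (1/2 : ℂ) • vf π η) ((1/2 : ℂ) • vf π η) :=
    ⟨hGp', hvp, by simp, hGabs, hsing⟩
  have hu := (hA f g hfp hgp _ _ _ _ hd1 hd2).2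
  apply hη0
  apply irr_nondeg hπ
  intro a
  have := congrArg (fun φ : A →ₗ[ℂ] ℂ => φ (star a * a)) hu
  simp only [hvs, LinearMap.zero_apply] at this
  have h2 : (1/2 * ‖π a η‖ ^ 2 : ℝ) = 0 := by exact_mod_cast this.symm
  simpa using h2

end Dir1

end Part2

section Part3
open scoped ComplexOrder InnerProductSpace

section Proj
variable {H : Type} [NormedAddCommGroup H] [InnerProductSpace ℂ H] [CompleteSpace H]

theorem closed_hasProj (S : Submodule ℂ H) (hS : IsClosed (S : Set H)) : S.HasOrthogonalProjection := by
  have : CompleteSpace S := hS.completeSpace_coe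
  infer_instance

theorem proj_comm (S : Submodule ℂ H) [S.HasOrthogonalProjection] {T T' : H →L[ℂ] H}
    (hadj : ∀ x y, ⟪T x, y⟫_ℂ = ⟪x, T' y⟫_ℂ)
    (h1 : ∀ x ∈ S, T x ∈ S) (h2 : ∀ x ∈ S, T' x ∈ S) (x : H) :
    S.starProjection (T x) = T (S.starProjection x) := by
  refine Submodule.eq_starProjection_of_mem_of_inner_eq_zero (h1 _ (Submodule.starProjection_apply_mem _ _)) ?_
  intro w hw
  rw [← map_sub, hadj]
  exact Submodule.starProjection_inner_eq_zero _ _ (h2 w hw)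

end Proj

section PS
variable {A : Type} [NonUnitalCStarAlgebra A]
variable {L : Type} [NormedAddCommGroup L] [InnerProductSpace ℂ L] [CompleteSpace L]

/-- quasi-states killing the kernel of `σ`, as functions -/
def QS (σ : A →⋆ₙₐ[ℂ] (L →L[ℂ] L)) : Set (A → ℂ) :=
  {φ | (∀ a b, φ (a + b) = φ a + φ b) ∧ (∀ (c : ℂ) a, φ (c • a) = c * φ a) ∧ (∀ a, ‖φ a‖ ≤ ‖a‖) ∧
    (∀ a, 0 ≤ φ (star a * a)) ∧ ∀ a, σ a = 0 → φ a = 0}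

theorem QS_closed (σ : A →⋆ₙₐ[ℂ] (L →L[ℂ] L)) : IsClosed (QS σ) := by
  refine IsClosed.and ?_ (IsClosed.and ?_ (IsClosed.and ?_ (IsClosed.and ?_ ?_)))
  · simp only [Set.setOf_forall]
    exact isClosed_iInter fun a => isClosed_iInter fun b =>
      isClosed_eq (continuous_apply _) ((continuous_apply a).add (continuous_apply b))
  · simp only [Set.setOf_forall]
    exact isClosed_iInter fun a => isClosed_iInter fun b =>
      isClosed_eq (continuous_apply _) (continuous_const.mul (continuous_apply b))
  · simp only [Set.setOf_forall]
    exact isClosed_iInter fun a => 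
      isClosed_le (continuous_apply _).norm continuous_const
  · simp only [Set.setOf_forall]
    exact isClosed_iInter fun a => 
      isClosed_le continuous_const (continuous_apply _)
  · simp only [Set.setOf_forall]
    exact isClosed_iInter fun a => isClosed_iInter fun b =>
      isClosed_eq (continuous_apply _) continuous_const

theorem QS_compact (σ : A →⋆ₙₐ[ℂ] (L →L[ℂ] L)) : IsCompact (QS σ) := by
  refine IsCompact.of_isClosed_subset (isCompact_univ_pi fun a : A => isCompact_closedBall (0 : ℂ) ‖a‖) (QS_closed σ) ?_
  intro φ hφ a _
  simpa using hφ.2.2.1 a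

theorem QS_vf (σ : A →⋆ₙₐ[ℂ] (L →L[ℂ] L)) (w : L) (hw : ‖w‖ = 1) : (fun a => vf σ w a) ∈ QS σ := by
  refine ⟨fun a b => by simp, fun c a => by simp, fun a => ?_, fun a => ?_, fun a ha => ?_⟩
  · simpa [hw] using vf_norm_le σ w a
  · show 0 ≤ vf σ w (star a * a)
    rw [vf_star]; exact Complex.zero_le_real.mpr (by positivity)
  · show vf σ w a = 0
    rw [vf_apply, ha]; simp

theorem pure_exists (σ : A →⋆ₙₐ[ℂ] (L →L[ℂ] L)) (v : ℕ → A) (hv : ∀ j, ‖v j‖ ≤ 1)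
    (w : ℕ → L) (hw : ∀ k, ‖w k‖ = 1) (hvw : ∀ k j, j ≤ k → σ (v j * star (v j)) (w k) = w k) :
    ∃ (H : Type) (_ : NormedAddCommGroup H) (_ : InnerProductSpace ℂ H) (_ : CompleteSpace H)
      (π : A →⋆ₙₐ[ℂ] (H →L[ℂ] H)), IsIrredRepC π ∧ (∀ a, σ a = 0 → π a = 0) ∧
      ∀ j, π (v j * star (v j)) ≠ 0 := by
  let F : ℕ → Set (A → ℂ) := fun n => QS σ ∩ {φ | ∀ j, j ≤ n → φ (v j * star (v j)) = 1}
  have hFcl : ∀ n, IsClosed (F n) := fun n => by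
    refine (QS_closed σ).inter ?_
    simp only [Set.setOf_forall]
    exact isClosed_iInter fun j => isClosed_iInter fun _ => isClosed_eq (continuous_apply _) continuous_const
  have hFc : IsCompact (⋂ n, F n) :=
    (QS_compact σ).of_isClosed_subset (isClosed_iInter hFcl) (fun φ hφ => (Set.mem_iInter.1 hφ 0).1)
  have hFne : (⋂ n, F n).Nonempty := by
    refine IsCompact.nonempty_iInter_of_sequence_nonempty_isCompact_isClosed F ?_ ?_ ?_ hFcl
    · intro n φ hφ
      exact ⟨hφ.1, fun j hj => hφ.2 j (by omega)⟩
    · intro n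
      refine ⟨_, QS_vf σ (w n) (hw n), fun j hj => ?_⟩
      show vf σ (w n) _ = 1
      rw [vf_apply, hvw n j hj, inner_self_eq_norm_sq_to_K, hw]; simp
    · exact (QS_compact σ).of_isClosed_subset (hFcl 0) (fun φ hφ => hφ.1)
  obtain ⟨φ, hφF, hφext⟩ := hFc.extremePoints_nonempty hFne
  have hφQ : φ ∈ QS σ := (Set.mem_iInter.1 hφF 0).1
  have hφv : ∀ j, φ (v j * star (v j)) = 1 := fun j => (Set.mem_iInter.1 hφF j).2 j le_rfl
  have hmemF : ∀ ψ ∈ QS σ, (∀ j, ψ (v j * star (v j)) = 1) → ψ ∈ ⋂ n, F n := fun ψ h1 h2 =>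
    Set.mem_iInter.2 fun n => ⟨h1, fun j _ => h2 j⟩
  let Φ : A →ₗ[ℂ] ℂ := { toFun := φ, map_add' := hφQ.1, map_smul' := hφQ.2.1 }
  obtain ⟨H, _, _, _, π, ξ, hπ, hcyc, hnorm⟩ := gns_exists (w := Φ) (fun a => hφQ.2.2.2.1 a)
  have hπ' : ∀ a, φ a = ⟪ξ, π a ξ⟫_ℂ := hπ
  have hξ1 : ‖ξ‖ ^ 2 ≤ 1 := hnorm 1 zero_le_one (fun a => by rw [one_mul]; exact hφQ.2.2.1 a)
  have hvx : ∀ j x, vf π x (v j * star (v j)) = ((‖π (star (v j)) x‖ ^ 2 : ℝ) : ℂ) := by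
    intro j x
    have := vf_star π x (star (v j))
    rwa [star_star] at this
  have hvle : ∀ j x, ‖π (star (v j)) x‖ ^ 2 ≤ ‖x‖ ^ 2 := by
    intro j x
    gcongr
    refine ((π _).le_opNorm x).trans ?_
    have h1 : ‖π (star (v j))‖ ≤ 1 := (rep_norm_le π _).trans (by rw [norm_star]; exact hv j)
    calc _ ≤ 1 * ‖x‖ := by gcongr
      _ = ‖x‖ := one_mul _
  have hvξ : ∀ j, ‖π (star (v j)) ξ‖ ^ 2 = 1 := by
    intro j
    have h1 : vf π ξ (v j * star (v j)) = 1 := by rw [vf_apply, ← hπ', hφv]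
    rw [hvx] at h1
    exact_mod_cast h1
  have hξ : ‖ξ‖ ^ 2 = 1 := le_antisymm hξ1 (by rw [← hvξ 0]; exact hvle 0 ξ)
  have hξ0 : ξ ≠ 0 := by intro h; rw [h] at hξ; simp at hξ
  have hker : ∀ a, σ a = 0 → π a = 0 := by
    intro a ha
    ext x
    refine hcyc.induction_on x (isClosed_eq (by fun_prop) (by fun_prop)) ?_
    intro b
    have h1 : φ (star (a * b) * (a * b)) = 0 := by
      apply hφQ.2.2.2.2
      rw [map_mul, map_mul, ha, zero_mul, mul_zero]
    rw [hπ', rep_inner_star] at h1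
    have h2 : ‖π (a * b) ξ‖ ^ 2 = 0 := by exact_mod_cast h1
    rw [← rep_mul]
    simpa using h2
  have hne : ∀ j, π (v j * star (v j)) ≠ 0 := by
    intro j h0
    have h1 : vf π ξ (v j * star (v j)) = 1 := by rw [vf_apply, ← hπ', hφv]
    rw [vf_apply, h0] at h1
    simp at h1
  refine ⟨H, inferInstance, inferInstance, inferInstance, π, ⟨?_, ?_⟩, hker, hne⟩
  · intro h0; exact hne 0 (by rw [h0]; rfl)
  intro S hS hinv
  have := closed_hasProj S hS
  have hcomm : ∀ a x, S.starProjection (π a x) = π a (S.starProjection x) := fun a x =>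
    proj_comm S (rep_inner π a) (hinv a) (hinv (star a)) x
  set p := S.starProjection ξ with hp
  set q := ξ - p with hq
  have hpq : ∀ a, ⟪p, π a q⟫_ℂ = 0 := by
    intro a
    have h1 : S.starProjection q = 0 := by
      rw [hq, map_sub, hp, Submodule.starProjection_eq_self_iff.2 (Submodule.starProjection_apply_mem _ _), sub_self]
    rw [hp, Submodule.inner_starProjection_left_eq_right, hcomm, h1, map_zero, inner_zero_right]
  have hqp : ∀ a, ⟪q, π a p⟫_ℂ = 0 := by
    intro a
    rw [← inner_conj_symm, rep_inner, hpq, map_zero]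
  have hsum : ∀ a, φ a = vf π p a + vf π q a := by
    intro a
    have : ξ = p + q := by rw [hq]; abel
    rw [hπ', this, map_add, inner_add_left, inner_add_right, inner_add_right, hpq, hqp, vf_apply, vf_apply]
    ring
  have hnsum : ‖p‖ ^ 2 + ‖q‖ ^ 2 = 1 := by
    rw [← hξ, Submodule.norm_sq_eq_add_norm_sq_starProjection ξ S, Submodule.starProjection_orthogonal']
    rfl
  by_cases hp0 : p = 0
  · left
    rw [Submodule.eq_bot_iff]
    intro x hx
    rw [← Submodule.starProjection_eq_self_iff] at hx
    rw [← hx]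
    refine hcyc.induction_on x (isClosed_eq (by fun_prop) (by fun_prop)) ?_
    intro a; rw [hcomm, ← hp, hp0, map_zero]
  by_cases hq0 : q = 0
  · right
    rw [Submodule.eq_top_iff']
    intro x
    rw [← Submodule.starProjection_eq_self_iff]
    refine hcyc.induction_on x (isClosed_eq (by fun_prop) (by fun_prop)) ?_
    intro a; rw [hcomm, ← hp, ← sub_eq_zero.1 hq0]
  exfalso
  have hp1 : 0 < ‖p‖ ^ 2 := by have := norm_pos_iff.2 hp0; positivity
  have hq1 : 0 < ‖q‖ ^ 2 := by have := norm_pos_iff.2 hq0; positivity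
  have hscale : ∀ x : H, 0 < ‖x‖ ^ 2 → (∀ j, ‖π (star (v j)) x‖ ^ 2 = ‖x‖ ^ 2) →
      (fun a => (((‖x‖ ^ 2)⁻¹ : ℝ) : ℂ) * vf π x a) ∈ ⋂ n, F n := by
    intro x hx hxv
    apply hmemF
    · refine ⟨fun a b => by simp [mul_add], fun c a => by simp; ring, fun a => ?_, fun a => ?_, fun a ha => ?_⟩
      · rw [norm_mul, Complex.norm_real, Real.norm_of_nonneg (by positivity), inv_mul_le_iff₀ hx, mul_comm]
        exact vf_norm_le π x a
      · show 0 ≤ _ * vf π x (star a * a)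
        rw [vf_star, ← Complex.ofReal_mul]; exact Complex.zero_le_real.mpr (by positivity)
      · show _ * vf π x a = 0
        rw [vf_apply, hker a ha]; simp
    · intro j
      rw [hvx, ← Complex.ofReal_mul, hxv, inv_mul_cancel₀ hx.ne']; simp
  have hjs : ∀ j, ‖π (star (v j)) p‖ ^ 2 + ‖π (star (v j)) q‖ ^ 2 = 1 := by
    intro j
    have := hsum (v j * star (v j))
    rw [hφv, hvx, hvx, ← Complex.ofReal_add] at this
    exact_mod_cast this.symm
  have hF1 := hscale p hp1 (fun j => by linarith [hjs j, hvle j p, hvle j q])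
  have hF2 := hscale q hq1 (fun j => by linarith [hjs j, hvle j p, hvle j q])
  have hext := hφext hF1 hF2 ⟨‖p‖ ^ 2, ‖q‖ ^ 2, hp1, hq1, hnsum, by
    ext a
    simp only [Pi.add_apply, Pi.smul_apply, Complex.real_smul]
    rw [← mul_assoc, ← mul_assoc, ← Complex.ofReal_mul, ← Complex.ofReal_mul, mul_inv_cancel₀ hp1.ne',
      mul_inv_cancel₀ hq1.ne', hsum]; simp⟩
  have hfin : p = ((‖p‖ ^ 2 : ℝ) : ℂ) • ξ := by
    refine hcyc.eq_of_inner_left ℂ fun a => ?_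
    have h1 := congrFun hext a
    rw [hπ', vf_apply] at h1
    rw [inner_smul_left, Complex.conj_ofReal, ← h1, ← mul_assoc, ← Complex.ofReal_mul, mul_inv_cancel₀ hp1.ne']
    have : ξ = p + q := by rw [hq]; abel
    rw [this, map_add, inner_add_right, hpq]; simp
  have hfin2 : S.starProjection p = p :=
    Submodule.starProjection_eq_self_iff.2 (Submodule.starProjection_apply_mem _ _)
  have h3 : p = ((‖p‖ ^ 2 : ℝ) : ℂ) • p := by
    conv_lhs => rw [← hfin2, hfin, map_smul, ← hp]
  have h4 : ((1 - ‖p‖ ^ 2 : ℝ) : ℂ) • p = 0 := by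
    rw [Complex.ofReal_sub, sub_smul, ← h3]; simp
  rcases smul_eq_zero.1 h4 with h | h
  · have : 1 - ‖p‖ ^ 2 = 0 := by exact_mod_cast h
    linarith
  · exact hp0 h

end PS

end Part3

section Part4
open scoped ComplexOrder InnerProductSpace

section Cut
variable {A : Type} [NonUnitalCStarAlgebra A]
variable {L : Type} [NormedAddCommGroup L] [InnerProductSpace ℂ L] [CompleteSpace L]

/-- closed right ideals -/
structure RIdeal (V : Submodule ℂ A) : Prop where
  closed : IsClosed (V : Set A)
  mul : ∀ v ∈ V, ∀ a, v * a ∈ V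

theorem RIdeal.cfc {V : Submodule ℂ A} (hV : RIdeal V) {y : A} (hy : IsSelfAdjoint y) (hyV : y ∈ V)
    (f : ℝ → ℝ) : cfcₙ f y ∈ V := by
  let W : NonUnitalStarSubalgebra ℂ A :=
    { carrier := {a | a ∈ V ∧ star a ∈ V}
      add_mem' := fun {a b} ha hb => ⟨V.add_mem ha.1 hb.1, by rw [star_add]; exact V.add_mem ha.2 hb.2⟩
      zero_mem' := ⟨V.zero_mem, by rw [star_zero]; exact V.zero_mem⟩
      mul_mem' := fun {a b} ha hb => ⟨hV.mul _ ha.1 _, by rw [star_mul]; exact hV.mul _ hb.2 _⟩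
      smul_mem' := fun c {a} ha => ⟨V.smul_mem _ ha.1, by rw [star_smul]; exact V.smul_mem _ ha.2⟩
      star_mem' := fun {a} ha => ⟨ha.2, by rw [star_star]; exact ha.1⟩ }
  haveI : IsClosed (W : Set A) := by
    have : (W : Set A) = (V : Set A) ∩ (star ⁻¹' (V : Set A)) := rfl
    rw [this]
    exact hV.closed.inter (hV.closed.preimage continuous_star)
  have : cfcₙ f y ∈ W := cfcₙ_mem (𝕜' := ℂ) (s := W) f ⟨hyV, by rw [hy.star_eq]; exact hyV⟩
  exact this.1

theorem quasi_nonneg (u : A) : ∀ t ∈ quasispectrum ℝ (u * star u), 0 ≤ t := by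
  letI := CStarAlgebra.spectralOrder A
  letI := CStarAlgebra.spectralOrderedRing A
  exact fun t ht => quasispectrum_nonneg_of_nonneg _ (mul_star_self_nonneg u) t ht

theorem cut (σ : A →⋆ₙₐ[ℂ] (L →L[ℂ] L)) (u : A) (hu : σ u ≠ 0) : ∃ p d : A, ‖p * u‖ ≤ 1 ∧
    (p * u) * star (p * u) * d = d ∧ σ d ≠ 0 ∧ IsSelfAdjoint d ∧
    ∀ V : Submodule ℂ A, RIdeal V → u * star u ∈ V → d ∈ V ∧ p ∈ V := by
  set y := u * star u with hy
  have hysa : IsSelfAdjoint y := IsSelfAdjoint.mul_star_self u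
  have hσy : σ y = σ u * star (σ u) := by rw [hy, map_mul, map_star]
  set r := ‖σ y‖ with hr
  have hrpos : 0 < r := by
    rw [hr, hσy, CStarRing.norm_self_mul_star]
    exact mul_pos (norm_pos_iff.2 hu) (norm_pos_iff.2 hu)
  let s : ℝ → ℝ := fun t => max t (r / 2)
  have hs : Continuous s := by fun_prop
  have hspos : ∀ t, 0 < s t := fun t => lt_max_of_lt_right (by linarith)
  let θ : ℝ → ℝ := fun t => t / (s t * √(s t))
  have hθ : Continuous θ := by
    refine continuous_id.div (hs.mul hs.sqrt) fun t => ?_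
    exact (mul_pos (hspos t) (Real.sqrt_pos.2 (hspos t))).ne'
  have hθ0 : θ 0 = 0 := by simp [θ]
  let ψ : ℝ → ℝ := fun t => max 0 (t - r / 2)
  have hψ : Continuous ψ := by fun_prop
  have hψ0 : ψ 0 = 0 := by simp [ψ]; linarith
  have hp : IsSelfAdjoint (cfcₙ θ y) := cfcₙ_predicate _ _
  have hid : cfcₙ (id : ℝ → ℝ) y = y := cfcₙ_id ℝ y
  have hx : (cfcₙ θ y * u) * star (cfcₙ θ y * u) = cfcₙ (fun t => θ t * t * θ t) y := by
    rw [star_mul, hp.star_eq, mul_assoc, ← mul_assoc u, ← hy, ← mul_assoc]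
    conv_lhs => rw [← hid]
    rw [hid, cfcₙ_mul (fun t => θ t * t) θ y (by fun_prop) (by simp [hθ0]) (by fun_prop) hθ0,
      cfcₙ_mul θ (fun t => t) y (by fun_prop) hθ0 (by fun_prop) rfl]
    congr 2
    exact hid.symm
  have hφ : ∀ t, θ t * t * θ t = (t / s t) ^ 3 := by
    intro t
    have h1 := Real.mul_self_sqrt (hspos t).le
    have h2 := (Real.sqrt_pos.2 (hspos t))
    simp only [θ]
    have h3 := hspos t
    field_simp
    rw [sq, h1]
  refine ⟨cfcₙ θ y, cfcₙ ψ y, ?_, ?_, ?_, cfcₙ_predicate _ _, fun V hV hyV => ⟨hV.cfc hysa hyV _, hV.cfc hysa hyV _⟩⟩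
  · have h1 : ‖cfcₙ θ y * u‖ * ‖cfcₙ θ y * u‖ ≤ 1 := by
      rw [← CStarRing.norm_self_mul_star, hx]
      refine norm_cfcₙ_le fun t ht => ?_
      have h0 := quasi_nonneg u t ht
      rw [hφ, Real.norm_of_nonneg (by have := hspos t; positivity)]
      refine pow_le_one₀ (by have := hspos t; positivity) ?_
      rw [div_le_one (hspos t)]; exact le_max_left _ _
    nlinarith [norm_nonneg (cfcₙ θ y * u)]
  · rw [hx, ← cfcₙ_mul (fun t => θ t * t * θ t) ψ y (by fun_prop) (by simp [hθ0]) (by fun_prop) hψ0]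
    refine cfcₙ_congr fun t ht => ?_
    show θ t * t * θ t * ψ t = ψ t
    rw [hφ]
    by_cases h : t ≤ r / 2
    · have : ψ t = 0 := max_eq_left (by linarith)
      simp [this]
    · have : s t = t := max_eq_left (by linarith)
      rw [this, div_self (by linarith)]; simp
  · intro h0
    have hσsa : IsSelfAdjoint (σ y) := by rw [hσy]; exact IsSelfAdjoint.mul_star_self _
    rw [NonUnitalStarAlgHom.map_cfcₙ σ ψ y (by fun_prop) hψ0 (rep_continuous σ)] at h0
    have h1 : σ y = cfcₙ (fun t => ψ t + min t (r / 2)) (σ y) := by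
      conv_lhs => rw [← cfcₙ_id ℝ (σ y)]
      congr 1; ext t
      simp only [ψ, id]
      rcases le_total t (r / 2) with h | h
      · rw [max_eq_left (by linarith), min_eq_left h]; ring
      · rw [max_eq_right (by linarith), min_eq_right h]; ring
    rw [cfcₙ_add ψ (fun t => min t (r / 2)) (σ y) (by fun_prop) hψ0 (by fun_prop) (by simp; linarith), h0, zero_add] at h1
    have h2 : ‖σ y‖ ≤ r / 2 := by
      rw [h1]
      refine norm_cfcₙ_le fun t ht => ?_
      rw [hσy] at ht
      have := quasi_nonneg (σ u) t ht
      rw [Real.norm_of_nonneg (le_min this (by linarith))]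
      exact min_le_right _ _
    linarith

end Cut

end Part4

section Part5
open scoped ComplexOrder InnerProductSpace

section Stage
variable {A : Type} [NonUnitalCStarAlgebra A]
variable {L : Type} [NormedAddCommGroup L] [InnerProductSpace ℂ L] [CompleteSpace L]

/-- all irreducible representations are finite dimensional -/
def AllFD (A : Type) [NonUnitalCStarAlgebra A] : Prop :=
  ∀ (H : Type) [NormedAddCommGroup H] [InnerProductSpace ℂ H] [CompleteSpace H]
        (π : A →⋆ₙₐ[ℂ] (H →L[ℂ] H)), IsIrredRepC π → FiniteDimensional ℂ H

theorem unit_in_range (σ : A →⋆ₙₐ[ℂ] (L →L[ℂ] L)) {d : A} (hd : σ d ≠ 0) :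
    ∃ w : L, ‖w‖ = 1 ∧ ∀ x, x * d = d → σ x w = w := by
  obtain ⟨h, hh⟩ : ∃ h, σ d h ≠ 0 := by
    by_contra hc; push Not at hc
    exact hd (ContinuousLinearMap.ext hc)
  refine ⟨((‖σ d h‖⁻¹ : ℝ) : ℂ) • σ d h, ?_, fun x hx => ?_⟩
  · rw [norm_smul, Complex.norm_real, norm_inv, norm_norm, inv_mul_cancel₀ (norm_ne_zero_iff.2 hh)]
  · rw [map_smul, ← rep_mul, hx]

theorem sep_irr (σ : A →⋆ₙₐ[ℂ] (L →L[ℂ] L)) (c : A) (hc : σ c ≠ 0) :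
    ∃ (H : Type) (_ : NormedAddCommGroup H) (_ : InnerProductSpace ℂ H) (_ : CompleteSpace H)
      (π : A →⋆ₙₐ[ℂ] (H →L[ℂ] H)), IsIrredRepC π ∧ (∀ a, σ a = 0 → π a = 0) ∧ π c ≠ 0 := by
  obtain ⟨p, d, h1, h2, h3, h4, h5⟩ := cut σ c hc
  obtain ⟨w, hw1, hw2⟩ := unit_in_range σ h3
  obtain ⟨H, i1, i2, i3, π, hπ, hk, hn⟩ := pure_exists σ (fun _ => p * c) (fun _ => h1) (fun _ => w) (fun _ => hw1)
    (fun _ _ _ => hw2 _ h2)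
  refine ⟨H, i1, i2, i3, π, hπ, hk, fun h => hn 0 ?_⟩
  simp [map_mul, h]

structure Good (σ : A →⋆ₙₐ[ℂ] (L →L[ℂ] L)) (l : List A) (d : A) : Prop where
  nrm : ∀ v ∈ l, ‖v‖ ≤ 1 ∧ v * star v * d = d
  pw : l.Pairwise (fun v w => σ (v * star w) = 0)
  ne : σ d ≠ 0

theorem max_stage (hA : AllFD A) (σ : A →⋆ₙₐ[ℂ] (L →L[ℂ] L)) (Q : List A → A → Prop) (l₀ : List A) (d₀ : A)
    (h₀ : Good σ l₀ d₀) (hQ : Q l₀ d₀) : ∃ l d, Good σ l d ∧ Q l d ∧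
      ¬ ∃ v d', Good σ (v :: l) d' ∧ Q (v :: l) d' := by
  by_contra hcon
  push Not at hcon
  choose! nv nd hn using hcon
  let S := {s : List A × A // Good σ s.1 s.2 ∧ Q s.1 s.2}
  let nxt : S → S := fun s => ⟨(nv s.1.1 s.1.2 :: s.1.1, nd s.1.1 s.1.2), hn _ _ s.2.1 s.2.2⟩
  let st : ℕ → S := fun n => nxt^[n] ⟨(l₀, d₀), h₀, hQ⟩
  have hst : ∀ n, st (n+1) = nxt (st n) := fun n => Function.iterate_succ_apply' _ _ _
  let v : ℕ → A := fun n => nv (st n).1.1 (st n).1.2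
  have hl : ∀ n, (st (n+1)).1.1 = v n :: (st n).1.1 := fun n => by rw [hst]
  have hmem : ∀ j k, j < k → v j ∈ (st k).1.1 := by
    intro j k hjk
    induction k, hjk using Nat.le_induction with
    | base => rw [hl]; simp
    | succ k hk ih => rw [hl]; exact List.mem_cons_of_mem _ ih
  choose w hw1 hw2 using fun k => unit_in_range σ (st (k+1)).2.1.ne
  obtain ⟨H, i1, i2, i3, π, hπ, hk, hne⟩ := pure_exists σ v
    (fun j => ((st (j+1)).2.1.nrm _ (hmem j (j+1) (Nat.lt_succ_self _))).1) w hw1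
    (fun k j hjk => hw2 k _ ((st (k+1)).2.1.nrm _ (hmem j (k+1) (Nat.lt_succ_of_le hjk))).2)
  have horth : ∀ j k, j < k → π (v k * star (v j)) = 0 := by
    intro j k hjk
    have := (st (k+1)).2.1.pw
    rw [hl] at this
    exact hk _ ((List.pairwise_cons.1 this).1 _ (hmem j k hjk))
  have hex : ∀ j, ∃ h, π (star (v j)) h ≠ 0 := by
    intro j
    by_contra hc; push Not at hc
    refine hne j ?_
    rw [map_mul, (ContinuousLinearMap.ext hc : π (star (v j)) = 0)]; simp
  choose h hh using hex
  have horth' : Pairwise fun i j => ⟪π (star (v i)) (h i), π (star (v j)) (h j)⟫_ℂ = 0 := by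
    have key : ∀ j k, j < k → ⟪π (star (v k)) (h k), π (star (v j)) (h j)⟫_ℂ = 0 := by
      intro j k hjk
      rw [rep_inner, star_star, ← rep_mul, horth j k hjk]; simp
    intro i j hij
    rcases lt_or_gt_of_ne hij with h' | h'
    · exact inner_eq_zero_symm.1 (key _ _ h')
    · exact key _ _ h'
  have hli := linearIndependent_of_ne_zero_of_inner_eq_zero hh horth'
  haveI := hA H π hπ
  have := hli.finite
  exact not_finite ℕ

end Stage

end Part5

section Part6
open scoped ComplexOrder InnerProductSpace

section Abel
variable {A : Type} [NonUnitalCStarAlgebra A]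
variable {L : Type} [NormedAddCommGroup L] [InnerProductSpace ℂ L] [CompleteSpace L]

theorem sa_inner {T : L →L[ℂ] L} (hT : IsSelfAdjoint T) (x y : L) : ⟪T x, y⟫_ℂ = ⟪x, T y⟫_ℂ := by
  have := ContinuousLinearMap.isSelfAdjoint_iff_isSymmetric.1 hT
  exact this x y

theorem cfc_eigen {B : L →L[ℂ] L} (hB : IsSelfAdjoint B) {v : L} {lam : ℝ} (hv : B v = (lam : ℂ) • v)
    {f : ℝ → ℝ} (hf : Continuous f) (hf0 : f 0 = 0) (K : ℝ) (hK : ∀ t, |f t - f lam| ≤ K * |t - lam|) :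
    cfcₙ f B v = ((f lam : ℝ) : ℂ) • v := by
  rw [cfcₙ_eq_cfc (hf := by fun_prop) (hf0 := hf0)]
  let g : ℝ → ℝ := fun t => f t - f lam
  let q : ℝ → ℝ := fun t => √((K * (t - lam)) ^ 2 - g t ^ 2)
  have hg : Continuous g := by fun_prop
  have hq : Continuous q := by fun_prop
  have hnn : ∀ t, 0 ≤ (K * (t - lam)) ^ 2 - g t ^ 2 := by
    intro t
    have h1 := hK t
    have h2 : |g t| ≤ |K * (t - lam)| := by
      rw [abs_mul]
      exact h1.trans (mul_le_mul_of_nonneg_right (le_abs_self K) (abs_nonneg _))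
    have := sq_le_sq.2 h2
    linarith
  have hG : IsSelfAdjoint (cfc g B) := cfc_predicate _ _
  have hQ : IsSelfAdjoint (cfc q B) := cfc_predicate _ _
  have hM : cfc (fun t : ℝ => K * (t - lam)) B = K • (B - algebraMap ℝ _ lam) := by
    rw [cfc_const_mul K (fun t => t - lam) B (by fun_prop), cfc_sub (fun t : ℝ => t) (fun _ => lam) B (by fun_prop) (by fun_prop), cfc_const lam B, cfc_id' ℝ B]
  have hsum : cfc g B * cfc g B + cfc q B * cfc q B = cfc (fun t : ℝ => K * (t - lam)) B * cfc (fun t : ℝ => K * (t - lam)) B := by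
    rw [← cfc_mul g g B (by fun_prop) (by fun_prop), ← cfc_mul q q B (by fun_prop) (by fun_prop), ← cfc_mul (fun t : ℝ => K * (t - lam)) _ B (by fun_prop) (by fun_prop),
      ← cfc_add B (fun t => g t * g t) (fun t => q t * q t) (by fun_prop) (by fun_prop)]
    congr 1; ext t
    have := Real.mul_self_sqrt (hnn t)
    simp only [q]
    rw [this]; ring
  have hMv : cfc (fun t : ℝ => K * (t - lam)) B v = 0 := by
    rw [hM]
    have : (algebraMap ℝ (L →L[ℂ] L) lam) v = (lam : ℂ) • v := by
      rw [Algebra.algebraMap_eq_smul_one]; simp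
    simp [this, hv]
  have h1 : ⟪v, (cfc g B * cfc g B + cfc q B * cfc q B) v⟫_ℂ = 0 := by
    rw [hsum]; simp [hMv]
  have h2 : ‖cfc g B v‖ ^ 2 + ‖cfc q B v‖ ^ 2 = 0 := by
    simp only [ContinuousLinearMap.add_apply, ContinuousLinearMap.mul_apply, inner_add_right] at h1
    rw [← sa_inner hG, ← sa_inner hQ, inner_self_eq_norm_sq_to_K, inner_self_eq_norm_sq_to_K] at h1
    have h1' : ((‖cfc g B v‖ ^ 2 + ‖cfc q B v‖ ^ 2 : ℝ) : ℂ) = 0 := by push_cast; exact h1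
    exact Complex.ofReal_eq_zero.1 h1'
  have h3 : cfc g B v = 0 := by
    have : ‖cfc g B v‖ ^ 2 = 0 := by nlinarith [sq_nonneg ‖cfc g B v‖, sq_nonneg ‖cfc q B v‖]
    simpa using this
  have h4 : cfc g B = cfc f B - algebraMap ℝ _ (f lam) := by
    rw [cfc_sub f (fun _ => f lam) B (by fun_prop) (by fun_prop), cfc_const _ B]
  rw [h4] at h3
  have : (algebraMap ℝ (L →L[ℂ] L) (f lam)) v = ((f lam : ℝ) : ℂ) • v := by
    rw [Algebra.algebraMap_eq_smul_one]; simp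
  rw [ContinuousLinearMap.sub_apply, this, sub_eq_zero] at h3
  exact h3

theorem eig_pair [FiniteDimensional ℂ L] {B C : L →L[ℂ] L} (hB : IsSelfAdjoint B) (hC : IsSelfAdjoint C)
    (hBC : B * C - C * B ≠ 0) : ∃ (v w : L) (lam mu : ℝ), B v = (lam : ℂ) • v ∧ B w = (mu : ℂ) • w ∧ lam ≠ 0 ∧
      lam ≠ mu ∧ ⟪w, C v⟫_ℂ ≠ 0 := by
  have hsym : (B : L →ₗ[ℂ] L).IsSymmetric := ContinuousLinearMap.isSelfAdjoint_iff_isSymmetric.1 hB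
  let e := hsym.eigenvectorBasis rfl
  let ev := hsym.eigenvalues rfl
  have he : ∀ i, B (e i) = (ev i : ℂ) • e i := hsym.apply_eigenvectorBasis rfl
  by_contra hcon
  have key : ∀ i j, ev i ≠ ev j → ⟪e i, C (e j)⟫_ℂ = 0 := by
    intro i j hij
    by_contra h
    by_cases hj : ev j = 0
    · refine hcon ⟨e i, e j, ev i, ev j, he i, he j, fun h' => hij (h'.trans hj.symm), hij, ?_⟩
      rw [← sa_inner hC]
      exact fun h' => h (inner_eq_zero_symm.1 h')
    · exact hcon ⟨e j, e i, ev j, ev i, he j, he i, hj, hij.symm, h⟩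
  refine hBC (ContinuousLinearMap.ext fun x => ?_)
  have : ((B * C - C * B : L →L[ℂ] L) : L →ₗ[ℂ] L) = 0 := by
    refine e.toBasis.ext fun j => ?_
    simp only [OrthonormalBasis.coe_toBasis, LinearMap.zero_apply, ContinuousLinearMap.coe_coe]
    refine e.repr.injective ?_
    ext i
    rw [e.repr_apply_apply, e.repr_apply_apply]
    simp only [inner_zero_right, ContinuousLinearMap.sub_apply, ContinuousLinearMap.mul_apply]
    rw [inner_sub_right, ← sa_inner hB, he, he, map_smul, inner_smul_left, inner_smul_right, Complex.conj_ofReal, ← sub_mul]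
    by_cases h : ev i = ev j
    · rw [h]; simp
    · rw [key i j h, mul_zero]
  exact congrArg (fun T : L →ₗ[ℂ] L => T x) this

theorem bump_lip (a : ℝ) : LipschitzWith 1 (fun t : ℝ => |t - a|) := by
  refine LipschitzWith.of_dist_le_mul fun x y => ?_
  simp only [Real.dist_eq, NNReal.coe_one, one_mul]
  refine (abs_abs_sub_abs_le_abs_sub _ _).trans ?_
  simp

theorem nilp_exists (hA : AllFD A) (σ : A →⋆ₙₐ[ℂ] (L →L[ℂ] L)) {b c : A} (hb : IsSelfAdjoint b) (hc : IsSelfAdjoint c)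
    (hbc : σ (b * c - c * b) ≠ 0) : ∃ t : A, t * t = 0 ∧ σ t ≠ 0 ∧
      ∀ V : Submodule ℂ A, RIdeal V → b ∈ V → c ∈ V → t ∈ V ∧ star t ∈ V := by
  obtain ⟨H, i1, i2, i3, ρ, hρ, hk, hn⟩ := sep_irr σ _ hbc
  haveI := hA H ρ hρ
  have hB : IsSelfAdjoint (ρ b) := hb.map ρ
  have hC : IsSelfAdjoint (ρ c) := hc.map ρ
  obtain ⟨v, w, lam, mu, hv, hw, hl0, hlm, hip⟩ := eig_pair hB hC (by rw [← map_mul, ← map_mul, ← map_sub]; exact hn)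
  set δ := min |lam| |lam - mu| / 2 with hδ
  have hδpos : 0 < δ := by
    have h1 := abs_pos.2 hl0
    have h2 := abs_pos.2 (sub_ne_zero.2 hlm)
    have := lt_min h1 h2
    linarith
  have hd1 : 2 * δ ≤ |lam| := by rw [hδ]; linarith [min_le_left |lam| |lam - mu|]
  have hd2 : 2 * δ ≤ |lam - mu| := by rw [hδ]; linarith [min_le_right |lam| |lam - mu|]
  let φ : ℝ → ℝ := fun t => max 0 (1 - |t - lam| / δ)
  let χ : ℝ → ℝ := fun t => min 1 (max 0 (2 - |t - lam| / δ))
  have hφ : Continuous φ := by fun_prop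
  have hχ : Continuous χ := by fun_prop
  have hφ0 : φ 0 = 0 := by
    refine max_eq_left ?_
    rw [zero_sub, abs_neg, sub_nonpos, le_div_iff₀ hδpos]; linarith
  have hχz : ∀ t, 2 * δ ≤ |t - lam| → χ t = 0 := by
    intro t ht
    have : max 0 (2 - |t - lam| / δ) = 0 := by
      refine max_eq_left ?_
      rw [sub_nonpos, le_div_iff₀ hδpos]; linarith
    simp only [χ, this]; norm_num
  have hχ0 : χ 0 = 0 := hχz 0 (by simpa using hd1)
  have hχm : χ mu = 0 := hχz mu (by rw [abs_sub_comm]; exact hd2)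
  have hφl : φ lam = 1 := by simp [φ]
  have hφχ : ∀ t, φ t * χ t = φ t := by
    intro t
    by_cases h : |t - lam| ≤ δ
    · have h1 : |t - lam| / δ ≤ 1 := by rw [div_le_one hδpos]; exact h
      have : χ t = 1 := by
        simp only [χ]
        rw [max_eq_right (by linarith), min_eq_left (by linarith)]
      rw [this, mul_one]
    · have h1 : 1 ≤ |t - lam| / δ := by rw [one_le_div hδpos]; linarith
      have : φ t = 0 := max_eq_left (by linarith)
      rw [this, zero_mul]
  have hlip : ∀ s t : ℝ, |(|t - lam| / δ) - (|s - lam| / δ)| ≤ δ⁻¹ * |t - s| := by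
    intro s t
    rw [← sub_div, abs_div, abs_of_pos hδpos, div_eq_inv_mul]
    refine mul_le_mul_of_nonneg_left ?_ (by positivity)
    refine (abs_abs_sub_abs_le_abs_sub _ _).trans ?_
    simp
  have hφlip : ∀ s t, |φ t - φ s| ≤ δ⁻¹ * |t - s| := by
    intro s t
    refine le_trans ?_ (hlip s t)
    simp only [φ]
    refine (abs_max_sub_max_le_max _ _ _ _).trans ?_
    rw [sub_self, abs_zero]
    refine max_le (abs_nonneg _) (le_of_eq ?_)
    rw [← abs_neg]; congr 1; ring
  have hχlip : ∀ s t, |χ t - χ s| ≤ δ⁻¹ * |t - s| := by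
    intro s t
    refine le_trans ?_ (hlip s t)
    simp only [χ]
    refine (abs_min_sub_min_le_max _ _ _ _).trans ?_
    rw [sub_self, abs_zero]
    refine max_le (abs_nonneg _) ?_
    refine (abs_max_sub_max_le_max _ _ _ _).trans ?_
    rw [sub_self, abs_zero]
    refine max_le (abs_nonneg _) (le_of_eq ?_)
    rw [← abs_neg]; congr 1; ring
  have hΦsa : IsSelfAdjoint (cfcₙ φ b) := cfcₙ_predicate _ _
  have hXsa : IsSelfAdjoint (cfcₙ χ b) := cfcₙ_predicate _ _
  have hΦX : cfcₙ φ b * cfcₙ χ b = cfcₙ φ b := by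
    rw [← cfcₙ_mul φ χ b (by fun_prop) hφ0 (by fun_prop) hχ0]
    exact cfcₙ_congr fun t _ => hφχ t
  refine ⟨(c - cfcₙ χ b * c) * cfcₙ φ b, ?_, ?_, fun V hV hbV hcV => ⟨?_, ?_⟩⟩
  · have : cfcₙ φ b * (c - cfcₙ χ b * c) = 0 := by
      rw [mul_sub, ← mul_assoc, hΦX, sub_self]
    rw [mul_assoc, ← mul_assoc (cfcₙ φ b), this]; simp
  · intro h0
    have h1 := hk _ h0
    have h2 : ⟪w, ρ ((c - cfcₙ χ b * c) * cfcₙ φ b) v⟫_ℂ = 0 := by rw [h1]; simp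
    rw [rep_mul, NonUnitalStarAlgHom.map_cfcₙ ρ φ b (by fun_prop) hφ0 (rep_continuous ρ),
      cfc_eigen hB hv hφ hφ0 δ⁻¹ (hφlip lam), hφl, Complex.ofReal_one, one_smul, map_sub, ContinuousLinearMap.sub_apply,
      rep_mul, inner_sub_right, NonUnitalStarAlgHom.map_cfcₙ ρ χ b (by fun_prop) hχ0 (rep_continuous ρ),
      ← sa_inner (cfcₙ_predicate _ _), cfc_eigen hB hw hχ hχ0 δ⁻¹ (hχlip mu), hχm] at h2
    simp at h2
    exact hip h2
  · rw [sub_mul]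
    exact V.sub_mem (hV.mul _ hcV _) (by rw [mul_assoc]; exact hV.mul _ (hV.cfc hb hbV _) _)
  · rw [star_mul, hΦsa.star_eq]
    exact hV.mul _ (hV.cfc hb hbV _) _

end Abel

end Part6

section Part7
open scoped ComplexOrder InnerProductSpace

section Struct
variable {A : Type} [NonUnitalCStarAlgebra A]
variable {L : Type} [NormedAddCommGroup L] [InnerProductSpace ℂ L] [CompleteSpace L]

theorem rideal_zero (x : A) : ∃ V : Submodule ℂ A, RIdeal V ∧ ∀ a, a ∈ V ↔ x * a = 0 := by
  refine ⟨LinearMap.ker (LinearMap.mulLeft ℂ x), ⟨?_, ?_⟩, fun a => ?_⟩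
  · have : ((LinearMap.ker (LinearMap.mulLeft ℂ x) : Submodule ℂ A) : Set A) = {a | x * a = 0} := by ext; simp
    rw [this]
    exact isClosed_eq (by fun_prop) (by fun_prop)
  · intro v hv a
    simp only [LinearMap.mem_ker, LinearMap.mulLeft_apply] at hv ⊢
    rw [← mul_assoc, hv, zero_mul]
  · simp

theorem rideal_fix (x : A) : ∃ V : Submodule ℂ A, RIdeal V ∧ ∀ a, a ∈ V ↔ x * a = a := by
  refine ⟨LinearMap.ker (LinearMap.mulLeft ℂ x - LinearMap.id), ⟨?_, ?_⟩, fun a => ?_⟩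
  · have : ((LinearMap.ker (LinearMap.mulLeft ℂ x - LinearMap.id) : Submodule ℂ A) : Set A) = {a | x * a = a} := by
      ext; simp [sub_eq_zero]
    rw [this]
    exact isClosed_eq (by fun_prop) (by fun_prop)
  · intro v hv a
    simp only [LinearMap.mem_ker, LinearMap.mulLeft_apply, LinearMap.sub_apply, LinearMap.id_apply, sub_eq_zero] at hv ⊢
    rw [← mul_assoc, hv]
  · simp [sub_eq_zero]

theorem sigma_sq (σ : A →⋆ₙₐ[ℂ] (L →L[ℂ] L)) {a : A} (h : σ a ≠ 0) : σ (a * star a) ≠ 0 := by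
  rw [map_mul, map_star]
  intro h0
  exact h ((CStarRing.mul_star_self_eq_zero_iff _).1 h0)

theorem abelian_exists (hA : AllFD A) (σ : A →⋆ₙₐ[ℂ] (L →L[ℂ] L)) (hσ : σ ≠ 0) :
    ∃ d : A, IsSelfAdjoint d ∧ σ d ≠ 0 ∧ ∀ a b, σ ((d * a * d) * (d * b * d)) = σ ((d * b * d) * (d * a * d)) := by
  obtain ⟨a₀, ha₀⟩ : ∃ a, σ a ≠ 0 := by
    by_contra h; push Not at h
    exact hσ (by ext1 a; simpa using h a)
  obtain ⟨l, d, hg, ⟨hd, hl⟩, hmax⟩ := max_stage hA σ (fun l d => IsSelfAdjoint d ∧ ∀ v ∈ l, v * d = 0) [] (a₀ * star a₀)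
    ⟨by simp, by simp, sigma_sq σ ha₀⟩ ⟨IsSelfAdjoint.mul_star_self _, by simp⟩
  refine ⟨d, hd, hg.ne, ?_⟩
  have hsa : ∀ a b, IsSelfAdjoint a → IsSelfAdjoint b →
      σ ((d * a * d) * (d * b * d)) = σ ((d * b * d) * (d * a * d)) := by
    intro a b ha hb
    by_contra hne
    have hb' : IsSelfAdjoint (d * a * d) := by
      rw [IsSelfAdjoint, star_mul, star_mul, hd.star_eq, ha.star_eq, mul_assoc]
    have hc' : IsSelfAdjoint (d * b * d) := by
      rw [IsSelfAdjoint, star_mul, star_mul, hd.star_eq, hb.star_eq, mul_assoc]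
    obtain ⟨t, ht2, ht, hV⟩ := nilp_exists hA σ hb' hc' (by rw [map_sub, sub_ne_zero]; exact hne)
    have hV' : ∀ V : Submodule ℂ A, RIdeal V → d ∈ V → t ∈ V ∧ star t ∈ V := fun V hVR hdV =>
      hV V hVR (by rw [mul_assoc]; exact hVR.mul _ hdV _) (by rw [mul_assoc]; exact hVR.mul _ hdV _)
    have hu : σ (star t) ≠ 0 := by rw [map_star]; simpa using ht
    obtain ⟨p, d', h1, h2, h3, h4, h5⟩ := cut σ (star t) hu
    have hz : ∀ w ∈ l, w * t = 0 ∧ w * d' = 0 := by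
      intro w hw
      obtain ⟨V, hVR, hVm⟩ := rideal_zero w
      have := hV' V hVR ((hVm d).2 (hl w hw))
      exact ⟨(hVm t).1 this.1, (hVm d').1 (h5 V hVR (hVR.mul _ this.2 _)).1⟩
    refine hmax ⟨p * star t, d', ⟨?_, ?_, h3⟩, h4, ?_⟩
    · intro v hv
      rcases List.mem_cons.1 hv with rfl | hv
      · exact ⟨h1, h2⟩
      · refine ⟨(hg.nrm v hv).1, ?_⟩
        obtain ⟨V, hVR, hVm⟩ := rideal_fix (v * star v)
        have := hV' V hVR ((hVm d).2 (hg.nrm v hv).2)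
        exact (hVm d').1 (h5 V hVR (hVR.mul _ this.2 _)).1
    · refine List.pairwise_cons.2 ⟨fun w hw => ?_, hg.pw⟩
      rw [mul_assoc, ← star_mul, (hz w hw).1]; simp
    · intro v hv
      rcases List.mem_cons.1 hv with rfl | hv
      · obtain ⟨V, hVR, hVm⟩ := rideal_zero (star t)
        have h0 : star t * star t = 0 := by rw [← star_mul, ht2, star_zero]
        have := (h5 V hVR ((hVm _).2 (by rw [← mul_assoc, h0, zero_mul]))).1
        rw [mul_assoc, (hVm d').1 this, mul_zero]
      · exact (hz v hv).2
  have hsa2 : ∀ a b, IsSelfAdjoint a → 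
      σ ((d * a * d) * (d * b * d)) = σ ((d * b * d) * (d * a * d)) := by
    intro a b ha
    rw [← realPart_add_I_smul_imaginaryPart b]
    have h1 := hsa a (realPart b) ha (realPart b).2
    have h2 := hsa a (imaginaryPart b) ha (imaginaryPart b).2
    simp only [mul_add, add_mul, map_add, mul_smul_comm, smul_mul_assoc, map_smul]
    rw [h1, h2]
  intro a b
  rw [← realPart_add_I_smul_imaginaryPart a]
  have h1 := hsa2 (realPart a) b (realPart a).2
  have h2 := hsa2 (imaginaryPart a) b (imaginaryPart a).2
  simp only [mul_add, add_mul, map_add, mul_smul_comm, smul_mul_assoc, map_smul]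
  rw [h1, h2]

open Classical in
theorem structure_thm (hA : AllFD A) (σ : A →⋆ₙₐ[ℂ] (L →L[ℂ] L)) (hσ : σ ≠ 0) :
    ∃ (R : Submodule ℂ A) (d : A) (s : Finset A), RIdeal R ∧
      (∀ u ∈ R, ∀ v ∈ R, ∀ u' ∈ R, ∀ v' ∈ R, σ ((u * star v) * (u' * star v')) = σ ((u' * star v') * (u * star v))) ∧
      d ∈ R ∧ (∀ v ∈ s, v ∈ R) ∧ σ d ≠ 0 ∧ ∀ a, σ (d * a) = ∑ v ∈ s, σ (d * a * star v * v) := by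
  obtain ⟨x, hx, hx0, hcomm⟩ := abelian_exists hA σ hσ
  let R : Submodule ℂ A := (LinearMap.range (LinearMap.mulLeft ℂ x)).topologicalClosure
  have hind : ∀ P : A → Prop, IsClosed {u | P u} → (∀ a, P (x * a)) → ∀ u ∈ R, P u := by
    intro P hP h u hu
    have h1 : u ∈ closure ((LinearMap.range (LinearMap.mulLeft ℂ x) : Submodule ℂ A) : Set A) := hu
    refine closure_minimal ?_ hP h1
    rintro _ ⟨a, rfl⟩
    exact h a
  have hR : RIdeal R := by
    refine ⟨Submodule.isClosed_topologicalClosure _, fun v hv a => ?_⟩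
    refine hind (fun v => v * a ∈ R) ?_ ?_ v hv
    · exact (Submodule.isClosed_topologicalClosure _).preimage (by fun_prop : Continuous fun v : A => v * a)
    · intro b
      refine Submodule.le_topologicalClosure _ ⟨b * a, ?_⟩
      simp [mul_assoc]
  have hσc := rep_continuous σ
  have hRc : ∀ u ∈ R, ∀ v ∈ R, ∀ u' ∈ R, ∀ v' ∈ R, σ ((u * star v) * (u' * star v')) = σ ((u' * star v') * (u * star v)) := by
    intro u hu v hv u' hu' v' hv'
    refine hind (fun u => σ ((u * star v) * (u' * star v')) = σ ((u' * star v') * (u * star v))) (isClosed_eq (by fun_prop) (by fun_prop)) ?_ u hu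
    intro a
    refine hind (fun v => σ ((x * a * star v) * (u' * star v')) = σ ((u' * star v') * (x * a * star v))) (isClosed_eq (by fun_prop) (by fun_prop)) ?_ v hv
    intro b
    refine hind (fun u' => σ ((x * a * star (x * b)) * (u' * star v')) = σ ((u' * star v') * (x * a * star (x * b)))) (isClosed_eq (by fun_prop) (by fun_prop)) ?_ u' hu'
    intro a'
    refine hind (fun v' => σ ((x * a * star (x * b)) * (x * a' * star v')) = σ ((x * a' * star v') * (x * a * star (x * b)))) (isClosed_eq (by fun_prop) (by fun_prop)) ?_ v' hv'
    intro b'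
    have := hcomm (a * star b) (a' * star b')
    simpa only [star_mul, hx.star_eq, mul_assoc] using this
  have hxx : x * x ∈ R := Submodule.le_topologicalClosure _ ⟨x, by simp⟩
  have hxx0 : σ (x * x) ≠ 0 := by
    have := sigma_sq σ hx0
    rwa [hx.star_eq] at this
  obtain ⟨l, d, hg, ⟨hlR, hdR⟩, hmax⟩ := max_stage hA σ (fun l d => (∀ v ∈ l, v ∈ R) ∧ d ∈ R) [] (x * x)
    ⟨by simp, by simp, hxx0⟩ ⟨by simp, hxx⟩
  refine ⟨R, d, l.toFinset, hR, hRc, hdR, by simpa using hlR, hg.ne, fun a => ?_⟩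
  rw [← map_sum, ← sub_eq_zero, ← map_sub]
  set u := d * a - ∑ v ∈ l.toFinset, d * a * star v * v with hu
  by_contra hne
  obtain ⟨p, d', h1, h2, h3, h4, h5⟩ := cut σ u hne
  have hsymm : ∀ v ∈ l, ∀ w ∈ l, v ≠ w → σ (v * star w) = 0 := by
    have hS : Symmetric (fun v w : A => σ (v * star w) = 0) := by
      intro v w h
      have : σ (w * star v) = star (σ (v * star w)) := by rw [← map_star]; simp
      show σ (w * star v) = 0
      rw [this, h, star_zero]
    haveI : Std.Symm (fun v w : A => σ (v * star w) = 0) := ⟨fun a b h => hS h⟩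
    exact fun v hv w hw hvw => hg.pw.forall hv hw hvw
  have hfix : ∀ w ∈ l, w * star w * u = u := by
    intro w hw
    rw [hu, mul_sub, Finset.mul_sum]
    simp only [← mul_assoc]
    rw [(hg.nrm w hw).2]
  have horth : ∀ w ∈ l, σ (u * star w) = 0 := by
    intro w hw
    rw [hu, sub_mul, Finset.sum_mul, map_sub, map_sum, Finset.sum_eq_single w, sub_eq_zero]
    · have := hRc (d * a) (hR.mul _ hdR _) w (hlR w hw) w (hlR w hw) w (hlR w hw)
      rw [← mul_assoc (w * star w), ← mul_assoc (w * star w), (hg.nrm w hw).2] at this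
      rw [← this]; simp only [mul_assoc]
    · intro v hv hvw
      rw [mul_assoc, map_mul, hsymm v (by simpa using hv) w hw hvw, mul_zero]
    · intro h; exact absurd (by simpa using hw) h
  have huR : u ∈ R := by
    refine R.sub_mem (hR.mul _ hdR _) (R.sum_mem fun v _ => ?_)
    rw [mul_assoc, mul_assoc]; exact hR.mul _ hdR _
  obtain ⟨hd'R, hpR⟩ := h5 R hR (hR.mul _ huR _)
  refine hmax ⟨p * u, d', ⟨?_, ?_, h3⟩, ?_, hd'R⟩
  · intro v hv
    rcases List.mem_cons.1 hv with rfl | hv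
    · exact ⟨h1, h2⟩
    · refine ⟨(hg.nrm v hv).1, ?_⟩
      obtain ⟨V, hVR, hVm⟩ := rideal_fix (v * star v)
      exact (hVm d').1 (h5 V hVR (hVR.mul _ ((hVm u).2 (hfix v hv)) _)).1
  · refine List.pairwise_cons.2 ⟨fun w hw => ?_, hg.pw⟩
    rw [mul_assoc, map_mul, horth w hw, mul_zero]
  · intro v hv
    rcases List.mem_cons.1 hv with rfl | hv
    · exact hR.mul _ hpR _
    · exact hlR v hv

end Struct

end Part7

section Part8
open scoped ComplexOrder InnerProductSpace

section Cyc
variable {E : Type} [NormedAddCommGroup E] [InnerProductSpace ℂ E] [CompleteSpace E]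
open ContinuousLinearMap

theorem star_inner (T : E →L[ℂ] E) (x y : E) : ⟪star T x, y⟫_ℂ = ⟪x, T y⟫_ℂ := by
  rw [star_eq_adjoint, adjoint_inner_left]

theorem star_inner' (T : E →L[ℂ] E) (x y : E) : ⟪T x, y⟫_ℂ = ⟪x, star T y⟫_ℂ := by
  rw [star_eq_adjoint, adjoint_inner_right]

theorem normal_norm {a : E →L[ℂ] E} (h : a * star a = star a * a) (x : E) : ‖star a x‖ = ‖a x‖ := by
  have : ⟪star a x, star a x⟫_ℂ = ⟪a x, a x⟫_ℂ := by
    rw [star_inner, star_inner']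
    exact congrArg (fun T : E →L[ℂ] E => ⟪x, T x⟫_ℂ) h
  rw [inner_self_eq_norm_sq_to_K, inner_self_eq_norm_sq_to_K] at this
  have h2 : ‖star a x‖ ^ 2 = ‖a x‖ ^ 2 := by
    have h3 : ((‖star a x‖ ^ 2 : ℝ) : ℂ) = ((‖a x‖ ^ 2 : ℝ) : ℂ) := by push_cast; exact this
    exact Complex.ofReal_injective h3
  exact (sq_eq_sq₀ (norm_nonneg _) (norm_nonneg _)).1 h2

theorem cyc_comm (D : Set (E →L[ℂ] E)) (hstar : ∀ c ∈ D, star c ∈ D) (hsub : ∀ c ∈ D, ∀ c' ∈ D, c - c' ∈ D)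
    (hcomm : ∀ c ∈ D, ∀ c' ∈ D, c * c' = c' * c) (Ξ : E) (K : Submodule ℂ E) [K.HasOrthogonalProjection]
    (hK : ∀ x ∈ K, x ∈ closure ((fun c : E →L[ℂ] E => c Ξ) '' D)) {S T : E →L[ℂ] E}
    (hS : ∀ c ∈ D, S * c = c * S) (hT : ∀ c ∈ D, T * c = c * T)
    (hSK : ∀ x, S x ∈ K) (hSK' : ∀ x, star S x ∈ K) (hTK : ∀ x, T x ∈ K) (hTK' : ∀ x, star T x ∈ K)
    (hKD : ∀ c ∈ D, c Ξ ∈ K) :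
    S * T = T * S := by
  have happ : ∀ {a b c d : E →L[ℂ] E}, a * b = c * d → ∀ x, a (b x) = c (d x) := fun h x =>
    congrArg (fun T : E →L[ℂ] E => T x) h
  have hzero : ∀ v ∈ K, (∀ c ∈ D, ⟪v, c Ξ⟫_ℂ = 0) → v = 0 := by
    intro v hv h
    have hcl : IsClosed {x | ⟪v, x⟫_ℂ = 0} := isClosed_eq (by fun_prop) (by fun_prop)
    have : closure ((fun c : E →L[ℂ] E => c Ξ) '' D) ⊆ {x | ⟪v, x⟫_ℂ = 0} := by
      refine closure_minimal ?_ hcl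
      rintro _ ⟨c, hc, rfl⟩
      exact h c hc
    exact inner_self_eq_zero.1 (this (hK v hv))
  obtain ⟨s, hs, hlim⟩ := mem_closure_iff_seq_limit.1 (hK _ (hSK Ξ))
  choose a haD has using hs
  have has' : ∀ j, s j = a j Ξ := fun j => (has j).symm
  have hlim1 : Filter.Tendsto (fun j => a j Ξ) Filter.atTop (nhds (S Ξ)) := by
    refine hlim.congr has'
  have hcau : CauchySeq (fun j => star (a j) Ξ) := by
    have h1 := hlim1.cauchySeq
    rw [Metric.cauchySeq_iff] at h1 ⊢
    intro ε hε
    obtain ⟨N, hN⟩ := h1 ε hε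
    refine ⟨N, fun m hm n hn => ?_⟩
    have := hN m hm n hn
    rw [dist_eq_norm, ← ContinuousLinearMap.sub_apply] at this ⊢
    rw [← star_sub, normal_norm (hcomm _ (hsub _ (haD m) _ (haD n)) _ (hstar _ (hsub _ (haD m) _ (haD n))))]
    exact this
  obtain ⟨ζ, hζ⟩ := cauchySeq_tendsto_of_complete hcau
  have hKcl : IsClosed (K : Set E) := by
    have := Submodule.isClosed_orthogonal Kᗮ
    rwa [Submodule.orthogonal_orthogonal] at this
  have hζK : ζ ∈ K := hKcl.mem_of_tendsto hζ (Filter.Eventually.of_forall fun j => hKD _ (hstar _ (haD j)))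
  have hζS : ζ = star S Ξ := by
    rw [← sub_eq_zero]
    refine hzero _ (K.sub_mem hζK (hSK' _)) fun c hc => ?_
    rw [inner_sub_left, sub_eq_zero]
    have h1 : Filter.Tendsto (fun j => ⟪star (a j) Ξ, c Ξ⟫_ℂ) Filter.atTop (nhds ⟪ζ, c Ξ⟫_ℂ) :=
      hζ.inner tendsto_const_nhds
    have h2 : Filter.Tendsto (fun j => ⟪star (a j) Ξ, c Ξ⟫_ℂ) Filter.atTop (nhds ⟪star S Ξ, c Ξ⟫_ℂ) := by
      have h3 : ∀ j, ⟪star (a j) Ξ, c Ξ⟫_ℂ = ⟪Ξ, c (a j Ξ)⟫_ℂ := fun j => by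
        rw [star_inner, happ (hcomm _ (haD j) _ hc)]
      simp only [h3]
      rw [star_inner, happ (hS c hc)]
      exact tendsto_const_nhds.inner ((c.continuous.tendsto _).comp hlim1)
    exact tendsto_nhds_unique h1 h2
  have hmain : ∀ c ∈ D, S (T (c Ξ)) = T (S (c Ξ)) := by
    intro c hc
    rw [← sub_eq_zero]
    refine hzero _ (K.sub_mem (hSK _) (hTK _)) fun c' hc' => ?_
    rw [inner_sub_left, sub_eq_zero]
    have hSs : star S * c' = c' * star S := by
      have := hS _ (hstar _ hc')
      have := congrArg star this
      simpa using this.symm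
    have h1 : Filter.Tendsto (fun j => ⟪T (c Ξ), c' (star (a j) Ξ)⟫_ℂ) Filter.atTop (nhds ⟪S (T (c Ξ)), c' Ξ⟫_ℂ) := by
      rw [star_inner', happ hSs, ← hζS]
      exact tendsto_const_nhds.inner ((c'.continuous.tendsto _).comp hζ)
    have h2 : Filter.Tendsto (fun j => ⟪T (c Ξ), c' (star (a j) Ξ)⟫_ℂ) Filter.atTop (nhds ⟪T (S (c Ξ)), c' Ξ⟫_ℂ) := by
      have h3 : ∀ j, ⟪T (c Ξ), c' (star (a j) Ξ)⟫_ℂ = ⟪T (c (a j Ξ)), c' Ξ⟫_ℂ := fun j => by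
        rw [happ (hcomm _ hc' _ (hstar _ (haD j))), ← star_inner', ← happ (hT _ (haD j)), happ (hcomm _ (haD j) _ hc)]
      simp only [h3]
      rw [happ (hS c hc)]
      exact ((T.continuous.comp c.continuous).tendsto _ |>.comp hlim1).inner tendsto_const_nhds
    exact tendsto_nhds_unique h1 h2
  have hmainK : ∀ x ∈ K, S (T x) = T (S x) := by
    intro x hx
    have hcl : IsClosed {x | S (T x) = T (S x)} := isClosed_eq (by fun_prop) (by fun_prop)
    refine closure_minimal ?_ hcl (hK x hx)
    rintro _ ⟨c, hc, rfl⟩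
    exact hmain c hc
  have hperp : ∀ (U : E →L[ℂ] E), (∀ x, star U x ∈ K) → ∀ x ∈ Kᗮ, U x = 0 := by
    intro U hU x hx
    refine inner_self_eq_zero (𝕜 := ℂ).1 ?_
    rw [star_inner']
    exact Submodule.inner_left_of_mem_orthogonal (hU _) hx
  ext x
  have hx := K.starProjection_add_starProjection_orthogonal x
  have h1 := hmainK _ (K.starProjection_apply_mem x)
  have h2 : Kᗮ.starProjection x ∈ Kᗮ := Submodule.starProjection_apply_mem _ _
  rw [← hx]
  simp only [ContinuousLinearMap.mul_apply, map_add, hperp S hSK' _ h2, hperp T hTK' _ h2, h1, map_zero]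

end Cyc

section Std
open Matrix

theorem std_id_comm {R : Type} [CommRing R] {n d : ℕ} (hd : n * n < d) (Z : Fin d → Matrix (Fin n) (Fin n) R) :
    ∑ τ : Equiv.Perm (Fin d), ((Equiv.Perm.sign τ : ℤˣ) : ℤ) • (List.ofFn (fun i => Z (τ i))).prod = 0 := by
  let f := MultilinearMap.alternatization (MultilinearMap.mkPiAlgebraFin R d (Matrix (Fin n) (Fin n) R))
  have hf : f = 0 := by
    refine Module.Basis.ext_alternating (Matrix.stdBasis R (Fin n) (Fin n)) fun v hv => ?_
    have := Fintype.card_le_of_injective v hv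
    simp at this
    omega
  have h1 : f Z = 0 := by rw [hf]; rfl
  rw [MultilinearMap.alternatization_apply] at h1
  rw [← h1]
  refine Finset.sum_congr rfl fun τ _ => ?_
  rw [MultilinearMap.domDomCongr_apply, MultilinearMap.mkPiAlgebraFin_apply]
  rfl

theorem std_id {S : Type} [Ring S] [Algebra ℂ S] {n d : ℕ} (hd : n * n < d) (Z : Fin d → Matrix (Fin n) (Fin n) S)
    (hZ : ∀ i j k l i' j', Z i k l * Z j i' j' = Z j i' j' * Z i k l) :
    ∑ τ : Equiv.Perm (Fin d), ((Equiv.Perm.sign τ : ℤˣ) : ℤ) • (List.ofFn (fun i => Z (τ i))).prod = 0 := by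
  let s : Set S := {a | ∃ i k l, a = Z i k l}
  have hs : ∀ a ∈ s, ∀ b ∈ s, a * b = b * a := by
    rintro _ ⟨i, k, l, rfl⟩ _ ⟨i', k', l', rfl⟩
    exact hZ _ _ _ _ _ _
  letI : CommRing (Algebra.adjoin ℂ s) := Algebra.adjoinCommRingOfComm ℂ hs
  let W : Fin d → Matrix (Fin n) (Fin n) (Algebra.adjoin ℂ s) := fun i k l => ⟨Z i k l, Algebra.subset_adjoin ⟨i, k, l, rfl⟩⟩
  let φ : Algebra.adjoin ℂ s →+* S := (Algebra.adjoin ℂ s).val.toRingHom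
  have h := congrArg φ.mapMatrix (std_id_comm hd W)
  rw [map_sum, map_zero] at h
  rw [← h]
  refine Finset.sum_congr rfl fun τ _ => ?_
  rw [map_zsmul, map_list_prod, List.map_ofFn]
  rfl

end Std

end Part8

section Part9
open scoped ComplexOrder InnerProductSpace

section PI
variable {H : Type} [NormedAddCommGroup H] [InnerProductSpace ℂ H] [CompleteSpace H]
open ContinuousLinearMap

/-- closed span of `C ξ` -/
def genX {n : ℕ} (C : StarSubalgebra ℂ (H →L[ℂ] H)) (ξ : Fin n → H) : Submodule ℂ H :=
  (Submodule.span ℂ {x | ∃ c ∈ C, ∃ l, x = c (ξ l)}).topologicalClosure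

theorem genX_closed {n : ℕ} (C : StarSubalgebra ℂ (H →L[ℂ] H)) (ξ : Fin n → H) : IsClosed (genX C ξ : Set H) :=
  Submodule.isClosed_topologicalClosure _

theorem genX_mem {n : ℕ} {C : StarSubalgebra ℂ (H →L[ℂ] H)} {ξ : Fin n → H} {c : H →L[ℂ] H} (hc : c ∈ C) (l : Fin n) :
    c (ξ l) ∈ genX C ξ :=
  Submodule.le_topologicalClosure _ (Submodule.subset_span ⟨c, hc, l, rfl⟩)

theorem genX_le {n : ℕ} {C : StarSubalgebra ℂ (H →L[ℂ] H)} {ξ : Fin n → H} {S : Submodule ℂ H} (hS : IsClosed (S : Set H))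
    (h : ∀ c ∈ C, ∀ l, c (ξ l) ∈ S) : genX C ξ ≤ S := by
  refine Submodule.topologicalClosure_minimal _ ?_ hS
  rw [Submodule.span_le]
  rintro _ ⟨c, hc, l, rfl⟩
  exact h c hc l

theorem pi_stage {n : ℕ} (C : StarSubalgebra ℂ (H →L[ℂ] H)) (hC : ∀ a ∈ C, ∀ b ∈ C, a * b = b * a) (ξ : Fin n → H) :
    ∃ Q : H →L[ℂ] H, IsSelfAdjoint Q ∧ (∀ c ∈ C, Q * c = c * Q) ∧ (∀ x, Q x ∈ genX C ξ) ∧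
      (∀ v ∈ genX C ξ, Q v = 0 → v = 0) ∧
      ∀ (d : ℕ), n * n < d → ∀ y : Fin d → (H →L[ℂ] H), (∀ i, ∀ c ∈ C, y i * c = c * y i) →
        ∀ c ∈ C, ∀ l, ∑ τ : Equiv.Perm (Fin d), ((Equiv.Perm.sign τ : ℤˣ) : ℤ) •
          (List.ofFn (fun i => Q * y (τ i))).prod (c (ξ l)) = 0 := by
  let E := PiLp 2 (fun _ : Fin n => H)
  let p : Fin n → (E →L[ℂ] H) := fun l => PiLp.proj 2 (fun _ : Fin n => H) l
  have hp : ∀ l (e : E), p l e = e l := fun l e => rfl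
  have hext : ∀ e e' : E, (∀ k, p k e = p k e') → e = e' := fun e e' h => PiLp.ext h
  have hinn : ∀ e e' : E, ⟪e, e'⟫_ℂ = ∑ k, ⟪p k e, p k e'⟫_ℂ := fun e e' => PiLp.inner_apply _ _
  have hpadj : ∀ k l h, p k (adjoint (p l) h) = if k = l then h else 0 := by
    intro k l h
    refine ext_inner_left ℂ fun g => ?_
    have h1 : ⟪g, p k (adjoint (p l) h)⟫_ℂ = ⟪(WithLp.toLp 2 (Pi.single k g) : E), adjoint (p l) h⟫_ℂ := by
      rw [hinn, Finset.sum_eq_single k]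
      · congr 1
        rw [hp k (WithLp.toLp 2 (Pi.single k g))]; exact (Pi.single_eq_same (M := fun _ : Fin n => H) k g).symm
      · intro b _ hb
        have : p b (WithLp.toLp 2 (Pi.single k g)) = 0 := Pi.single_eq_of_ne (M := fun _ : Fin n => H) hb g
        rw [this, inner_zero_left]
      · simp
    rw [h1, adjoint_inner_right, hp]
    by_cases hkl : k = l
    · subst hkl; simp
    · simp [hkl, Ne.symm hkl]
  let dg : (H →L[ℂ] H) → (E →L[ℂ] E) := fun c => ∑ l, (adjoint (p l)) ∘L c ∘L (p l)
  have hdg : ∀ c k e, p k (dg c e) = c (p k e) := by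
    intro c k e
    simp only [dg, ContinuousLinearMap.sum_apply, ContinuousLinearMap.comp_apply, map_sum, hpadj]
    simp
  have hdgstar : ∀ c, star (dg c) = dg (star c) := by
    intro c
    ext1 e
    refine ext_inner_left ℂ fun e' => ?_
    rw [← star_inner', hinn, hinn]
    simp only [hdg]
    exact Finset.sum_congr rfl fun k _ => star_inner' _ _ _
  have hdgsub : ∀ c c', dg c - dg c' = dg (c - c') := by
    intro c c'; ext1 e
    exact hext _ _ fun k => by simp [hdg]
  have hdgmul : ∀ c c', dg c * dg c' = dg (c * c') := by
    intro c c'; ext1 e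
    exact hext _ _ fun k => by simp [hdg]
  let Ξ : E := WithLp.toLp 2 ξ
  have hΞ : ∀ k, p k Ξ = ξ k := fun k => rfl
  let K₀ : Submodule ℂ E :=
    { carrier := {e | ∃ c ∈ C, dg c Ξ = e}
      add_mem' := by
        rintro _ _ ⟨c, hc, rfl⟩ ⟨c', hc', rfl⟩
        exact ⟨c + c', C.add_mem hc hc', hext _ _ fun k => by simp [hdg]⟩
      zero_mem' := ⟨0, C.zero_mem, hext _ _ fun k => by simp [hdg]⟩
      smul_mem' := by
        rintro r _ ⟨c, hc, rfl⟩
        exact ⟨r • c, C.smul_mem hc r, hext _ _ fun k => by simp [hdg]⟩ }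
  let K := K₀.topologicalClosure
  have hKcl : IsClosed (K : Set E) := Submodule.isClosed_topologicalClosure _
  haveI : K.HasOrthogonalProjection := closed_hasProj K hKcl
  have hK0 : ∀ c ∈ C, dg c Ξ ∈ K := fun c hc => Submodule.le_topologicalClosure _ ⟨c, hc, rfl⟩
  have hKind : ∀ S : Set E, IsClosed S → (∀ c ∈ C, dg c Ξ ∈ S) → ∀ e ∈ K, e ∈ S := by
    intro S hS h e he
    have : e ∈ closure (K₀ : Set E) := he
    refine closure_minimal ?_ hS this
    rintro _ ⟨c, hc, rfl⟩
    exact h c hc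
  have hKinv : ∀ c ∈ C, ∀ e ∈ K, dg c e ∈ K := by
    intro c hc
    refine hKind (dg c ⁻¹' (K : Set E)) (hKcl.preimage (dg c).continuous) fun c' hc' => ?_
    show (dg c * dg c') Ξ ∈ K
    rw [hdgmul]
    exact hK0 _ (C.mul_mem hc hc')
  let P := K.starProjection
  have hPK : ∀ e, P e ∈ K := fun e => Submodule.starProjection_apply_mem _ _
  have hPid : ∀ e ∈ K, P e = e := fun e he => Submodule.starProjection_eq_self_iff.2 he
  have hPc : ∀ c ∈ C, ∀ e, P (dg c e) = dg c (P e) := by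
    intro c hc e
    refine proj_comm K (T' := dg (star c)) (fun x y => ?_) (hKinv c hc) (hKinv _ (star_mem hc)) e
    rw [star_inner', hdgstar]
  let R : Fin n → (E →L[ℂ] H) := fun l => p l ∘L P
  have hR : ∀ l e, R l e = p l (P e) := fun l e => rfl
  have hRc : ∀ l, ∀ c ∈ C, ∀ e, R l (dg c e) = c (R l e) := by
    intro l c hc e
    rw [hR, hPc c hc, hdg, hR]
  have hRadj : ∀ l h, adjoint (R l) h = P (adjoint (p l) h) := by
    intro l h
    simp only [R, adjoint_comp, ContinuousLinearMap.comp_apply]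
    congr 1
    have : IsSelfAdjoint P := isSelfAdjoint_starProjection K
    have h2 := this.star_eq
    rw [star_eq_adjoint] at h2
    rw [h2]
  have hRaK : ∀ l h, adjoint (R l) h ∈ K := fun l h => by rw [hRadj]; exact hPK _
  have hRac : ∀ l, ∀ c ∈ C, ∀ h, adjoint (R l) (c h) = dg c (adjoint (R l) h) := by
    intro l c hc h
    refine ext_inner_left ℂ fun e => ?_
    rw [adjoint_inner_right, ← star_inner, ← hRc l _ (star_mem hc), ← hdgstar, ← adjoint_inner_right, star_inner]
  let Q : H →L[ℂ] H := ∑ l, (R l) ∘L (adjoint (R l))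
  have hQ : ∀ h, Q h = ∑ l, R l (adjoint (R l) h) := fun h => by
    simp [Q, ContinuousLinearMap.sum_apply]
  have hRX : ∀ l e, R l e ∈ genX C ξ := by
    intro l e
    rw [hR]
    refine hKind (p l ⁻¹' (genX C ξ : Set H)) ((genX_closed C ξ).preimage (p l).continuous) (fun c hc => ?_) _ (hPK e)
    show p l (dg c Ξ) ∈ genX C ξ
    rw [hdg, hΞ]
    exact genX_mem hc l
  have hRgen : ∀ c ∈ C, ∀ l, R l (dg c Ξ) = c (ξ l) := by
    intro c hc l
    rw [hR, hPid _ (hK0 c hc), hdg, hΞ]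
  refine ⟨Q, ?_, ?_, ?_, ?_, ?_⟩
  · rw [IsSelfAdjoint, star_eq_adjoint]
    simp only [Q, map_sum, adjoint_comp, adjoint_adjoint]
  · intro c hc
    ext h
    simp only [ContinuousLinearMap.mul_apply, hQ, map_sum]
    exact Finset.sum_congr rfl fun l _ => by rw [hRac l c hc, hRc l c hc]
  · intro x
    rw [hQ]
    exact Submodule.sum_mem _ fun l _ => hRX _ _
  · intro v hv hQv
    have h1 : ∑ l, ‖adjoint (R l) v‖ ^ 2 = 0 := by
      have : ⟪v, Q v⟫_ℂ = ((∑ l, ‖adjoint (R l) v‖ ^ 2 : ℝ) : ℂ) := by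
        rw [hQ, inner_sum]
        push_cast
        refine Finset.sum_congr rfl fun l _ => ?_
        rw [← adjoint_inner_left, inner_self_eq_norm_sq_to_K]; rfl
      rw [hQv, inner_zero_right] at this
      exact (Complex.ofReal_eq_zero.1 this.symm)
    have h2 : ∀ l, adjoint (R l) v = 0 := by
      intro l
      have := (Finset.sum_eq_zero_iff_of_nonneg (fun l _ => by positivity)).1 h1 l (Finset.mem_univ _)
      have h4 : ‖adjoint (R l) v‖ = 0 := by simpa using this
      exact norm_eq_zero.1 h4
    have h3 : genX C ξ ≤ LinearMap.ker (innerSL ℂ v : H →ₗ[ℂ] ℂ) := by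
      refine genX_le ?_ fun c hc l => ?_
      · exact (innerSL ℂ v).isClosed_ker
      · show ⟪v, c (ξ l)⟫_ℂ = 0
        rw [← hRgen c hc, ← adjoint_inner_left, h2, inner_zero_left]
    exact inner_self_eq_zero.1 (h3 hv)
  · intro d hd y hy c₀ hc₀ l₀
    let Z : Fin d → Matrix (Fin n) (Fin n) (E →L[ℂ] E) := fun i k l => adjoint (R k) ∘L (y i) ∘L (R l)
    have hZa : ∀ i k l e, Z i k l e = adjoint (R k) (y i (R l e)) := fun i k l e => rfl
    have hZs : ∀ i k l e, star (Z i k l) e = adjoint (R l) (star (y i) (R k e)) := by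
      intro i k l e
      simp only [Z, star_eq_adjoint, adjoint_comp, adjoint_adjoint, ContinuousLinearMap.comp_apply]
    let D : Set (E →L[ℂ] E) := {T | ∃ c ∈ C, T = dg c}
    have hZD : ∀ i k l, ∀ T ∈ D, Z i k l * T = T * Z i k l := by
      rintro i k l _ ⟨c, hc, rfl⟩
      ext1 e
      simp only [ContinuousLinearMap.mul_apply, hZa]
      rw [hRc l c hc, ← hRac k c hc]
      congr 1
      exact congrArg (fun T : H →L[ℂ] H => T (R l e)) (hy i c hc)
    have hst := std_id hd Z (by
      intro i j k l i' j'
      refine cyc_comm D ?_ ?_ ?_ Ξ K ?_ (hZD _ _ _) (hZD _ _ _) ?_ ?_ ?_ ?_ ?_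
      · rintro _ ⟨c, hc, rfl⟩; exact ⟨star c, star_mem hc, hdgstar c⟩
      · rintro _ ⟨c, hc, rfl⟩ _ ⟨c', hc', rfl⟩; exact ⟨c - c', C.sub_mem hc hc', hdgsub c c'⟩
      · rintro _ ⟨c, hc, rfl⟩ _ ⟨c', hc', rfl⟩; rw [hdgmul, hdgmul, hC c hc c' hc']
      · refine hKind _ isClosed_closure fun c hc => subset_closure ⟨dg c, ⟨c, hc, rfl⟩, rfl⟩
      · intro x; rw [hZa]; exact hRaK _ _
      · intro x; rw [hZs]; exact hRaK _ _
      · intro x; rw [hZa]; exact hRaK _ _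
      · intro x; rw [hZs]; exact hRaK _ _
      · rintro _ ⟨c, hc, rfl⟩; exact hK0 c hc)
    let ρ : Matrix (Fin n) (Fin n) (E →L[ℂ] E) →+ H :=
      { toFun := fun M => ∑ m, R m (M m l₀ (dg c₀ Ξ))
        map_zero' := by simp
        map_add' := by intro M M'; simp [Finset.sum_add_distrib] }
    have hρ : ∀ M, ρ M = ∑ m, R m (M m l₀ (dg c₀ Ξ)) := fun M => rfl
    have hρmul : ∀ i M, ρ (Z i * M) = (Q * y i) (ρ M) := by
      intro i M
      rw [hρ, hρ, ContinuousLinearMap.mul_apply, hQ]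
      refine Finset.sum_congr rfl fun k _ => ?_
      rw [Matrix.mul_apply]
      simp only [ContinuousLinearMap.sum_apply, map_sum, ContinuousLinearMap.mul_apply, hZa]
    have hρlist : ∀ is : List (Fin d), ρ ((is.map Z).prod) = (is.map (fun i => Q * y i)).prod (c₀ (ξ l₀)) := by
      intro is
      induction is with
      | nil =>
        simp only [List.map_nil, List.prod_nil, hρ, ContinuousLinearMap.one_apply]
        rw [Finset.sum_eq_single l₀]
        · simp [hRgen c₀ hc₀]
        · intro b _ hb; simp [Matrix.one_apply_ne hb]
        · simp
      | cons i is ih =>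
        rw [List.map_cons, List.prod_cons, hρmul, ih, List.map_cons, List.prod_cons]
        rfl
    have hfin := congrArg ρ hst
    rw [map_sum, map_zero] at hfin
    rw [← hfin]
    refine Finset.sum_congr rfl fun τ _ => ?_
    rw [map_zsmul]
    congr 1
    have h1 := hρlist (List.ofFn (fun i => τ i))
    rw [List.map_ofFn, List.map_ofFn] at h1
    exact h1.symm

end PI

end Part9

section Part10
open scoped ComplexOrder InnerProductSpace

section PI2
variable {H : Type} [NormedAddCommGroup H] [InnerProductSpace ℂ H] [CompleteSpace H]
open ContinuousLinearMap Filter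

theorem str_lim {T : ℕ → (H →L[ℂ] H)} {C : ℝ} (hT : ∀ k x, ‖T k x‖ ≤ C * ‖x‖) {u : ℕ → H} {u₀ w : H}
    (h1 : Tendsto (fun k => T k u₀) atTop (nhds w)) (h2 : Tendsto u atTop (nhds u₀)) :
    Tendsto (fun k => T k (u k)) atTop (nhds w) := by
  have h3 : Tendsto (fun k => T k (u k - u₀)) atTop (nhds 0) := by
    refine squeeze_zero_norm (fun k => hT k _) ?_
    have : Tendsto (fun k => C * ‖u k - u₀‖) atTop (nhds (C * ‖u₀ - u₀‖)) :=
      ((h2.sub_const u₀).norm).const_mul C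
    simpa using this
  have := h3.add h1
  rw [zero_add] at this
  refine this.congr fun k => ?_
  rw [← map_add]; simp

theorem str_closed {T : ℕ → (H →L[ℂ] H)} {C : ℝ} (hT : ∀ k x, ‖T k x‖ ≤ C * ‖x‖) {T₀ : H →L[ℂ] H} (s : Set H)
    (h : ∀ x ∈ s, Tendsto (fun k => T k x) atTop (nhds (T₀ x))) :
    ∀ x ∈ closure s, Tendsto (fun k => T k x) atTop (nhds (T₀ x)) := by
  intro x hx
  rw [Metric.tendsto_atTop]
  intro ε hε
  set M := |C| + ‖T₀‖ + 1 with hM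
  have hMpos : 0 < M := by positivity
  obtain ⟨y, hy, hxy⟩ := Metric.mem_closure_iff.1 hx (ε / (2 * M)) (by positivity)
  obtain ⟨N, hN⟩ := Metric.tendsto_atTop.1 (h y hy) (ε / 2) (by positivity)
  refine ⟨N, fun k hk => ?_⟩
  have h1 := hN k hk
  rw [dist_eq_norm] at h1 hxy ⊢
  have h2 : T k x - T₀ x = T k (x - y) + (T k y - T₀ y) - T₀ (x - y) := by simp
  have h3 : ‖T k (x - y)‖ ≤ |C| * ‖x - y‖ := (hT k _).trans (mul_le_mul_of_nonneg_right (le_abs_self C) (norm_nonneg _))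
  have h4 : ‖T₀ (x - y)‖ ≤ ‖T₀‖ * ‖x - y‖ := T₀.le_opNorm _
  have h5 : M * ‖x - y‖ < ε / 2 := by
    rw [lt_div_iff₀ (by positivity)] at hxy
    linarith
  rw [h2]
  have h6 := norm_sub_le (T k (x - y) + (T k y - T₀ y)) (T₀ (x - y))
  have h7 := norm_add_le (T k (x - y)) (T k y - T₀ y)
  have h8 := norm_nonneg (x - y)
  nlinarith

theorem approx_Q {Q : H →L[ℂ] H} (hQ : IsSelfAdjoint Q) : ∃ G : ℕ → (H →L[ℂ] H),
    (∀ k, ∀ c, Commute Q c → Commute (G k) c) ∧ (∀ k x, ‖(Q * G k) x‖ ≤ 1 * ‖x‖) ∧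
    ∀ w, Tendsto (fun k => (Q * G k) (Q w)) atTop (nhds (Q w)) := by
  let δ : ℕ → ℝ := fun k => 1 / ((k : ℝ) + 1)
  have hδ : ∀ k, 0 < δ k := fun k => by positivity
  have hδ0 : Tendsto δ atTop (nhds 0) := tendsto_one_div_add_atTop_nhds_zero_nat
  let g : ℕ → ℝ → ℝ := fun k t => t / (t ^ 2 + δ k ^ 2)
  have hpos : ∀ k (t : ℝ), 0 < t ^ 2 + δ k ^ 2 := fun k t => by have := hδ k; positivity
  have hg : ∀ k, Continuous (g k) := fun k =>
    continuous_id.div (by fun_prop) fun t => (hpos k t).ne'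
  have hQG : ∀ k, Q * cfc (g k) Q = cfc (fun t => t * g k t) Q := by
    intro k
    have := hg k
    rw [cfc_mul (fun t : ℝ => t) (g k) Q (by fun_prop) (by fun_prop), cfc_id' ℝ Q]
  refine ⟨fun k => cfc (g k) Q, fun k c hc => (IsSelfAdjoint.commute_cfc hQ hc _), ?_, ?_⟩
  · intro k x
    refine (le_opNorm _ _).trans (mul_le_mul_of_nonneg_right ?_ (norm_nonneg _))
    rw [hQG]
    refine norm_cfc_le zero_le_one fun t _ => ?_
    simp only [g, Real.norm_eq_abs]
    rw [mul_div_assoc', abs_div, abs_of_pos (hpos k t), div_le_one (hpos k t), abs_mul_self]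
    nlinarith [hδ k]
  · intro w
    rw [tendsto_iff_norm_sub_tendsto_zero]
    refine squeeze_zero (fun _ => norm_nonneg _) (fun k => ?_) (g := fun k => δ k * ‖w‖) ?_
    · have h1 : (Q * cfc (g k) Q) (Q w) - Q w = (cfc (fun t => t * g k t * t - t) Q) w := by
        have := hg k
        rw [cfc_sub (fun t => t * g k t * t) (fun t => t) Q (by fun_prop) (by fun_prop), cfc_mul (fun t => t * g k t) (fun t => t) Q (by fun_prop) (by fun_prop), cfc_id' ℝ Q, hQG]
        rfl
      rw [h1]
      refine (le_opNorm _ _).trans (mul_le_mul_of_nonneg_right ?_ (norm_nonneg _))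
      refine norm_cfc_le (hδ k).le fun t _ => ?_
      simp only [g, Real.norm_eq_abs]
      have h3 : t * (t / (t ^ 2 + δ k ^ 2)) * t - t = (-(δ k ^ 2 * t)) / (t ^ 2 + δ k ^ 2) := by
        have := (hpos k t).ne'
        field_simp
        ring
      rw [h3, abs_div, abs_of_pos (hpos k t), div_le_iff₀ (hpos k t), abs_neg, abs_mul, abs_of_nonneg (sq_nonneg (δ k))]
      have h4 := hδ k
      have h5 : δ k * |t| ≤ t ^ 2 + δ k ^ 2 := by
        rw [← sq_abs t]
        nlinarith [sq_nonneg (|t| - δ k), abs_nonneg t]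
      nlinarith
    · simpa using hδ0.mul_const ‖w‖

theorem pi_lemma {n : ℕ} (C : StarSubalgebra ℂ (H →L[ℂ] H)) (hC : ∀ a ∈ C, ∀ b ∈ C, a * b = b * a) (ξ : Fin n → H)
    {d : ℕ} (hd : n * n < d) (x : Fin d → (H →L[ℂ] H)) (hx : ∀ i, ∀ c ∈ C, x i * c = c * x i)
    (hxX : ∀ i, ∀ v ∈ genX C ξ, x i v ∈ genX C ξ) : ∀ v ∈ genX C ξ,
      ∑ τ : Equiv.Perm (Fin d), ((Equiv.Perm.sign τ : ℤˣ) : ℤ) • (List.ofFn (fun i => x (τ i))).prod v = 0 := by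
  obtain ⟨Q, hQ, hQc, hQX, hQinj, hstd⟩ := pi_stage C hC ξ
  obtain ⟨G, hG, hGn, hGl⟩ := approx_Q hQ
  have hden : ∀ v ∈ genX C ξ, v ∈ closure (Set.range Q) := by
    intro v hv
    let Y := (LinearMap.range (Q : H →ₗ[ℂ] H)).topologicalClosure
    have hYc : IsClosed (Y : Set H) := Submodule.isClosed_topologicalClosure _
    haveI := closed_hasProj Y hYc
    have hYX : Y ≤ genX C ξ := by
      refine Submodule.topologicalClosure_minimal _ ?_ (genX_closed C ξ)
      rintro _ ⟨x, rfl⟩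
      exact hQX x
    have h1 : v - Y.starProjection v ∈ genX C ξ := Submodule.sub_mem _ hv (hYX (Submodule.starProjection_apply_mem _ _))
    have h2 : v - Y.starProjection v ∈ Yᗮ := Submodule.sub_starProjection_mem_orthogonal v
    have h3 := hQinj _ h1 (by
      refine ext_inner_left ℂ fun y => ?_
      rw [← sa_inner hQ, inner_zero_right]
      exact Submodule.inner_right_of_mem_orthogonal (K := Y) (Submodule.le_topologicalClosure _ ⟨y, rfl⟩) h2)
    have h4 : v ∈ Y := by
      rw [sub_eq_zero] at h3
      rw [h3]; exact Submodule.starProjection_apply_mem _ _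
    exact h4
  have hGv : ∀ v ∈ genX C ξ, Tendsto (fun k => (Q * G k) v) atTop (nhds v) := by
    intro v hv
    refine str_closed hGn (T₀ := 1) (Set.range Q) ?_ v (hden v hv)
    rintro _ ⟨w, rfl⟩
    exact hGl w
  have hlist : ∀ is : List (Fin d), ∀ v ∈ genX C ξ, ((is.map x).prod v ∈ genX C ξ) ∧
      Tendsto (fun k => (is.map (fun i => Q * (G k * x i))).prod v) atTop (nhds ((is.map x).prod v)) := by
    intro is v hv
    induction is with
    | nil => exact ⟨by simpa using hv, by simp⟩
    | cons i is ih =>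
      simp only [List.map_cons, List.prod_cons, ContinuousLinearMap.mul_apply]
      refine ⟨hxX i _ ih.1, ?_⟩
      refine str_lim (T := fun k => Q * (G k * x i)) (C := ‖x i‖) ?_ (hGv _ (hxX i _ ih.1)) ih.2
      intro k y
      rw [← mul_assoc]
      refine (hGn k (x i y)).trans ?_
      rw [one_mul]; exact (x i).le_opNorm _
  have hgen : genX C ξ ≤ LinearMap.ker ((∑ τ : Equiv.Perm (Fin d), ((Equiv.Perm.sign τ : ℤˣ) : ℤ) • (List.ofFn (fun i => x (τ i))).prod : H →L[ℂ] H) : H →ₗ[ℂ] H) := by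
    refine genX_le (ContinuousLinearMap.isClosed_ker _) fun c hc l => ?_
    show (∑ τ : Equiv.Perm (Fin d), ((Equiv.Perm.sign τ : ℤˣ) : ℤ) • (List.ofFn (fun i => x (τ i))).prod : H →L[ℂ] H) (c (ξ l)) = 0
    have h1 : Tendsto (fun k => ∑ τ : Equiv.Perm (Fin d), ((Equiv.Perm.sign τ : ℤˣ) : ℤ) •
          (List.ofFn (fun i => Q * (G k * x (τ i)))).prod (c (ξ l))) atTop (nhds
          (∑ τ : Equiv.Perm (Fin d), ((Equiv.Perm.sign τ : ℤˣ) : ℤ) • (List.ofFn (fun i => x (τ i))).prod (c (ξ l)))) := by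
      refine tendsto_finset_sum _ fun τ _ => ?_
      have := (hlist (List.ofFn (fun i => τ i)) _ (genX_mem hc l)).2
      simp only [List.map_ofFn] at this
      exact this.const_smul _
    have h2 : ∀ k, ∑ τ : Equiv.Perm (Fin d), ((Equiv.Perm.sign τ : ℤˣ) : ℤ) •
          (List.ofFn (fun i => Q * (G k * x (τ i)))).prod (c (ξ l)) = 0 := by
      intro k
      refine hstd d hd (fun i => G k * x i) (fun i c hc => ?_) c hc l
      have := (hG k c (hQc c hc)).eq
      rw [mul_assoc, hx i c hc, ← mul_assoc, this, mul_assoc]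
    simp only [h2] at h1
    have := tendsto_nhds_unique h1 tendsto_const_nhds
    simp only [ContinuousLinearMap.sum_apply, ContinuousLinearMap.smul_apply]
    exact this
  intro v hv
  have := hgen hv
  rw [LinearMap.mem_ker, ContinuousLinearMap.coe_coe] at this
  simpa only [ContinuousLinearMap.sum_apply, ContinuousLinearMap.smul_apply] using this

end PI2

end Part10

section Part11
open scoped ComplexOrder InnerProductSpace

section Chain
variable {H : Type} [NormedAddCommGroup H] [InnerProductSpace ℂ H] [CompleteSpace H]
open ContinuousLinearMap Filter

theorem chain_exists (e p : H →L[ℂ] H) (b : ℕ → (H →L[ℂ] H)) (he : IsSelfAdjoint e) (hee : e * e = e)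
    (hp : IsSelfAdjoint p) (hpe : p * e = e * p) (hpb : ∀ m, p * b m = b m * p)
    (hb : ∀ m, IsSelfAdjoint (b m)) (hbb : ∀ m k, m ≤ k → b m * b k = b m)
    (hlim : ∀ v, e v = v → Tendsto (fun m => b m v) atTop (nhds v))
    (hinj : ∀ m v, e v = v → b m v = v → v = 0) (hep : e * p ≠ 0) :
    ∃ q : ℕ → (H →L[ℂ] H), (∀ i, ∃ m m', q i = b m' - b m) ∧ (∀ i, q i * q i = q i) ∧
      (∀ i j, i ≠ j → q i * q j = 0) ∧
      ∀ j, (((List.range j).map (fun i => q i * e * q (i + 1))).prod * (q j * (e * p))) ≠ 0 := by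
  have hbb' : ∀ m k, m ≤ k → b k * b m = b m := by
    intro m k h
    have := congrArg star (hbb m k h)
    rwa [star_mul, (hb m).star_eq, (hb k).star_eq] at this
  have hstep : ∀ (T : H →L[ℂ] H) (m : ℕ), T * p = p * T → T * e = T → T * p ≠ 0 →
      ∃ m', m < m' ∧ T * (b m' - b m) * e * p ≠ 0 := by
    intro T m hTp hTe hT0
    by_contra hcon
    push Not at hcon
    apply hT0
    have h1 : T * (1 - b m) * e * p = 0 := by
      ext h
      have hl : Tendsto (fun k => b k (e (p h))) atTop (nhds (e (p h))) := by
        refine hlim _ ?_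
        exact congrArg (fun T : H →L[ℂ] H => T (p h)) hee
      have hl2 : Tendsto (fun k => T (b k (e (p h)) - b m (e (p h)))) atTop (nhds (T (e (p h) - b m (e (p h))))) :=
        (T.continuous.tendsto _).comp (hl.sub_const _)
      have hl3 : Tendsto (fun k => T (b k (e (p h)) - b m (e (p h)))) atTop (nhds 0) := by
        refine tendsto_const_nhds.congr' ?_
        filter_upwards [eventually_gt_atTop m] with k hk
        exact (congrArg (fun T : H →L[ℂ] H => T h) (hcon k hk)).symm
      exact tendsto_nhds_unique hl2 hl3
    have h2 : e * (1 - b m) * e * (p * star T) = 0 := by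
      have h3 := congrArg star h1
      simp only [star_mul, star_sub, star_one, he.star_eq, hp.star_eq, (hb m).star_eq, star_zero] at h3
      have h4 : star T = e * star T := by
        have := congrArg star hTe
        rw [star_mul, he.star_eq] at this
        exact this.symm
      have h5 : p * (1 - b m) = (1 - b m) * p := by rw [mul_sub, sub_mul, hpb]; simp
      calc e * (1 - b m) * e * (p * star T) = e * (1 - b m) * (e * p) * star T := by simp only [mul_assoc]
        _ = e * (1 - b m) * (p * e) * star T := by rw [hpe]
        _ = e * ((1 - b m) * p) * (e * star T) := by simp only [mul_assoc]
        _ = (e * p) * (1 - b m) * star T := by rw [← h5, ← h4]; simp only [mul_assoc]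
        _ = p * (e * ((1 - b m) * star T)) := by rw [← hpe]; simp only [mul_assoc]
        _ = 0 := h3
    have hbid : (1 - b m) * (1 - b m) = 1 - b m := by
      simp only [mul_sub, sub_mul, hbb m m le_rfl, one_mul, mul_one, sub_self, sub_zero]
    have hbsa : IsSelfAdjoint (1 - b m) := (IsSelfAdjoint.one _).sub (hb m)
    have h6 : e * (p * star T) = 0 := by
      ext h
      set u := (p * star T) h with hu
      show e u = 0
      have h7 : e ((1 - b m) (e u)) = 0 := congrArg (fun T : H →L[ℂ] H => T h) h2
      have h8 : (1 - b m) (e u) = 0 := by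
        refine inner_self_eq_zero (𝕜 := ℂ).1 ?_
        rw [sa_inner hbsa]
        have : (1 - b m) ((1 - b m) (e u)) = (1 - b m) (e u) := congrArg (fun T : H →L[ℂ] H => T (e u)) hbid
        rw [this, sa_inner he, h7, inner_zero_right]
      refine hinj m (e u) (congrArg (fun T : H →L[ℂ] H => T u) hee) ?_
      have h9 : e u - b m (e u) = 0 := h8
      exact (sub_eq_zero.1 h9).symm
    have h7 := congrArg star h6
    simp only [star_mul, star_star, he.star_eq, hp.star_eq, star_zero] at h7
    rw [mul_assoc, hpe, ← mul_assoc, hTe] at h7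
    exact h7
  let S := {s : (H →L[ℂ] H) × ℕ // s.1 * p = p * s.1 ∧ s.1 * e = s.1 ∧ s.1 * p ≠ 0}
  choose! nm hnm1 hnm2 using hstep
  let nxt : S → S := fun s => ⟨(s.1.1 * (b (nm s.1.1 s.1.2) - b s.1.2) * e, nm s.1.1 s.1.2), by
      have h1 := s.2.1
      refine ⟨?_, ?_, ?_⟩
      · simp only [mul_assoc]
        rw [← hpe, ← mul_assoc _ p, sub_mul, ← hpb, ← hpb, ← mul_sub, mul_assoc, ← mul_assoc _ p, h1]
        simp only [mul_assoc]
      · simp only [mul_assoc, hee]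
      · exact hnm2 _ _ s.2.1 s.2.2.1 s.2.2.2⟩
  let st : ℕ → S := fun n => nxt^[n] ⟨(e, 0), hpe.symm, hee, hep⟩
  have hst : ∀ n, st (n+1) = nxt (st n) := fun n => Function.iterate_succ_apply' _ _ _
  have hst0 : st 0 = ⟨(e, 0), hpe.symm, hee, hep⟩ := rfl
  let m : ℕ → ℕ := fun n => (st n).1.2
  let T : ℕ → (H →L[ℂ] H) := fun n => (st n).1.1
  have hm : ∀ n, m n < m (n+1) := by
    intro n
    have : m (n+1) = nm (T n) (m n) := by simp only [m, hst]; rfl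
    rw [this]
    exact hnm1 _ _ (st n).2.1 (st n).2.2.1 (st n).2.2.2
  have hmono : StrictMono m := strictMono_nat_of_lt_succ hm
  let q : ℕ → (H →L[ℂ] H) := fun n => b (m (n+1)) - b (m n)
  have hT : ∀ n, T (n+1) = T n * q n * e := by
    intro n
    have : m (n+1) = nm (T n) (m n) := by simp only [m, hst]; rfl
    simp only [q]; rw [this]
    simp only [T, hst]; rfl
  have hqq : ∀ i, q i * q i = q i := by
    intro i
    have := (hm i).le
    simp only [q, mul_sub, sub_mul, hbb _ _ le_rfl, hbb _ _ this, hbb' _ _ this]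
    simp
  have hq1 : ∀ i j, i < j → q i * q j = 0 ∧ q j * q i = 0 := by
    intro i j hij
    have h1 : m (i+1) ≤ m j := hmono.monotone hij
    have h2 : m i ≤ m j := hmono.monotone hij.le
    have h3 : m (i+1) ≤ m (j+1) := hmono.monotone (by omega)
    have h4 : m i ≤ m (j+1) := hmono.monotone (by omega)
    constructor
    · simp only [q, mul_sub, sub_mul, hbb _ _ h1, hbb _ _ h2, hbb _ _ h3, hbb _ _ h4]; simp
    · simp only [q, mul_sub, sub_mul, hbb' _ _ h1, hbb' _ _ h2, hbb' _ _ h3, hbb' _ _ h4]; simp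
  refine ⟨q, fun i => ⟨_, _, rfl⟩, hqq, fun i j hij => ?_, fun j => ?_⟩
  · rcases lt_or_gt_of_ne hij with h | h
    · exact (hq1 _ _ h).1
    · exact (hq1 _ _ h).2
  · have hform : ∀ j, T (j+1) = e * ((List.range j).map (fun i => q i * e * q (i + 1))).prod * q j * e := by
      intro j
      induction j with
      | zero => rw [hT]; simp [T, hst0]
      | succ j ih =>
        rw [hT, ih, List.range_succ, List.map_append, List.prod_append]
        simp only [List.map_cons, List.map_nil, List.prod_singleton, mul_assoc]
        rw [← mul_assoc (q (j+1)) (q (j+1)), hqq]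
    intro h0
    have h1 := (st (j+1)).2.2.2
    apply h1
    show T (j+1) * p = 0
    rw [hform]
    have : e * ((List.range j).map (fun i => q i * e * q (i + 1))).prod * q j * e * p =
      e * (((List.range j).map (fun i => q i * e * q (i + 1))).prod * (q j * (e * p))) := by simp only [mul_assoc]
    rw [this, h0, mul_zero]

theorem list_prod_chain {S : Type} [MonoidWithZero S] {ι : Type} (x : ι → S) (l : List ι) (h : (l.map x).prod ≠ 0) :
    l.IsChain (fun i j => x i * x j ≠ 0) := by
  induction l with
  | nil => simp
  | cons i l ih =>
    cases l with
    | nil => simp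
    | cons j l =>
      rw [List.isChain_cons_cons]
      refine ⟨fun h0 => h ?_, ih fun h0 => h ?_⟩
      · simp only [List.map_cons, List.prod_cons]
        rw [← mul_assoc, h0, zero_mul]
      · rw [List.map_cons, List.prod_cons, h0, mul_zero]

theorem perm_id {d : ℕ} (τ : Equiv.Perm (Fin d)) (h : (List.ofFn (fun i => (τ i : ℕ))).IsChain (fun i j => j = i + 1)) : τ = 1 := by
  rw [List.isChain_iff_getElem] at h
  simp only [List.length_ofFn, List.getElem_ofFn] at h
  have h1 : ∀ k (hk : k < d), (τ ⟨k, hk⟩ : ℕ) = τ ⟨0, by omega⟩ + k := by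
    intro k
    induction k with
    | zero => intro hk; simp
    | succ k ih =>
      intro hk
      rw [h k hk, ih (by omega)]; ring
  ext ⟨k, hk⟩
  have h2 := h1 (d - 1) (by omega)
  have h3 := (τ ⟨d - 1, by omega⟩).2
  rw [h1 k hk]
  simp; omega

end Chain

end Part11

section Part12
open scoped ComplexOrder InnerProductSpace
open Filter
section P12
variable {A : Type} [NonUnitalCStarAlgebra A]
variable {H : Type} [NormedAddCommGroup H] [InnerProductSpace ℂ H] [CompleteSpace H]

theorem adj_comm {s : Set (H →L[ℂ] H)} (hs : ∀ c ∈ s, star c ∈ s) {T : H →L[ℂ] H} (hT : ∀ c ∈ s, T * c = c * T) :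
    ∀ c ∈ StarAlgebra.adjoin ℂ s, T * c = c * T := by
  have h : StarAlgebra.adjoin ℂ s ≤ StarSubalgebra.centralizer ℂ {T} := by
    refine StarAlgebra.adjoin_le ?_
    intro c hc
    rw [SetLike.mem_coe, StarSubalgebra.mem_centralizer_iff]
    rintro _ rfl
    refine ⟨hT c hc, ?_⟩
    have := congrArg star (hT (star c) (hs c hc))
    simpa [star_mul] using this.symm
  intro c hc
  exact ((StarSubalgebra.mem_centralizer_iff ℂ).1 (h hc) T rfl).1

theorem sandwich (π : A →⋆ₙₐ[ℂ] (H →L[ℂ] H)) {e : H →L[ℂ] H} (he : IsSelfAdjoint e) (hee : e * e = e)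
    (hc : ∀ a, e * π a = π a * e) : ∃ σ : A →⋆ₙₐ[ℂ] (H →L[ℂ] H), ∀ a, σ a = π a * e :=
  ⟨{ toFun := fun a => π a * e
     map_smul' := fun c a => by simp
     map_zero' := by simp
     map_add' := fun a b => by simp [add_mul]
     map_mul' := fun a b => by
       show π (a * b) * e = π a * e * (π b * e)
       rw [map_mul]
       calc π a * π b * e = π a * π b * (e * e) := by rw [hee]
         _ = π a * (π b * e) * e := by simp only [mul_assoc]
         _ = π a * (e * π b) * e := by rw [hc]
         _ = _ := by simp only [mul_assoc]
     map_star' := fun a => by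
       show π (star a) * e = star (π a * e)
       rw [star_mul, he.star_eq, map_star, ← map_star, hc] }, fun a => rfl⟩

/-- the central cover -/
theorem central_cover (π : A →⋆ₙₐ[ℂ] (H →L[ℂ] H)) (σ : A →⋆ₙₐ[ℂ] (H →L[ℂ] H)) (e : H →L[ℂ] H)
    (hec : ∀ a, e * π a = π a * e) (hσ : ∀ a, σ a = π a * e) :
    ∃ z : H →L[ℂ] H, IsSelfAdjoint z ∧ z * z = z ∧ (∀ a, z * π a = π a * z) ∧
      (∀ T : H →L[ℂ] H, (∀ a, T * π a = π a * T) → z * T = T * z) ∧ z * e = e ∧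
      ∀ a b, σ a = σ b → π a * z = π b * z := by
  let S : Submodule ℂ H :=
    { carrier := {v | ∀ a, σ a = 0 → π a v = 0}
      zero_mem' := fun a _ => map_zero _
      add_mem' := fun {x y} hx hy a ha => by rw [map_add, hx a ha, hy a ha, add_zero]
      smul_mem' := fun c x hx a ha => by rw [map_smul, hx a ha, smul_zero] }
  have hS : IsClosed (S : Set H) := by
    have : (S : Set H) = ⋂ a, ⋂ (_ : σ a = 0), {v | π a v = 0} := by
      ext v
      simp only [Set.mem_iInter]
      rfl
    rw [this]
    exact isClosed_iInter fun a => isClosed_iInter fun _ => isClosed_eq (π a).continuous continuous_const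
  haveI := closed_hasProj S hS
  have hπS : ∀ a, ∀ x ∈ S, π a x ∈ S := by
    intro a x hx b hb
    rw [← rep_mul]
    exact hx _ (by rw [map_mul, hb, zero_mul])
  have hTS : ∀ T : H →L[ℂ] H, (∀ a, T * π a = π a * T) → ∀ x ∈ S, T x ∈ S := by
    intro T hT x hx a ha
    have h1 : T (π a x) = π a (T x) := congrArg (fun T : H →L[ℂ] H => T x) (hT a)
    rw [← h1, hx a ha, map_zero]
  have hst : ∀ T : H →L[ℂ] H, (∀ a, T * π a = π a * T) → (∀ a, star T * π a = π a * star T) := by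
    intro T hT a
    ext x
    exact comm_adj (fun a x => congrArg (fun T : H →L[ℂ] H => T x) (hT a)) a x
  refine ⟨S.starProjection, isSelfAdjoint_starProjection S, ?_, ?_, ?_, ?_, ?_⟩
  · ext x
    exact Submodule.starProjection_eq_self_iff.2 (Submodule.starProjection_apply_mem _ _)
  · intro a
    ext x
    exact proj_comm S (rep_inner π a) (hπS a) (hπS (star a)) x
  · intro T hT
    ext x
    exact proj_comm S (star_inner' T) (hTS T hT) (hTS _ (hst T hT)) x
  · ext x
    refine Submodule.starProjection_eq_self_iff.2 ?_
    intro a ha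
    have : (π a * e) x = 0 := by rw [← hσ, ha]; rfl
    exact this
  · intro a b hab
    ext x
    have h1 : S.starProjection x ∈ S := Submodule.starProjection_apply_mem _ _
    have h2 := h1 (a - b) (by rw [map_sub, hab, sub_self])
    rw [map_sub] at h2
    exact sub_eq_zero.1 h2

theorem core_F {π : A →⋆ₙₐ[ℂ] (H →L[ℂ] H)} {ξ : H} (hcyc : DenseRange (fun a => π a ξ)) (hA : AllFD A)
    {e : H →L[ℂ] H} (he : IsSelfAdjoint e) (hee : e * e = e) (hec : ∀ a, e * π a = π a * e) (he0 : e ≠ 0) :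
    ∃ (n : ℕ) (C : StarSubalgebra ℂ (H →L[ℂ] H)) (ζ : Fin n → H) (p : H →L[ℂ] H),
      (∀ a ∈ C, ∀ b ∈ C, a * b = b * a) ∧ IsSelfAdjoint p ∧
      (∀ x, p x ∈ genX C ζ) ∧ (∀ x ∈ genX C ζ, p x = x) ∧ e * p ≠ 0 ∧
      ∀ T : H →L[ℂ] H, (∀ a, T * π a = π a * T) → T * p = p * T ∧ ∀ c ∈ C, T * c = c * T := by
  obtain ⟨σ, hσ⟩ := sandwich π he hee hec
  have hσ0 : σ ≠ 0 := by
    intro h0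
    refine he0 ?_
    ext x
    refine cyc_nondeg hcyc fun b => ?_
    have : π b * e = 0 := by rw [← hσ, h0]; rfl
    exact congrArg (fun T : H →L[ℂ] H => T x) this
  obtain ⟨z, hz, hzz, hzπ, hzN, hze, hzσ⟩ := central_cover π σ e hec hσ
  obtain ⟨R, d, s, hR, hcomm, hdR, hsR, hd0, hunit⟩ := structure_thm hA σ hσ0
  have hπz : ∀ a b, (π a * z) * (π b * z) = π (a * b) * z := by
    intro a b
    calc (π a * z) * (π b * z) = π a * (z * π b) * z := by simp only [mul_assoc]
      _ = π a * π b * (z * z) := by rw [hzπ]; simp only [mul_assoc]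
      _ = _ := by rw [hzz, map_mul]
  have hπz' : ∀ a b x, π a (z (π b (z x))) = π (a * b) (z x) := fun a b x =>
    congrArg (fun T : H →L[ℂ] H => T x) (hπz a b)
  have hσx : ∀ a b x, σ a = σ b → π a (z x) = π b (z x) := fun a b x h =>
    congrArg (fun T : H →L[ℂ] H => T x) (hzσ a b h)
  let D := d * star d
  let X : Submodule ℂ H := (LinearMap.range ((orbitMap π (z ξ)) ∘ₗ LinearMap.mulLeft ℂ D)).topologicalClosure
  have hXc : IsClosed (X : Set H) := Submodule.isClosed_topologicalClosure _
  haveI := closed_hasProj X hXc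
  have hX0 : ∀ a, π (D * a) (z ξ) ∈ X := fun a => Submodule.le_topologicalClosure _ ⟨a, rfl⟩
  have hXind : ∀ P : Set H, IsClosed P → (∀ a, π (D * a) (z ξ) ∈ P) → ∀ x ∈ X, x ∈ P := by
    intro P hP h x hx
    refine closure_minimal ?_ hP (show x ∈ closure _ from hx)
    rintro _ ⟨a, rfl⟩
    exact h a
  have hX1 : ∀ a h, π (D * a) (z h) ∈ X := by
    intro a h
    have hcl : IsClosed {h : H | π (D * a) (z h) ∈ X} :=
      hXc.preimage ((π (D * a)).continuous.comp z.continuous)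
    refine hcl.closure_subset_iff.2 ?_ (hcyc.closure_range ▸ Set.mem_univ h)
    rintro _ ⟨b, rfl⟩
    show π (D * a) (z (π b ξ)) ∈ X
    have : z (π b ξ) = π b (z ξ) := congrArg (fun T : H →L[ℂ] H => T ξ) (hzπ b)
    rw [this, ← rep_mul, mul_assoc]
    exact hX0 _
  let p := X.starProjection
  have hpX : ∀ x, p x ∈ X := fun x => Submodule.starProjection_apply_mem _ _
  have hpid : ∀ x ∈ X, p x = x := fun x hx => Submodule.starProjection_eq_self_iff.2 hx
  let s' : Set (H →L[ℂ] H) := {c | ∃ u ∈ R, ∃ v ∈ R, c = π (u * star v) * z}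
  have hs' : ∀ c ∈ s', star c ∈ s' := by
    rintro _ ⟨u, hu, v, hv, rfl⟩
    refine ⟨v, hv, u, hu, ?_⟩
    rw [star_mul, hz.star_eq, ← map_star, hzπ, star_mul, star_star]
  have hs'c : ∀ c ∈ s', ∀ c' ∈ s', c * c' = c' * c := by
    rintro _ ⟨u, hu, v, hv, rfl⟩ _ ⟨u', hu', v', hv', rfl⟩
    rw [hπz, hπz]
    exact hzσ _ _ (hcomm u hu v hv u' hu' v' hv')
  have hs'X : ∀ c ∈ s', ∀ x ∈ X, c x ∈ X := by
    rintro _ ⟨u, hu, v, hv, rfl⟩ x hx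
    refine hXind {x | (π (u * star v) * z) x ∈ X} (hXc.preimage (ContinuousLinearMap.continuous _)) ?_ x hx
    intro a
    show π (u * star v) (z (π (D * a) (z ξ))) ∈ X
    rw [hπz', hσx _ (D * ((u * star v) * a))]
    · exact hX0 _
    · have hh : σ (u * star v * D) = σ (D * (u * star v)) := hcomm u hu v hv d hdR d hdR
      rw [← mul_assoc (u * star v) D a, ← mul_assoc D (u * star v) a, map_mul σ (u * star v * D), map_mul σ (D * (u * star v)), hh]
  have hps' : ∀ c ∈ s', p * c = c * p := by
    intro c hc
    ext x
    exact proj_comm X (star_inner' c) (hs'X c hc) (hs'X _ (hs' c hc)) x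
  let C := StarAlgebra.adjoin ℂ s'
  have hpC : ∀ c ∈ C, p * c = c * p := adj_comm hs' hps'
  have hCs : ∀ c ∈ s', ∀ c' ∈ C, c * c' = c' * c := fun c hc => adj_comm hs' (hs'c c hc)
  have hC : ∀ c ∈ C, ∀ c' ∈ C, c * c' = c' * c := fun c hc => adj_comm hs' fun c' hc' => (hCs c' hc' c hc).symm
  have hsC : ∀ c ∈ s', c ∈ C := fun c hc => StarAlgebra.subset_adjoin ℂ s' hc
  have hNX : ∀ T : H →L[ℂ] H, (∀ a, T * π a = π a * T) → ∀ x ∈ X, T x ∈ X := by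
    intro T hT x hx
    refine hXind {x | T x ∈ X} (hXc.preimage T.continuous) ?_ x hx
    intro a
    show T (π (D * a) (z ξ)) ∈ X
    have h1 : T (π (D * a) (z ξ)) = π (D * a) (T (z ξ)) := congrArg (fun T : H →L[ℂ] H => T (z ξ)) (hT _)
    have h2 : z (T ξ) = T (z ξ) := congrArg (fun T : H →L[ℂ] H => T ξ) (hzN T hT)
    rw [h1, ← h2]
    exact hX1 _ _
  have hst : ∀ T : H →L[ℂ] H, (∀ a, T * π a = π a * T) → (∀ a, star T * π a = π a * star T) := by
    intro T hT a
    ext x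
    exact comm_adj (fun a x => congrArg (fun T : H →L[ℂ] H => T x) (hT a)) a x
  let ζ : Fin s.card → H := fun l => p (π (s.equivFin.symm l : A) (z ξ))
  have hgX : genX C ζ ≤ X := by
    refine genX_le hXc ?_
    intro c hc l
    have : p (c (π (s.equivFin.symm l : A) (z ξ))) = c (ζ l) :=
      congrArg (fun T : H →L[ℂ] H => T (π (s.equivFin.symm l : A) (z ξ))) (hpC c hc)
    rw [← this]
    exact hpX _
  have hXg : X ≤ genX C ζ := by
    refine hXind (genX C ζ) (genX_closed C ζ) ?_
    intro a
    have h1 : π (D * a) (z ξ) = ∑ v ∈ s, π (D * a * star v * v) (z ξ) := by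
      have h2 : σ (D * a) = σ (∑ v ∈ s, D * a * star v * v) := by
        rw [map_sum]
        have := hunit (star d * a)
        simpa only [D, mul_assoc] using this
      rw [hσx _ _ _ h2, map_sum, ContinuousLinearMap.sum_apply]
    rw [SetLike.mem_coe, ← hpid _ (hX0 a), h1, map_sum]
    refine Submodule.sum_mem _ fun v hv => ?_
    have hcs : π (D * a * star v) * z ∈ s' := by
      refine ⟨D * a, ?_, v, hsR v hv, rfl⟩
      rw [show D * a = d * (star d * a) from mul_assoc _ _ _]
      exact hR.mul d hdR _
    have h3 : p ((π (D * a * star v) * z) (π v (z ξ))) = (π (D * a * star v) * z) (p (π v (z ξ))) :=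
      congrArg (fun T : H →L[ℂ] H => T (π v (z ξ))) (hps' _ hcs)
    have h4 : (π (D * a * star v) * z) (π v (z ξ)) = π (D * a * star v * v) (z ξ) := hπz' _ _ _
    rw [← h4, h3]
    have h5 : p (π v (z ξ)) = ζ (s.equivFin ⟨v, hv⟩) := by simp [ζ]
    rw [h5]
    exact genX_mem (hsC _ hcs) _
  refine ⟨s.card, C, ζ, p, hC, isSelfAdjoint_starProjection X, fun x => hXg (hpX x), fun x hx => hpid x (hgX hx), ?_, ?_⟩
  · intro h0
    refine sigma_sq σ hd0 ?_
    have hl : Function.Injective (fun T : H →L[ℂ] H => fun a => T (π a ξ)) := by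
      intro T T' hTT
      refine ContinuousLinearMap.coeFn_injective ?_
      refine hcyc.equalizer T.continuous T'.continuous ?_
      exact hTT
    refine hl ?_
    funext a
    show σ D (π a ξ) = 0
    rw [hσ]
    have h1 : e (π (D * a) (z ξ)) = 0 := by
      rw [← hpid _ (hX0 a)]
      exact congrArg (fun T : H →L[ℂ] H => T (π (D * a) (z ξ))) h0
    have h2 : e (π (D * a) (z ξ)) = π (D * a) (e (z ξ)) := congrArg (fun T : H →L[ℂ] H => T (z ξ)) (hec _)
    have h3 : z (e ξ) = e (z ξ) := congrArg (fun T : H →L[ℂ] H => T ξ) (hzN e hec)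
    have h4 : z (e ξ) = e ξ := congrArg (fun T : H →L[ℂ] H => T ξ) hze
    have h5 : e (π a ξ) = π a (e ξ) := congrArg (fun T : H →L[ℂ] H => T ξ) (hec a)
    show π D (e (π a ξ)) = 0
    rw [h5, ← rep_mul, ← h4, h3, ← h2, h1]
  · intro T hT
    refine ⟨?_, ?_⟩
    · ext x
      exact (proj_comm X (star_inner' T) (hNX T hT) (hNX _ (hst T hT)) x).symm
    · refine adj_comm hs' ?_
      rintro _ ⟨u, hu, v, hv, rfl⟩
      rw [← mul_assoc, hT, mul_assoc, ← hzN T hT, mul_assoc]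

theorem theorem_F {π : A →⋆ₙₐ[ℂ] (H →L[ℂ] H)} {ξ : H} (hcyc : DenseRange (fun a => π a ξ)) (hA : AllFD A)
    {e : H →L[ℂ] H} (he : IsSelfAdjoint e) (hee : e * e = e) (hec : ∀ a, e * π a = π a * e)
    (b : ℕ → (H →L[ℂ] H)) (hbc : ∀ m a, b m * π a = π a * b m)
    (hb : ∀ m, IsSelfAdjoint (b m)) (hbb : ∀ m k, m ≤ k → b m * b k = b m)
    (hlim : ∀ v, e v = v → Tendsto (fun m => b m v) atTop (nhds v))
    (hinj : ∀ m v, e v = v → b m v = v → v = 0) : e = 0 := by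
  by_contra he0
  obtain ⟨n, C, ζ, p, hC, hp, hpX, hpid, hep, hN⟩ := core_F hcyc hA he hee hec he0
  obtain ⟨q, hq, hqq, hqo, hne⟩ := chain_exists e p b he hee hp (hN e hec).1.symm (fun m => (hN _ (hbc m)).1.symm)
    hb hbb hlim hinj hep
  have hqN : ∀ i a, q i * π a = π a * q i := by
    intro i a
    obtain ⟨m, m', h⟩ := hq i
    rw [h, sub_mul, mul_sub, hbc, hbc]
  have hmulN : ∀ S T : H →L[ℂ] H, (∀ a, S * π a = π a * S) → (∀ a, T * π a = π a * T) →
      ∀ a, (S * T) * π a = π a * (S * T) := by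
    intro S T hS hT a
    rw [mul_assoc, hT, ← mul_assoc, hS, mul_assoc]
  let x : ℕ → (H →L[ℂ] H) := fun i => q i * e * q (i + 1)
  have hxN : ∀ i a, x i * π a = π a * x i := fun i => hmulN _ _ (hmulN _ _ (hqN i) hec) (hqN _)
  have hNX : ∀ T : H →L[ℂ] H, (∀ a, T * π a = π a * T) → ∀ v ∈ genX C ζ, T v ∈ genX C ζ := by
    intro T hT v hv
    have h1 : T (p v) = p (T v) := congrArg (fun T : H →L[ℂ] H => T v) (hN T hT).1
    rw [← hpid v hv, h1]
    exact hpX _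
  obtain ⟨dd, hdd⟩ : ∃ dd, n * n < dd := ⟨_, Nat.lt_succ_self _⟩
  refine hne dd ?_
  ext h
  let v := q dd (e (p h))
  have hv : v ∈ genX C ζ := hNX _ (hqN _) _ (hNX _ hec _ (hpX h))
  have hpi := pi_lemma C hC ζ (d := dd) hdd (fun i => x i) (fun i => (hN _ (hxN i)).2)
    (fun i => hNX _ (hxN i)) v hv
  rw [Finset.sum_eq_single 1] at hpi
  · have h1 : (List.ofFn (fun i : Fin dd => x ((1 : Equiv.Perm (Fin dd)) i))) = (List.range dd).map x := by
      refine List.ext_getElem (by simp) ?_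
      intro i h1 h2
      simp
    rw [h1] at hpi
    simpa using hpi
  · intro τ _ hτ
    have h0 : (List.ofFn (fun i => x (τ i))).prod = 0 := by
      by_contra hc
      refine hτ (perm_id τ ?_)
      have h2 : List.ofFn (fun i => x (τ i)) = (List.ofFn (fun i => (τ i : ℕ))).map x := by
        rw [List.map_ofFn]; rfl
      rw [h2] at hc
      refine (list_prod_chain x _ hc).imp ?_
      intro i j hij
      by_contra hne'
      refine hij ?_
      show (q i * e * q (i + 1)) * (q j * e * q (j + 1)) = 0
      calc (q i * e * q (i + 1)) * (q j * e * q (j + 1)) = (q i * e) * (q (i + 1) * q j) * (e * q (j + 1)) := by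
            simp only [mul_assoc]
        _ = 0 := by rw [hqo _ _ (fun h => hne' h.symm)]; simp
    rw [h0]; simp
  · simp

end P12

end Part12

section Part13
open scoped ComplexOrder InnerProductSpace
open Filter
section P13
variable {H : Type} [NormedAddCommGroup H] [InnerProductSpace ℂ H] [CompleteSpace H]

theorem op_pos_iff (T : H →L[ℂ] H) : (∀ x, 0 ≤ ⟪x, T x⟫_ℂ) ↔ 0 ≤ T := by
  rw [ContinuousLinearMap.nonneg_iff_isPositive, ContinuousLinearMap.isPositive_iff_complex]
  refine forall_congr' fun x => ?_
  constructor
  · intro h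
    have h2 : (starRingEnd ℂ) ⟪x, T x⟫_ℂ = ⟪x, T x⟫_ℂ := by
      rw [Complex.conj_eq_iff_im]
      exact (Complex.le_def.1 h).2.symm
    rw [inner_conj_symm] at h2
    rw [h2]
    refine ⟨?_, (Complex.le_def.1 h).1⟩
    apply Complex.ext
    · simp
    · simpa using (Complex.le_def.1 h).2
  · rintro ⟨h1, h2⟩
    rw [← inner_conj_symm, ← h1]
    simpa using h2

theorem op_pos_sa {T : H →L[ℂ] H} (h : ∀ x, 0 ≤ ⟪x, T x⟫_ℂ) : IsSelfAdjoint T :=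
  ((op_pos_iff T).1 h).isSelfAdjoint

theorem op_re_nonneg {T : H →L[ℂ] H} (h : ∀ x, 0 ≤ ⟪x, T x⟫_ℂ) (x : H) : 0 ≤ (⟪x, T x⟫_ℂ).re := (Complex.le_def.1 (h x)).1

theorem op_pos_of_re {T : H →L[ℂ] H} (hT : IsSelfAdjoint T) (h : ∀ x, 0 ≤ (⟪x, T x⟫_ℂ).re) (x : H) : 0 ≤ ⟪x, T x⟫_ℂ := by
  rw [Complex.le_def]
  refine ⟨h x, ?_⟩
  have h2 : (starRingEnd ℂ) ⟪x, T x⟫_ℂ = ⟪x, T x⟫_ℂ := by rw [inner_conj_symm, sa_inner hT]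
  rw [Complex.conj_eq_iff_im] at h2
  exact h2.symm

theorem pos_zero {T : H →L[ℂ] H} (h : ∀ x, 0 ≤ ⟪x, T x⟫_ℂ) {u : H} (hu : (⟪u, T u⟫_ℂ).re ≤ 0) : T u = 0 := by
  have hsa := op_pos_sa h
  have h0 := (op_pos_iff T).1 h
  set S := CFC.sqrt T with hS
  have hSS : S * S = T := CFC.sqrt_mul_sqrt_self T h0
  have hSsa : IsSelfAdjoint S := (CFC.sqrt_nonneg T).isSelfAdjoint
  have h1 : ⟪u, T u⟫_ℂ = ((‖S u‖ ^ 2 : ℝ) : ℂ) := by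
    rw [← hSS]
    show ⟪u, S (S u)⟫_ℂ = _
    rw [← sa_inner hSsa, inner_self_eq_norm_sq_to_K]; simp
  rw [h1, Complex.ofReal_re] at hu
  have h2 : S u = 0 := by
    have : ‖S u‖ = 0 := by nlinarith [norm_nonneg (S u)]
    exact norm_eq_zero.1 this
  rw [← hSS]
  show S (S u) = 0
  rw [h2, map_zero]

theorem sa_proj_norm {b : H →L[ℂ] H} (hb : IsSelfAdjoint b) (hbb : b * b = b) (x : H) :
    ⟪x, b x⟫_ℂ = ((‖b x‖ ^ 2 : ℝ) : ℂ) := by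
  have : b x = b (b x) := (congrArg (fun T : H →L[ℂ] H => T x) hbb).symm
  rw [this, ← sa_inner hb, ← this, inner_self_eq_norm_sq_to_K]; simp

theorem sa_proj_le {b : H →L[ℂ] H} (hb : IsSelfAdjoint b) (hbb : b * b = b) (x : H) : ‖b x‖ ≤ ‖x‖ := by
  have h1 := norm_inner_le_norm (𝕜 := ℂ) x (b x)
  rw [sa_proj_norm hb hbb, Complex.norm_real, Real.norm_of_nonneg (by positivity)] at h1
  by_contra hc
  push Not at hc
  nlinarith [norm_nonneg x]

noncomputable def gt (B : H →L[ℂ] H) (t : ℝ) : H →L[ℂ] H := cfc (fun s : ℝ => max (t - s) 0) B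

theorem spec_exists {B : H →L[ℂ] H} (hB : ∀ x, 0 ≤ ⟪x, B x⟫_ℂ) {t : ℝ} (ht : 0 < t) :
    ∃ b : H →L[ℂ] H, IsSelfAdjoint b ∧ b * b = b ∧
      (∀ T : H →L[ℂ] H, T * B = B * T → star T * B = B * star T → b * T = T * b) ∧
      (∀ x, t * ‖b x‖ ^ 2 ≤ (⟪x, B x⟫_ℂ).re) ∧
      (∀ x, ‖B (x - b x)‖ ≤ t * ‖x‖) ∧ (∀ x, b x = x ↔ gt B t x = 0) := by
  have hsa := op_pos_sa hB
  have h0 := (op_pos_iff B).1 hB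
  set G := gt B t with hG
  set F := cfc (fun s : ℝ => max (s - t) 0) B with hF
  set M := cfc (fun s : ℝ => min s t) B with hM
  have hGsa : IsSelfAdjoint G := cfc_predicate _ _
  have hFsa : IsSelfAdjoint F := cfc_predicate _ _
  have hF0 : 0 ≤ F := cfc_nonneg fun s _ => le_max_right _ _
  have hFp := (op_pos_iff F).2 hF0
  have hBsum : B = M + F := by
    rw [hM, hF, ← cfc_add B _ _ (by fun_prop) (by fun_prop)]
    conv_lhs => rw [← cfc_id ℝ B hsa]
    refine cfc_congr ?_
    intro s _
    show s = min s t + max (s - t) 0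
    rcases le_total s t with h | h
    · rw [min_eq_left h, max_eq_right (by linarith)]; ring
    · rw [min_eq_right h, max_eq_left (by linarith)]; ring
  have hBt : B = F - G + algebraMap ℝ _ t := by
    rw [hG, gt, hF, ← cfc_sub _ _ B (by fun_prop) (by fun_prop), ← cfc_const t B hsa, ← cfc_add B _ _ (by fun_prop) (by fun_prop)]
    conv_lhs => rw [← cfc_id ℝ B hsa]
    refine cfc_congr ?_
    intro s _
    show s = max (s - t) 0 - max (t - s) 0 + t
    rcases le_total s t with h | h
    · rw [max_eq_left (a := t - s) (by linarith), max_eq_right (by linarith)]; ring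
    · rw [max_eq_right (a := t - s) (by linarith), max_eq_left (by linarith)]; ring
  have hGF : G * F = 0 := by
    rw [hG, gt, hF, ← cfc_mul _ _ B (by fun_prop) (by fun_prop)]
    rw [← cfc_zero ℝ B]
    refine cfc_congr ?_
    intro s _
    show max (t - s) 0 * max (s - t) 0 = 0
    rcases le_total s t with h | h
    · rw [max_eq_right (a := s - t) (by linarith)]; ring
    · rw [max_eq_right (a := t - s) (by linarith)]; ring
  have hMn : ‖M‖ ≤ t := by
    refine norm_cfc_le ht.le fun s hs => ?_
    have hs0 : 0 ≤ s := spectrum_nonneg_of_nonneg h0 hs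
    rw [Real.norm_of_nonneg (le_min hs0 ht.le)]
    exact min_le_right _ _
  let Y : Submodule ℂ H := LinearMap.ker (G : H →ₗ[ℂ] H)
  have hY : IsClosed (Y : Set H) := isClosed_eq G.continuous continuous_const
  haveI := closed_hasProj Y hY
  have hYm : ∀ x, x ∈ Y ↔ G x = 0 := fun x => Iff.rfl
  let b := Y.starProjection
  have hbsa : IsSelfAdjoint b := isSelfAdjoint_starProjection Y
  have hbY : ∀ x, b x ∈ Y := fun x => Submodule.starProjection_apply_mem _ _
  have hbid : ∀ x, b x = x ↔ x ∈ Y := fun x => Submodule.starProjection_eq_self_iff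
  have hbb : b * b = b := by ext x; exact (hbid _).2 (hbY x)
  have hcomm : ∀ T : H →L[ℂ] H, T * B = B * T → star T * B = B * star T → b * T = T * b := by
    have hinv : ∀ T : H →L[ℂ] H, T * B = B * T → ∀ x ∈ Y, T x ∈ Y := by
      intro T hT x hx
      have hc : Commute G T := (hsa.commute_cfc (show Commute B T from hT.symm) _)
      have h1 : G (T x) = T (G x) := congrArg (fun T : H →L[ℂ] H => T x) hc.eq
      rw [hYm, h1, (hYm x).1 hx, map_zero]
    intro T h1 h2
    ext x
    exact proj_comm Y (star_inner' T) (hinv T h1) (hinv _ h2) x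
  have hbB : b * B = B * b := hcomm B rfl (by rw [hsa.star_eq])
  refine ⟨b, hbsa, hbb, hcomm, ?_, ?_, fun x => hbid x⟩
  · intro x
    have e1 : ⟪x, B x⟫_ℂ = ⟪b x, B (b x)⟫_ℂ + ⟪x - b x, B (x - b x)⟫_ℂ := by
      have h1 : B (b x) = b (B x) := (congrArg (fun T : H →L[ℂ] H => T x) hbB).symm
      have h2 : b (b (B x)) = b (B x) := congrArg (fun T : H →L[ℂ] H => T (B x)) hbb
      rw [map_sub, h1, inner_sub_left, inner_sub_right, inner_sub_right, sa_inner hbsa x (b (B x)),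
        sa_inner hbsa x (B x), h2]
      ring
    have e2 : ⟪b x, B (b x)⟫_ℂ = ⟪b x, F (b x)⟫_ℂ + ((t * ‖b x‖ ^ 2 : ℝ) : ℂ) := by
      have h3 : B (b x) = F (b x) - G (b x) + (t : ℂ) • b x := by
        conv_lhs => rw [hBt]
        rfl
      rw [h3, (hYm _).1 (hbY x), sub_zero, inner_add_right, inner_smul_right, inner_self_eq_norm_sq_to_K]
      simp
    rw [e1, e2, Complex.add_re, Complex.add_re, Complex.ofReal_re]
    have := op_re_nonneg hFp (b x)
    have := op_re_nonneg hB (x - b x)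
    linarith
  · intro x
    set u := x - b x with hu
    have hFu : F u = 0 := by
      have hbF : ∀ y, b (F y) = F y := by
        intro y
        refine (hbid _).2 ?_
        rw [hYm]
        exact congrArg (fun T : H →L[ℂ] H => T y) hGF
      have hbu : b u = 0 := by
        have h2 : b (b x) = b x := congrArg (fun T : H →L[ℂ] H => T x) hbb
        rw [hu, map_sub, h2, sub_self]
      refine inner_self_eq_zero (𝕜 := ℂ).1 ?_
      rw [sa_inner hFsa, ← hbF, ← sa_inner hbsa, hbu, inner_zero_left]
    have h1 : B u = M u := by
      conv_lhs => rw [hBsum]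
      show M u + F u = M u
      rw [hFu, add_zero]
    rw [h1]
    have hux : ‖u‖ ≤ ‖x‖ := by
      have hb1 : IsSelfAdjoint (1 - b) := (IsSelfAdjoint.one _).sub hbsa
      have hb2 : (1 - b) * (1 - b) = 1 - b := by
        simp only [mul_sub, sub_mul, hbb, one_mul, mul_one, sub_self, sub_zero]
      exact sa_proj_le hb1 hb2 x
    calc ‖M u‖ ≤ ‖M‖ * ‖u‖ := M.le_opNorm u
      _ ≤ t * ‖x‖ := by gcongr

theorem gt_mono {B : H →L[ℂ] H} {t t' : ℝ} (h : t ≤ t') {x : H} (hx : gt B t' x = 0) : gt B t x = 0 := by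
  have hp : ∀ x, 0 ≤ ⟪x, gt B t x⟫_ℂ := (op_pos_iff _).2 (cfc_nonneg fun s _ => le_max_right _ _)
  have hle : gt B t ≤ gt B t' := cfc_mono (fun s _ => max_le_max_right 0 (by linarith)) (by fun_prop) (by fun_prop)
  have hd := op_re_nonneg ((op_pos_iff _).2 (sub_nonneg.2 hle)) x
  refine pos_zero hp ?_
  have h1 : ⟪x, (gt B t' - gt B t) x⟫_ℂ = - ⟪x, gt B t x⟫_ℂ := by
    show ⟪x, gt B t' x - gt B t x⟫_ℂ = _
    rw [hx, zero_sub, inner_neg_right]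
  rw [h1, Complex.neg_re] at hd
  linarith

end P13

end Part13

section Part14
open scoped ComplexOrder InnerProductSpace
open Filter
section P14
variable {A : Type} [NonUnitalCStarAlgebra A]
variable {H : Type} [NormedAddCommGroup H] [InnerProductSpace ℂ H] [CompleteSpace H]

theorem ker_perp {B : H →L[ℂ] H} (hB : IsSelfAdjoint B) {v : H} (hv : ∀ u, B u = 0 → ⟪u, v⟫_ℂ = 0) :
    v ∈ closure (Set.range B) := by
  let Y := (LinearMap.range (B : H →ₗ[ℂ] H)).topologicalClosure
  have hYc : IsClosed (Y : Set H) := Submodule.isClosed_topologicalClosure _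
  haveI := closed_hasProj Y hYc
  have hmem : ∀ x, B x ∈ Y := fun x => Submodule.le_topologicalClosure _ ⟨x, rfl⟩
  set u := v - Y.starProjection v with hu
  have huo : u ∈ Yᗮ := Submodule.sub_starProjection_mem_orthogonal v
  have hBu : B u = 0 := by
    refine inner_self_eq_zero (𝕜 := ℂ).1 ?_
    rw [sa_inner hB]
    exact Submodule.inner_left_of_mem_orthogonal (K := Y) (hmem _) huo
  have h1 := hv u hBu
  have h2 : ⟪u, Y.starProjection v⟫_ℂ = 0 :=
    Submodule.inner_left_of_mem_orthogonal (K := Y) (Submodule.starProjection_apply_mem _ _) huo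
  have h3 : u = 0 := by
    refine inner_self_eq_zero (𝕜 := ℂ).1 ?_
    conv_lhs => rw [hu, inner_sub_right]
    rw [← hu, h1, h2, sub_zero]
  have h4 : v = Y.starProjection v := sub_eq_zero.1 h3
  have h5 : v ∈ Y := by rw [h4]; exact Submodule.starProjection_apply_mem _ _
  exact h5

theorem key_K {π : A →⋆ₙₐ[ℂ] (H →L[ℂ] H)} {ξ : H} (hcyc : DenseRange (fun a => π a ξ)) (hA : AllFD A)
    {B K : H →L[ℂ] H} (hB : ∀ x, 0 ≤ ⟪x, B x⟫_ℂ) (hK : ∀ x, 0 ≤ ⟪x, K x⟫_ℂ)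
    (hBc : ∀ a, B * π a = π a * B) (hKc : ∀ a, K * π a = π a * K) (hKB : ∀ u, B u = 0 → K u = 0)
    (hsing : ∀ r : H →L[ℂ] H, IsSelfAdjoint r → r * r = r → (∀ a, r * π a = π a * r) → ∀ c : ℝ, 0 < c →
      (∀ x, c * ‖r x‖ ^ 2 ≤ (⟪x, K x⟫_ℂ).re) → (∀ x, c * ‖r x‖ ^ 2 ≤ (⟪x, B x⟫_ℂ).re) → r = 0) : K = 0 := by
  have hBsa := op_pos_sa hB
  have hKsa := op_pos_sa hK
  by_contra hK0
  have hπs : ∀ T : H →L[ℂ] H, (∀ a, T * π a = π a * T) → ∀ a, π a * T = T * π a ∧ star (π a) * T = T * star (π a) := by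
    intro T hT a
    refine ⟨(hT a).symm, ?_⟩
    rw [← map_star]
    exact (hT _).symm
  -- e
  have hex : ∃ ε : ℝ, 0 < ε ∧ ∃ e : H →L[ℂ] H, e ≠ 0 ∧ IsSelfAdjoint e ∧ e * e = e ∧
      (∀ a, e * π a = π a * e) ∧ (∀ x, ε * ‖e x‖ ^ 2 ≤ (⟪x, K x⟫_ℂ).re) := by
    by_contra hcon
    push Not at hcon
    refine hK0 ?_
    ext x
    have hb : ∀ ε : ℝ, 0 < ε → ‖K x‖ ≤ ε * ‖x‖ := by
      intro ε hε
      obtain ⟨e, he, hee, hec, h1, h2, -⟩ := spec_exists hK hε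
      have he0 : e = 0 := by
        by_contra h0
        obtain ⟨y, hy⟩ := hcon ε hε e h0 he hee (fun a => hec _ (hπs K hKc a).1 (hπs K hKc a).2)
        exact absurd (h1 y) (not_le.2 hy)
      have := h2 x
      simpa [he0] using this
    have hx : ‖K x‖ ≤ 0 := by
      refine le_of_forall_pos_le_add fun δ hδ => ?_
      have h1 := hb (δ / (‖x‖ + 1)) (by positivity)
      have h2 : δ / (‖x‖ + 1) * ‖x‖ ≤ δ := by
        rw [div_mul_eq_mul_div, div_le_iff₀ (by positivity)]
        nlinarith [norm_nonneg x]
      linarith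
    exact norm_le_zero_iff.1 hx
  obtain ⟨ε, hε, e, he0, he, hee, hec, heK⟩ := hex
  have hb := fun m : ℕ => spec_exists hB (t := 1 / ((m : ℝ) + 1)) (by positivity)
  choose b hbsa hbb hbc hb1 hb2 hb3 using hb
  have hbN : ∀ m a, b m * π a = π a * b m := fun m a => hbc m _ (hπs B hBc a).1 (hπs B hBc a).2
  have hbid : ∀ m x, b m (b m x) = b m x := fun m x => congrArg (fun T : H →L[ℂ] H => T x) (hbb m)
  have heid : ∀ x, e (e x) = e x := fun x => congrArg (fun T : H →L[ℂ] H => T x) hee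
  refine he0 (theorem_F hcyc hA he hee hec b hbN hbsa ?_ ?_ ?_)
  · intro m k hmk
    have h1 : b k * b m = b m := by
      ext x
      show b k (b m x) = b m x
      rw [hb3]
      refine gt_mono ?_ ((hb3 m _).1 (hbid m x))
      have : (m : ℝ) ≤ k := by exact_mod_cast hmk
      gcongr
    have := congrArg star h1
    rwa [star_mul, (hbsa m).star_eq, (hbsa k).star_eq] at this
  · intro v hv
    have hvc : v ∈ closure (Set.range B) := by
      refine ker_perp hBsa fun u hu => ?_
      have hKu := hKB u hu
      have h1 := heK u
      rw [hKu, inner_zero_right, Complex.zero_re] at h1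
      have h2 : e u = 0 := by
        have h3 : ‖e u‖ ^ 2 ≤ 0 := by
          by_contra hc
          push Not at hc
          nlinarith
        have : ‖e u‖ = 0 := by nlinarith [norm_nonneg (e u)]
        exact norm_eq_zero.1 this
      rw [← hv, ← sa_inner he, h2, inner_zero_left]
    rw [Metric.tendsto_atTop]
    intro δ hδ
    obtain ⟨_, ⟨w, rfl⟩, hw⟩ := Metric.mem_closure_iff.1 hvc (δ / 3) (by positivity)
    rw [dist_eq_norm] at hw
    obtain ⟨M, hM⟩ := exists_nat_gt (3 * ‖w‖ / δ)
    refine ⟨M, fun m hm => ?_⟩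
    have hbB : b m (B w) = B (b m w) := congrArg (fun T : H →L[ℂ] H => T w) (hbc m B rfl (by rw [hBsa.star_eq]))
    have h1 : ‖B w - b m (B w)‖ < δ / 3 := by
      rw [hbB, ← map_sub]
      refine (hb2 m w).trans_lt ?_
      have hmM : (M : ℝ) ≤ m := by exact_mod_cast hm
      rw [div_lt_iff₀ hδ] at hM
      rw [one_div, inv_mul_lt_iff₀ (by positivity)]
      nlinarith
    have h2 : ‖b m (v - B w)‖ < δ / 3 := (sa_proj_le (hbsa m) (hbb m) _).trans_lt hw
    have h3 : b m v - v = b m (v - B w) - (v - B w) - (B w - b m (B w)) := by rw [map_sub]; abel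
    rw [dist_eq_norm, h3]
    calc _ ≤ ‖b m (v - B w)‖ + ‖v - B w‖ + ‖B w - b m (B w)‖ := (norm_sub_le _ _).trans (by gcongr; exact norm_sub_le _ _)
      _ < δ := by linarith
  · intro m v hev hbv
    let S : Submodule ℂ H :=
      { carrier := {v | e v = v ∧ b m v = v}
        zero_mem' := ⟨map_zero _, map_zero _⟩
        add_mem' := fun {x y} hx hy => ⟨by rw [map_add, hx.1, hy.1], by rw [map_add, hx.2, hy.2]⟩
        smul_mem' := fun c x hx => ⟨by rw [map_smul, hx.1], by rw [map_smul, hx.2]⟩ }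
    have hS : IsClosed (S : Set H) :=
      (isClosed_eq e.continuous continuous_id).inter (isClosed_eq (b m).continuous continuous_id)
    haveI := closed_hasProj S hS
    have hinv : ∀ a, ∀ x ∈ S, π a x ∈ S := by
      intro a x hx
      refine ⟨?_, ?_⟩
      · have h1 : e (π a x) = π a (e x) := congrArg (fun T : H →L[ℂ] H => T x) (hec a)
        rw [h1, hx.1]
      · have h1 : b m (π a x) = π a (b m x) := congrArg (fun T : H →L[ℂ] H => T x) (hbN m a)
        rw [h1, hx.2]
    let r := S.starProjection
    have hrsa : IsSelfAdjoint r := isSelfAdjoint_starProjection S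
    have hrS : ∀ x, r x ∈ S := fun x => Submodule.starProjection_apply_mem _ _
    have hrid : ∀ x ∈ S, r x = x := fun x hx => Submodule.starProjection_eq_self_iff.2 hx
    have hrr : r * r = r := by ext x; exact hrid _ (hrS x)
    have hrc : ∀ a, r * π a = π a * r := by
      intro a; ext x
      exact proj_comm S (rep_inner π a) (hinv a) (hinv (star a)) x
    have hsub : ∀ q : H →L[ℂ] H, IsSelfAdjoint q → (∀ x ∈ S, q x = x) → ∀ x, ‖r x‖ ≤ ‖q x‖ := by
      intro q hq hqS x
      have h1 : q * r = r := by ext y; exact hqS _ (hrS y)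
      have h2 := congrArg star h1
      rw [star_mul, hq.star_eq, hrsa.star_eq] at h2
      have h3 : r (q x) = r x := congrArg (fun T : H →L[ℂ] H => T x) h2
      rw [← h3]
      exact sa_proj_le hrsa hrr _
    have hr0 := hsing r hrsa hrr hrc (min ε (1 / ((m : ℝ) + 1))) (lt_min hε (by positivity)) (by
      intro x
      refine le_trans ?_ (heK x)
      have := hsub e he (fun x hx => hx.1) x
      gcongr
      exact min_le_left _ _) (by
      intro x
      refine le_trans ?_ (hb1 m x)
      have := hsub (b m) (hbsa m) (fun x hx => hx.2) x
      gcongr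
      exact min_le_right _ _)
    have h1 := hrid v ⟨hev, hbv⟩
    rw [← h1, hr0]; rfl

theorem op_ext {π : A →⋆ₙₐ[ℂ] (H →L[ℂ] H)} {ξ : H} (hcyc : DenseRange (fun a => π a ξ)) {T : H →L[ℂ] H}
    (hT : ∀ a, T * π a = π a * T) (h : ∀ a, ⟪ξ, T (π a ξ)⟫_ℂ = 0) : T = 0 := by
  have h1 : ∀ a b, ⟪π b ξ, T (π a ξ)⟫_ℂ = 0 := by
    intro a b
    have h2 : ∀ a x, T (π a x) = π a (T x) := fun a x => congrArg (fun T : H →L[ℂ] H => T x) (hT a)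
    rw [rep_inner, ← h2, ← rep_mul, h]
  have h3 : ∀ a, T (π a ξ) = 0 := by
    intro a
    refine hcyc.eq_of_inner_right ℂ ?_
    intro b
    rw [inner_zero_right, h1]
  refine ContinuousLinearMap.coeFn_injective ?_
  refine hcyc.equalizer T.continuous (0 : H →L[ℂ] H).continuous ?_
  funext a
  exact h3 a

theorem orb_form {π : A →⋆ₙₐ[ℂ] (H →L[ℂ] H)} {ξ : H} {T : H →L[ℂ] H}
    (hT : ∀ a, T * π a = π a * T) (a : A) : ⟪ξ, T (π (star a * a) ξ)⟫_ℂ = ⟪π a ξ, T (π a ξ)⟫_ℂ := by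
  have h2 : ∀ a x, T (π a x) = π a (T x) := fun a x => congrArg (fun T : H →L[ℂ] H => T x) (hT a)
  rw [rep_mul, h2, ← star_star a, ← rep_inner, star_star]

theorem op_nonneg {π : A →⋆ₙₐ[ℂ] (H →L[ℂ] H)} {ξ : H} (hcyc : DenseRange (fun a => π a ξ)) {T : H →L[ℂ] H}
    (hT : ∀ a, T * π a = π a * T) (h : ∀ a, 0 ≤ (⟪ξ, T (π (star a * a) ξ)⟫_ℂ).re) (x : H) : 0 ≤ (⟪x, T x⟫_ℂ).re := by
  have hcl : IsClosed {x : H | 0 ≤ (⟪x, T x⟫_ℂ).re} :=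
    isClosed_le continuous_const (Complex.continuous_re.comp (continuous_id.inner T.continuous))
  refine hcl.closure_subset_iff.2 ?_ (hcyc.closure_range ▸ Set.mem_univ x)
  rintro _ ⟨a, rfl⟩
  show 0 ≤ (⟪π a ξ, T (π a ξ)⟫_ℂ).re
  rw [← orb_form hT]
  exact h a

end P14

end Part14

section Part15
open scoped ComplexOrder InnerProductSpace
open Filter
section P15
variable {A : Type} [NonUnitalCStarAlgebra A]
variable {H : Type} [NormedAddCommGroup H] [InnerProductSpace ℂ H] [CompleteSpace H]

theorem par_ineq {T : H →L[ℂ] H} (hT : ∀ x, 0 ≤ (⟪x, T x⟫_ℂ).re) (u y : H) :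
    (⟪u, T u⟫_ℂ).re ≤ 2 * (⟪y, T y⟫_ℂ).re + 2 * (⟪u - y, T (u - y)⟫_ℂ).re := by
  have h := hT (2 • y - u)
  have e : (⟪2 • y - u, T (2 • y - u)⟫_ℂ) + ⟪u, T u⟫_ℂ = 2 * ⟪y, T y⟫_ℂ + 2 * ⟪u - y, T (u - y)⟫_ℂ := by
    simp only [two_smul, map_sub, map_add, inner_sub_left, inner_sub_right, inner_add_left, inner_add_right]
    ring
  have e2 := congrArg Complex.re e
  simp at e2
  simp at h
  simp
  linarith

theorem leb_op {π : A →⋆ₙₐ[ℂ] (H →L[ℂ] H)} {ξ : H} (hcyc : DenseRange (fun a => π a ξ)) (hA : AllFD A)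
    {f g : A →ₗ[ℂ] ℂ} (hf : IsPosFnC f) (hg : IsPosFnC g) (hw : ∀ a, (f + g) a = ⟪ξ, π a ξ⟫_ℂ)
    {B Q : H →L[ℂ] H} (hB : ∀ x, 0 ≤ ⟪x, B x⟫_ℂ) (hBc : ∀ a, B * π a = π a * B)
    (hgB : ∀ a, g a = ⟪ξ, B (π a ξ)⟫_ℂ) (hQ : IsSelfAdjoint Q) (hQQ : Q * Q = Q)
    (hBQ : B * Q = 0) (hQid : ∀ u, B u = 0 → Q u = u) (hQc : ∀ a, Q * π a = π a * Q)
    {fr fs : A →ₗ[ℂ] ℂ} (h : IsLebDecompC f g fr fs) : ∀ a, fr a = ⟪ξ, (1 - Q - B) (π a ξ)⟫_ℂ := by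
  obtain ⟨hfr, hfs, hsum, ⟨fn, α, hfn, hα, hmono, hfg, hlim⟩, hsing⟩ := h
  have hBsa := op_pos_sa hB
  have hwre : ∀ a, ‖π a ξ‖ ^ 2 = (fr (star a * a)).re + (fs (star a * a)).re + (g (star a * a)).re := by
    intro a
    have h1 := hw (star a * a)
    rw [rep_inner_star, hsum] at h1
    have h2 := congrArg Complex.re h1
    rw [Complex.ofReal_re, LinearMap.add_apply, LinearMap.add_apply, Complex.add_re, Complex.add_re] at h2
    exact h2.symm
  have hfnr : ∀ n a, (fn n (star a * a)).re ≤ (fr (star a * a)).re := by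
    intro n a
    have hm : Monotone fun n => (fn n (star a * a)).re := monotone_nat_of_le_succ fun n => fnle_re (hmono n) a
    exact hm.ge_of_tendsto ((Complex.continuous_re.tendsto _).comp (hlim (star a * a))) n
  have hfs' := fun a => (pos_re hfs a).2
  have hfr' := fun a => (pos_re hfr a).2
  have hg' := fun a => (pos_re hg a).2
  obtain ⟨C, hC, hCc', hCf, hC1⟩ := radon hcyc hfr (c := 1) zero_le_one (fun a => by
    rw [one_mul, hwre]; linarith [hfs' a, hg' a])
  have hCc : ∀ a, C * π a = π a * C := fun a => by ext x; exact hCc' a x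
  have hCsa := op_pos_sa hC
  have hTn : ∀ n, ∃ T : H →L[ℂ] H, (∀ x, 0 ≤ ⟪x, T x⟫_ℂ) ∧ (∀ a, T * π a = π a * T) ∧
      (∀ a, fn n a = ⟪ξ, T (π a ξ)⟫_ℂ) := by
    intro n
    obtain ⟨T, h1, h2, h3, -⟩ := radon hcyc (hfn n) (c := 1) zero_le_one (fun a => by
      rw [one_mul, hwre]; linarith [hfs' a, hg' a, hfnr n a])
    exact ⟨T, h1, fun a => by ext x; exact h2 a x, h3⟩
  choose T hT hTc hTf using hTn
  -- C vanishes on ker B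
  have hCB : ∀ u, B u = 0 → C u = 0 := by
    intro u hu
    refine pos_zero hC ?_
    have hTu : ∀ n, (⟪u, T n u⟫_ℂ).re ≤ 0 := by
      intro n
      have h1 := op_nonneg (T := (α n : ℂ) • B - T n) hcyc (fun a => by
        rw [sub_mul, mul_sub, hTc, smul_mul_assoc, mul_smul_comm, hBc]) (fun a => by
        have h2 := fnle_re (hfg n) a
        rw [hTf, LinearMap.smul_apply, hgB, smul_eq_mul] at h2
        show 0 ≤ (⟪ξ, (α n : ℂ) • B (π (star a * a) ξ) - T n (π (star a * a) ξ)⟫_ℂ).re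
        rw [inner_sub_right, inner_smul_right, Complex.sub_re]
        linarith) u
      have h3 : ((α n : ℂ) • B - T n) u = - T n u := by
        show (α n : ℂ) • B u - T n u = _
        rw [hu, smul_zero, zero_sub]
      rw [h3, inner_neg_right, Complex.neg_re] at h1
      linarith
    have hCT : ∀ n x, 0 ≤ (⟪x, (C - T n) x⟫_ℂ).re := by
      intro n
      refine op_nonneg hcyc (fun a => by rw [sub_mul, mul_sub, hTc, hCc]) fun a => ?_
      show 0 ≤ (⟪ξ, C (π (star a * a) ξ) - T n (π (star a * a) ξ)⟫_ℂ).re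
      rw [inner_sub_right, ← hCf, ← hTf, Complex.sub_re]
      linarith [hfnr n a]
    have hsub : ∀ n x, (⟪x, (C - T n) x⟫_ℂ).re = (⟪x, C x⟫_ℂ).re - (⟪x, T n x⟫_ℂ).re := by
      intro n x
      show (⟪x, C x - T n x⟫_ℂ).re = _
      rw [inner_sub_right, Complex.sub_re]
    have hb : ∀ a, (⟪u, C u⟫_ℂ).re ≤ 2 * ‖u - π a ξ‖ ^ 2 := by
      intro a
      have h1 : ∀ n, (⟪u, C u⟫_ℂ).re ≤ 2 * ((fr (star a * a)).re - (fn n (star a * a)).re) + 2 * ‖u - π a ξ‖ ^ 2 := by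
        intro n
        have h2 := par_ineq (hCT n) u (π a ξ)
        rw [hsub, hsub, hsub, ← orb_form hCc, ← orb_form (hTc n), ← hCf, ← hTf] at h2
        have h3 := hC1 (u - π a ξ)
        have h4 := op_re_nonneg (hT n) (u - π a ξ)
        have h5 := hTu n
        linarith
      have hl : Tendsto (fun n => 2 * ((fr (star a * a)).re - (fn n (star a * a)).re) + 2 * ‖u - π a ξ‖ ^ 2) atTop
          (nhds (2 * ((fr (star a * a)).re - (fr (star a * a)).re) + 2 * ‖u - π a ξ‖ ^ 2)) :=
        ((tendsto_const_nhds.sub ((Complex.continuous_re.tendsto _).comp (hlim (star a * a)))).const_mul 2).add_const _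
      have := ge_of_tendsto' hl h1
      simpa using this
    have hcl : IsClosed {y : H | (⟪u, C u⟫_ℂ).re ≤ 2 * ‖u - y‖ ^ 2} :=
      isClosed_le continuous_const (by fun_prop)
    have := hcl.closure_subset_iff.2 (by rintro _ ⟨a, rfl⟩; exact hb a) (hcyc.closure_range ▸ Set.mem_univ u)
    have h2 : (⟪u, C u⟫_ℂ).re ≤ 2 * ‖u - u‖ ^ 2 := this
    simpa using h2
  have hBQx : ∀ x, B (Q x) = 0 := fun x => congrArg (fun T : H →L[ℂ] H => T x) hBQ
  have hCQx : ∀ x, C (Q x) = 0 := fun x => hCB _ (hBQx x)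
  have hQQx : ∀ x, Q (Q x) = Q x := fun x => congrArg (fun T : H →L[ℂ] H => T x) hQQ
  have hQB : ∀ x, Q (B x) = 0 := by
    have := congrArg star hBQ
    rw [star_mul, hQ.star_eq, hBsa.star_eq, star_zero] at this
    exact fun x => congrArg (fun T : H →L[ℂ] H => T x) this
  have hQC : ∀ x, Q (C x) = 0 := by
    have h1 : C * Q = 0 := by ext x; exact hCQx x
    have := congrArg star h1
    rw [star_mul, hQ.star_eq, hCsa.star_eq, star_zero] at this
    exact fun x => congrArg (fun T : H →L[ℂ] H => T x) this
  let S : H →L[ℂ] H := 1 - B - C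
  have hSa : ∀ x, S x = x - B x - C x := fun x => rfl
  have hSc : ∀ a, S * π a = π a * S := fun a => by
    simp only [S, sub_mul, mul_sub, hBc, hCc, one_mul, mul_one]
  have hSf : ∀ a, fs a = ⟪ξ, S (π a ξ)⟫_ℂ := by
    intro a
    rw [hSa, inner_sub_right, inner_sub_right, ← hw, ← hgB, ← hCf, hsum]
    simp
  have hSn : ∀ x, 0 ≤ (⟪x, S x⟫_ℂ).re := op_nonneg hcyc hSc fun a => by rw [← hSf]; exact hfs' a
  let K : H →L[ℂ] H := 1 - Q - B - C
  have hKa : ∀ x, K x = x - Q x - B x - C x := fun x => rfl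
  have hKsa : IsSelfAdjoint K := (((IsSelfAdjoint.one _).sub hQ).sub hBsa).sub hCsa
  have hKc : ∀ a, K * π a = π a * K := fun a => by
    simp only [K, sub_mul, mul_sub, hBc, hCc, hQc, one_mul, mul_one]
  have hKn : ∀ x, 0 ≤ ⟪x, K x⟫_ℂ := by
    refine op_pos_of_re hKsa fun x => ?_
    have h1 : K x = S (x - Q x) := by
      rw [hKa, hSa, map_sub, map_sub, hBQx, hCQx]; abel
    have h2 : Q (K x) = 0 := by
      rw [hKa, map_sub, map_sub, map_sub, hQQx, hQB, hQC]; simp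
    have h3 : ⟪x, K x⟫_ℂ = ⟪x - Q x, S (x - Q x)⟫_ℂ := by
      rw [← h1, inner_sub_left, sa_inner hQ, h2, inner_zero_right, sub_zero]
    rw [h3]
    exact hSn _
  have hK0 : K = 0 := by
    refine key_K hcyc hA hB hKn hBc hKc ?_ ?_
    · intro u hu
      rw [hKa, hQid u hu, hu, hCB u hu]; simp
    · intro r hr hrr hrc c hc h1 h2
      let p : A →ₗ[ℂ] ℂ := (c : ℂ) • (
        { toFun := fun a => ⟪ξ, r (π a ξ)⟫_ℂ
          map_add' := fun a b => by simp [inner_add_right]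
          map_smul' := fun t a => by simp [inner_smul_right] } : A →ₗ[ℂ] ℂ)
      have hpa : ∀ a, p a = (c : ℂ) * ⟪ξ, r (π a ξ)⟫_ℂ := fun a => rfl
      have hpr : ∀ a, p (star a * a) = ((c * ‖r (π a ξ)‖ ^ 2 : ℝ) : ℂ) := by
        intro a
        rw [hpa, orb_form hrc, sa_proj_norm hr hrr]; push_cast; ring
      have hpp : IsPosFnC p := pos_of_real hpr fun a => by positivity
      have hp0 := hsing p hpp (fnle_of_re hpp hfs fun a => by
        rw [hpr, Complex.ofReal_re, hSf, orb_form hSc]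
        refine (h1 _).trans ?_
        have h5 : S (π a ξ) = K (π a ξ) + Q (π a ξ) := by rw [hSa, hKa]; abel
        rw [h5, inner_add_right, Complex.add_re, sa_proj_norm hQ hQQ, Complex.ofReal_re]
        have : 0 ≤ ‖Q (π a ξ)‖ ^ 2 := by positivity
        linarith) (fnle_of_re hpp hg fun a => by
        rw [hpr, Complex.ofReal_re, hgB, orb_form hBc]
        exact h2 _)
      refine op_ext hcyc hrc fun a => ?_
      have h6 := hpa a
      rw [hp0, LinearMap.zero_apply] at h6
      rcases mul_eq_zero.1 h6.symm with h7 | h7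
      · exact absurd (Complex.ofReal_eq_zero.1 h7) hc.ne'
      · exact h7
  have hCeq : C = 1 - Q - B := (sub_eq_zero.1 (show 1 - Q - B - C = 0 from hK0)).symm
  intro a
  rw [hCf, hCeq]

theorem direction_two (hA : AllFD A) : LebDecompUniqueC A := by
  intro f g hf hg fr fs fr' fs' h1 h2
  have hw : IsPosFnC (f + g) := fun a => by
    rw [LinearMap.add_apply]; exact add_nonneg (hf a) (hg a)
  obtain ⟨H, _, _, _, π, ξ, hwa, hcyc, -⟩ := gns_exists hw
  obtain ⟨B, hB, hBc', hgB, -⟩ := radon hcyc hg (c := 1) zero_le_one (fun a => by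
    have h3 := congrArg Complex.re (hwa (star a * a))
    rw [rep_inner_star, Complex.ofReal_re, LinearMap.add_apply, Complex.add_re] at h3
    have := (pos_re hf a).2
    linarith)
  have hBc : ∀ a, B * π a = π a * B := fun a => by ext x; exact hBc' a x
  let Y : Submodule ℂ H := LinearMap.ker (B : H →ₗ[ℂ] H)
  have hY : IsClosed (Y : Set H) := isClosed_eq B.continuous continuous_const
  haveI := closed_hasProj Y hY
  have hYm : ∀ x, x ∈ Y ↔ B x = 0 := fun x => Iff.rfl
  have hQY : ∀ x, Y.starProjection x ∈ Y := fun x => Submodule.starProjection_apply_mem _ _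
  have hinv : ∀ a, ∀ x ∈ Y, π a x ∈ Y := by
    intro a x hx
    rw [hYm, hBc', (hYm x).1 hx, map_zero]
  have key : ∀ {fr fs}, IsLebDecompC f g fr fs → ∀ a, fr a = ⟪ξ, (1 - Y.starProjection - B) (π a ξ)⟫_ℂ := fun {fr fs} h =>
    leb_op hcyc hA hf hg hwa hB hBc hgB (isSelfAdjoint_starProjection Y)
      (by ext x; exact Submodule.starProjection_eq_self_iff.2 (hQY x)) (by ext x; exact hQY x)
      (fun u hu => Submodule.starProjection_eq_self_iff.2 hu)
      (fun a => by ext x; exact proj_comm Y (rep_inner π a) (hinv a) (hinv (star a)) x) h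
  have hfr : fr = fr' := by
    ext a
    rw [key h1, key h2]
  refine ⟨hfr, ?_⟩
  have h3 := h1.2.2.1
  have h4 := h2.2.2.1
  rw [← hfr] at h4
  exact add_left_cancel (h3.symm.trans h4)

end P15

end Part15

/-- **Theorem 2.14**: the Lebesgue decomposition of positive functionals over a C⋆-algebra
`A` is unique if and only if every irreducible representation of `A` is finite
dimensional. -/
theorem cstar_lebesgue_unique_iff_irred_finiteDimensional
    (A : Type) [NonUnitalCStarAlgebra A] :
    LebDecompUniqueC A ↔
      ∀ (H : Type) [NormedAddCommGroup H] [InnerProductSpace ℂ H] [CompleteSpace H]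
        (π : A →⋆ₙₐ[ℂ] (H →L[ℂ] H)), IsIrredRepC π → FiniteDimensional ℂ H := by
  exact ⟨fun hA H _ _ _ π hπ => direction_one hA hπ, fun h => direction_two (fun H _ _ _ π hπ => h H π hπ)⟩
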